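/- Let $N\ge 2$, let $\Omega\subset\mathbb{R}^N$ be a bounded domain (nonempty, open, connected) with smooth boundary, let $1<p<\infty$ and $1\le q<p_*$, where $p_*=p(N-1)/(N-p)$ if $p<N$ and $p_*=\infty$ if $p\ge N$. Let $\mathcal H^{N-1}$ be the $(N-1)$-dimensional Hausdorff measure. For an $\mathcal H^{N-1}$-measurable set $\Gamma\subset\partial\Omega$ let $\mathcal X_\Gamma$ be the set of all $u\in W^{1,p}(\Omega)\setminus W^{1,p}_0(\Omega)$ whose trace on $\partial\Omega$ vanishes $\mathcal H^{N-1}$-a.e. on $\Gamma$, and let $$S(\Gamma):=\inf_{u\in\mathcal X_\Gamma}\frac{\int_\Omega|\nabla u|^p+|u|^p\,dx}{\left(\int_{\partial\Omega}|u|^q\,d\mathcal H^{N-1}\right)^{p/q}}\in[0,\infty]\qquad(\inf\emptyset:=+\infty),$$ where the boundary integral is that of the trace of $u$. For $0<\alpha<1$ let $$\mathcal S(\alpha):=\inf\{S(\Gamma):\Gamma\subset\partial\Omega\ \mathcal H^{N-1}\text{-measurable},\ \mathcal H^{N-1}(\Gamma)=\alpha\,\mathcal H^{N-1}(\partial\Omega)\}.$$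 Assume that $\Omega$ satisfies the interior ball condition: for every $x\in\partial\Omega$ there is an open ball $B\subset\Omega$ with $x\in\partial B$. Then $\mathcal S$ is strictly increasing on $(0,1)$: if $0<\alpha<\beta<1$, then $\mathcal S(\alpha)<\mathcal S(\beta)$. -/

import Mathlib

open MeasureTheory Set Filter Metric Bornology
open scoped ENNReal Topology RealInnerProductSpace ContDiff

noncomputable section

/-- The surface measure `ℋ^{N-1}` on `∂Ω` (normalized as usual, so that `ℋ^{N-1}` is
Lebesgue measure on `ℝ^{N-1}`). -/
def bdryMeasure {N : ℕ} (Ω : Set (EuclideanSpace ℝ (Fin N))) :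
    Measure (EuclideanSpace ℝ (Fin N)) :=
  (μHE[N - 1]).restrict (frontier Ω)

/-- `g` is the weak gradient of `u` in `Ω`. -/
def IsWeakGradient {N : ℕ} (Ω : Set (EuclideanSpace ℝ (Fin N)))
    (u : EuclideanSpace ℝ (Fin N) → ℝ)
    (g : EuclideanSpace ℝ (Fin N) → EuclideanSpace ℝ (Fin N)) : Prop :=
  ∀ φ : EuclideanSpace ℝ (Fin N) → ℝ, ContDiff ℝ ∞ φ → HasCompactSupport φ → tsupport φ ⊆ Ω →
    ∀ v : EuclideanSpace ℝ (Fin N),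
      ∫ x in Ω, u x * fderiv ℝ φ x v = - ∫ x in Ω, φ x * ⟪g x, v⟫

/-- `u ∈ W^{1,p}(Ω)`, with weak gradient `g`. -/
structure MemW1p {N : ℕ} (Ω : Set (EuclideanSpace ℝ (Fin N))) (p : ℝ)
    (u : EuclideanSpace ℝ (Fin N) → ℝ)
    (g : EuclideanSpace ℝ (Fin N) → EuclideanSpace ℝ (Fin N)) : Prop where
  memLp : MemLp u (ENNReal.ofReal p) (volume.restrict Ω)
  memLp_grad : MemLp g (ENNReal.ofReal p) (volume.restrict Ω)
  isWeakGradient : IsWeakGradient Ω u g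

/-- The smooth functions `φ n` converge in `W^{1,p}(Ω)` to `u`, where `g` is the weak gradient
of `u`. -/
def TendstoW1p {N : ℕ} (Ω : Set (EuclideanSpace ℝ (Fin N))) (p : ℝ)
    (φ : ℕ → EuclideanSpace ℝ (Fin N) → ℝ) (u : EuclideanSpace ℝ (Fin N) → ℝ)
    (g : EuclideanSpace ℝ (Fin N) → EuclideanSpace ℝ (Fin N)) : Prop :=
  Tendsto (fun n => eLpNorm (fun x => φ n x - u x) (ENNReal.ofReal p) (volume.restrict Ω))
      atTop (𝓝 0) ∧
    Tendsto (fun n => eLpNorm (fun x => gradient (φ n) x - g x) (ENNReal.ofReal p)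
      (volume.restrict Ω)) atTop (𝓝 0)

/-- `u ∈ W^{1,p}_0(Ω)`, with weak gradient `g`: the closure of `C_c^∞(Ω)` in `W^{1,p}(Ω)`. -/
def MemW1p0 {N : ℕ} (Ω : Set (EuclideanSpace ℝ (Fin N))) (p : ℝ)
    (u : EuclideanSpace ℝ (Fin N) → ℝ)
    (g : EuclideanSpace ℝ (Fin N) → EuclideanSpace ℝ (Fin N)) : Prop :=
  MemW1p Ω p u g ∧ ∃ φ : ℕ → EuclideanSpace ℝ (Fin N) → ℝ,
    (∀ n, ContDiff ℝ ∞ (φ n) ∧ HasCompactSupport (φ n) ∧ tsupport (φ n) ⊆ Ω) ∧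
    TendstoW1p Ω p φ u g

/-- `τ` is the trace on `∂Ω` of `u ∈ W^{1,p}(Ω)`: the `L^p(∂Ω)`-limit of the restrictions to
`∂Ω` of functions smooth up to the boundary that converge to `u` in `W^{1,p}(Ω)`. -/
def IsTrace {N : ℕ} (Ω : Set (EuclideanSpace ℝ (Fin N))) (p : ℝ)
    (u : EuclideanSpace ℝ (Fin N) → ℝ)
    (g : EuclideanSpace ℝ (Fin N) → EuclideanSpace ℝ (Fin N))
    (τ : EuclideanSpace ℝ (Fin N) → ℝ) : Prop :=
  MemLp τ (ENNReal.ofReal p) (bdryMeasure Ω) ∧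
  ∃ φ : ℕ → EuclideanSpace ℝ (Fin N) → ℝ, (∀ n, ContDiff ℝ ∞ (φ n)) ∧ TendstoW1p Ω p φ u g ∧
    Tendsto (fun n => eLpNorm (fun x => φ n x - τ x) (ENNReal.ofReal p) (bdryMeasure Ω))
      atTop (𝓝 0)

/-- `(∫_Ω |∇u|^p + |u|^p dx) / (∫_{∂Ω} |u|^q dℋ^{N-1})^{p/q}`, where `g` is the weak gradient
and `τ` the trace of `u`. -/
def rayleighQuot {N : ℕ} (Ω : Set (EuclideanSpace ℝ (Fin N))) (p q : ℝ)
    (u : EuclideanSpace ℝ (Fin N) → ℝ)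
    (g : EuclideanSpace ℝ (Fin N) → EuclideanSpace ℝ (Fin N))
    (τ : EuclideanSpace ℝ (Fin N) → ℝ) : ℝ≥0∞ :=
  (∫⁻ x in Ω, (‖g x‖ₑ ^ p + ‖u x‖ₑ ^ p)) / (∫⁻ x, ‖τ x‖ₑ ^ q ∂(bdryMeasure Ω)) ^ (p / q)

/-- `u ∈ X_Γ`, with weak gradient `g` and trace `τ`. -/
structure MemAdmissible {N : ℕ} (Ω : Set (EuclideanSpace ℝ (Fin N))) (p : ℝ)
    (Γ : Set (EuclideanSpace ℝ (Fin N))) (u : EuclideanSpace ℝ (Fin N) → ℝ)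
    (g : EuclideanSpace ℝ (Fin N) → EuclideanSpace ℝ (Fin N))
    (τ : EuclideanSpace ℝ (Fin N) → ℝ) : Prop where
  memW1p : MemW1p Ω p u g
  notMemW1p0 : ¬ MemW1p0 Ω p u g
  isTrace : IsTrace Ω p u g τ
  trace_eq_zero : ∀ᵐ x ∂(bdryMeasure Ω), x ∈ Γ → τ x = 0

/-- `S(Γ)`, with values in `[0, ∞]`; it is `∞` if no admissible function vanishes on `Γ`. -/
def traceConst {N : ℕ} (Ω : Set (EuclideanSpace ℝ (Fin N))) (p q : ℝ)
    (Γ : Set (EuclideanSpace ℝ (Fin N))) : ℝ≥0∞ :=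
  sInf {r | ∃ u g τ, MemAdmissible Ω p Γ u g τ ∧ r = rayleighQuot Ω p q u g τ}

/-- `𝒮(α)`: the infimum of `S(Γ)` over the `ℋ^{N-1}`-measurable `Γ ⊆ ∂Ω` with
`ℋ^{N-1}(Γ) = α ℋ^{N-1}(∂Ω)`. -/
def optTraceConst {N : ℕ} (Ω : Set (EuclideanSpace ℝ (Fin N))) (p q α : ℝ) : ℝ≥0∞ :=
  sInf {r | ∃ Γ : Set (EuclideanSpace ℝ (Fin N)), Γ ⊆ frontier Ω ∧
    NullMeasurableSet Γ (bdryMeasure Ω) ∧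
    bdryMeasure Ω Γ = ENNReal.ofReal α * bdryMeasure Ω (frontier Ω) ∧ r = traceConst Ω p q Γ}

/-- `Ω` has smooth boundary: near each of its boundary points, `Ω` is a sublevel set `{f < 0}`
of a smooth function `f` with nonvanishing differential. -/
def HasSmoothBoundary {N : ℕ} (Ω : Set (EuclideanSpace ℝ (Fin N))) : Prop :=
  ∀ x ∈ frontier Ω, ∃ (U : Set (EuclideanSpace ℝ (Fin N))) (f : EuclideanSpace ℝ (Fin N) → ℝ),
    IsOpen U ∧ x ∈ U ∧ ContDiff ℝ ∞ f ∧ fderiv ℝ f x ≠ 0 ∧ ∀ y ∈ U, (y ∈ Ω ↔ f y < 0)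

/-- The interior ball condition. -/
def InteriorBallCond {N : ℕ} (Ω : Set (EuclideanSpace ℝ (Fin N))) : Prop :=
  ∀ x ∈ frontier Ω, ∃ (c : EuclideanSpace ℝ (Fin N)) (r : ℝ),
    0 < r ∧ ball c r ⊆ Ω ∧ x ∈ sphere c r

/-- `q < p_*`, where `p_* = p(N-1)/(N-p)` if `p < N` and `p_* = ∞` otherwise. -/
def SubcriticalTrace (N : ℕ) (p q : ℝ) : Prop :=
  p < N → q < p * (N - 1) / (N - p)

end

section Poincare

open scoped NNReal

variable {E : Type*} [NormedAddCommGroup E] [InnerProductSpace ℝ E]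

/-- The increment of a `C¹` function along a segment is bounded by the integral of its derivative. -/
lemma enorm_sub_le_lintegral_fderiv {φ : E → ℝ} (hφ : ContDiff ℝ 1 φ) (y w : E) {s : ℝ}
    (hs : 0 ≤ s) :
    ‖φ (y + s • w) - φ y‖ₑ ≤ ‖w‖ₑ * ∫⁻ t in Ioc 0 s, ‖fderiv ℝ φ (y + t • w)‖ₑ := by
  have hd : ∀ t : ℝ, HasDerivAt (fun t : ℝ => φ (y + t • w)) (fderiv ℝ φ (y + t • w) w) t := by
    intro t
    have h1 : HasDerivAt (fun t : ℝ => y + t • w) w t := by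
      simpa using ((hasDerivAt_id t).smul_const w).const_add y
    exact ((hφ.differentiable one_ne_zero _).hasFDerivAt).comp_hasDerivAt t h1
  have hc : Continuous fun t : ℝ => fderiv ℝ φ (y + t • w) :=
    (hφ.continuous_fderiv one_ne_zero).comp (by fun_prop)
  have hc' : Continuous fun t : ℝ => fderiv ℝ φ (y + t • w) w := by fun_prop
  have h := intervalIntegral.integral_eq_sub_of_hasDerivAt (fun t _ => hd t)
    (hc'.intervalIntegrable 0 s)
  simp only [zero_smul, add_zero] at h
  rw [← h, intervalIntegral.integral_of_le hs]
  calc _ ≤ ∫⁻ t in Ioc 0 s, ‖fderiv ℝ φ (y + t • w) w‖ₑ := enorm_integral_le_lintegral_enorm _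
    _ ≤ ∫⁻ t in Ioc 0 s, ‖w‖ₑ * ‖fderiv ℝ φ (y + t • w)‖ₑ := by
      gcongr with t
      rw [mul_comm]
      exact ContinuousLinearMap.le_opENorm _ _
    _ = _ := by
      rw [lintegral_const_mul]
      exact hc.enorm.measurable

variable [MeasurableSpace E] [BorelSpace E] [FiniteDimensional ℝ E]

/-- The `L¹` distance of a `C¹` function to its translate. -/
lemma lintegral_enorm_sub_translate_le {φ : E → ℝ} (hφ : ContDiff ℝ 1 φ) {A Ω : Set E} {w : E}
    (hA : MeasurableSet A) (hΩ : MeasurableSet Ω)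
    (h : ∀ y ∈ A, ∀ t ∈ Ioc (0 : ℝ) 1, y + t • w ∈ Ω) :
    ∫⁻ y in A, ‖φ (y + w) - φ y‖ₑ ≤ ‖w‖ₑ * ∫⁻ x in Ω, ‖fderiv ℝ φ x‖ₑ := by
  have hc := hφ.continuous_fderiv one_ne_zero
  calc ∫⁻ y in A, ‖φ (y + w) - φ y‖ₑ
      ≤ ∫⁻ y in A, ‖w‖ₑ * ∫⁻ t in Ioc (0 : ℝ) 1, ‖fderiv ℝ φ (y + t • w)‖ₑ := by
        gcongr with y
        simpa using enorm_sub_le_lintegral_fderiv hφ y w zero_le_one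
    _ = ‖w‖ₑ * ∫⁻ y in A, ∫⁻ t in Ioc (0 : ℝ) 1, ‖fderiv ℝ φ (y + t • w)‖ₑ := by
        rw [lintegral_const_mul' _ _ enorm_ne_top]
    _ = ‖w‖ₑ * ∫⁻ t in Ioc (0 : ℝ) 1, ∫⁻ y in A, ‖fderiv ℝ φ (y + t • w)‖ₑ := by
        rw [lintegral_lintegral_swap]
        apply Measurable.aemeasurable
        apply Continuous.measurable
        unfold Function.uncurry
        fun_prop
    _ ≤ ‖w‖ₑ * ∫⁻ t in Ioc (0 : ℝ) 1, ∫⁻ x in Ω, ‖fderiv ℝ φ x‖ₑ := by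
        gcongr 1
        refine setLIntegral_mono' measurableSet_Ioc fun t ht => ?_
        rw [← lintegral_indicator hA, ← lintegral_indicator hΩ,
          ← lintegral_add_right_eq_self (Ω.indicator _) (t • w)]
        gcongr with y
        by_cases hy : y ∈ A
        · simp [hy, h y hy t ht]
        · simp [hy]
    _ = _ := by simp

/-- The oscillation between the measures `a` and `b` is controlled by the gradient in `Ω`. -/
def OscBound (Ω : Set E) (a b : Measure E) : Prop :=
  ∃ C : ℝ≥0, ∀ φ : E → ℝ, ContDiff ℝ 1 φ →
    ∫⁻ y, ∫⁻ z, ‖φ y - φ z‖ₑ ∂b ∂a ≤ C * ∫⁻ x in Ω, ‖fderiv ℝ φ x‖ₑ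

namespace OscBound

variable {Ω : Set E} {a b c : Measure E}

lemma measurable_enorm_sub {φ : E → ℝ} (hφ : ContDiff ℝ 1 φ) :
    Measurable (Function.uncurry fun y z => ‖φ y - φ z‖ₑ) := by
  have := hφ.continuous
  apply Continuous.measurable
  unfold Function.uncurry
  fun_prop

lemma symm [SFinite a] [SFinite b] (h : OscBound Ω a b) : OscBound Ω b a := by
  obtain ⟨C, hC⟩ := h
  refine ⟨C, fun φ hφ => ?_⟩
  rw [lintegral_lintegral_swap (measurable_enorm_sub hφ).aemeasurable]
  simpa only [enorm_sub_rev] using hC φ hφ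

lemma mono_left {a' : Measure E} (h : OscBound Ω a b) (ha : a' ≤ a) : OscBound Ω a' b := by
  obtain ⟨C, hC⟩ := h
  exact ⟨C, fun φ hφ => (lintegral_mono' ha le_rfl).trans (hC φ hφ)⟩

lemma mono_right {b' : Measure E} (h : OscBound Ω a b) (hb : b' ≤ b) : OscBound Ω a b' := by
  obtain ⟨C, hC⟩ := h
  exact ⟨C, fun φ hφ => (lintegral_mono fun _ => lintegral_mono' hb le_rfl).trans (hC φ hφ)⟩

lemma trans [IsFiniteMeasure a] [IsFiniteMeasure b] [IsFiniteMeasure c] (hb : b ≠ 0)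
    (hab : OscBound Ω a b) (hbc : OscBound Ω b c) : OscBound Ω a c := by
  obtain ⟨C, hC⟩ := hab
  obtain ⟨D, hD⟩ := hbc
  have hb0 : b univ ≠ 0 := by simpa using hb
  have hbt : b univ ≠ ⊤ := measure_ne_top _ _
  refine ⟨(c univ * C / b univ).toNNReal + (a univ * D / b univ).toNNReal, fun φ hφ => ?_⟩
  set G := ∫⁻ x in Ω, ‖fderiv ℝ φ x‖ₑ
  have hm := measurable_enorm_sub hφ
  have key : b univ * ∫⁻ y, ∫⁻ z, ‖φ y - φ z‖ₑ ∂c ∂a ≤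
      c univ * (C * G) + a univ * (D * G) := by
    calc b univ * ∫⁻ y, ∫⁻ z, ‖φ y - φ z‖ₑ ∂c ∂a
        = ∫⁻ y, ∫⁻ z, ∫⁻ w, ‖φ y - φ z‖ₑ ∂b ∂c ∂a := by
          simp_rw [lintegral_const, mul_comm _ (b univ)]
          rw [← lintegral_const_mul' _ _ hbt]
          simp_rw [← lintegral_const_mul' _ _ hbt]
      _ ≤ ∫⁻ y, ∫⁻ z, (∫⁻ w, ‖φ y - φ w‖ₑ ∂b + ∫⁻ w, ‖φ w - φ z‖ₑ ∂b) ∂c ∂a := by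
          gcongr with y z
          rw [← lintegral_add_left (hm.of_uncurry_left)]
          gcongr with w
          calc ‖φ y - φ z‖ₑ = ‖(φ y - φ w) + (φ w - φ z)‖ₑ := by ring_nf
            _ ≤ _ := enorm_add_le _ _
      _ = ∫⁻ y, (c univ * ∫⁻ w, ‖φ y - φ w‖ₑ ∂b + ∫⁻ z, ∫⁻ w, ‖φ w - φ z‖ₑ ∂b ∂c) ∂a := by
          congr with y
          rw [lintegral_add_left measurable_const, lintegral_const, mul_comm]
      _ = c univ * (∫⁻ y, ∫⁻ w, ‖φ y - φ w‖ₑ ∂b ∂a) +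
            a univ * ∫⁻ z, ∫⁻ w, ‖φ w - φ z‖ₑ ∂b ∂c := by
          rw [lintegral_add_right _ measurable_const, lintegral_const, mul_comm (a univ),
            lintegral_const_mul' _ _ (measure_ne_top _ _)]
      _ ≤ _ := by
          gcongr
          · exact hC φ hφ
          · rw [lintegral_lintegral_swap]
            · exact hD φ hφ
            · exact (hm.comp measurable_swap).aemeasurable
  push_cast
  rw [ENNReal.coe_toNNReal (ENNReal.div_ne_top (by finiteness) hb0),
    ENNReal.coe_toNNReal (ENNReal.div_ne_top (by finiteness) hb0)]
  rw [mul_comm, ← ENNReal.le_div_iff_mul_le (.inl hb0) (.inl hbt)] at key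
  refine key.trans (le_of_eq ?_)
  simp only [div_eq_mul_inv]
  ring

/-- The Poincaré inequality on a bounded convex set. -/
lemma of_convex {D : Set E} (hD : Convex ℝ D) (hDb : IsBounded D) (hDm : MeasurableSet D)
    (hDΩ : D ⊆ Ω) : OscBound Ω (volume.restrict D) (volume.restrict D) := by
  obtain ⟨R, hR0, hR⟩ : ∃ R : ℝ, 0 < R ∧ D ⊆ ball 0 R := by
    obtain ⟨R, hR⟩ := hDb.subset_ball 0
    exact ⟨max R 1, by positivity, hR.trans (ball_subset_ball (le_max_left _ _))⟩
  have hBfin : volume (ball (0 : E) (2 * R)) ≠ ⊤ := measure_ball_lt_top.ne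
  refine ⟨(volume (ball (0 : E) (2 * R)) * ENNReal.ofReal (2 * R)).toNNReal, fun φ hφ => ?_⟩
  rw [ENNReal.coe_toNNReal (by finiteness)]
  set G := ∫⁻ x in Ω, ‖fderiv ℝ φ x‖ₑ
  have hm := measurable_enorm_sub hφ
  have hφc := hφ.continuous
  calc ∫⁻ y in D, ∫⁻ z in D, ‖φ y - φ z‖ₑ
      = ∫⁻ y in D, ∫⁻ w, D.indicator (fun z => ‖φ y - φ z‖ₑ) (w + y) := by
        congr with y
        rw [← lintegral_indicator hDm, lintegral_add_right_eq_self (D.indicator _) y]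
    _ = ∫⁻ w, ∫⁻ y in D, D.indicator (fun z => ‖φ y - φ z‖ₑ) (w + y) := by
        rw [lintegral_lintegral_swap]
        apply Measurable.aemeasurable
        have h1 : MeasurableSet {q : E × E | q.2 + q.1 ∈ D} := by
          exact (measurable_snd.add measurable_fst) hDm
        have h2 : Measurable fun q : E × E => ‖φ q.1 - φ (q.2 + q.1)‖ₑ :=
          Continuous.measurable (by fun_prop)
        exact h2.indicator h1
    _ ≤ ∫⁻ w, (ball (0 : E) (2 * R)).indicator (fun _ => ENNReal.ofReal (2 * R) * G) w := by
        gcongr with w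
        have h1 : MeasurableSet {y | w + y ∈ D} := (measurable_const_add w) hDm
        by_cases hw : w ∈ ball (0 : E) (2 * R)
        · rw [indicator_of_mem hw]
          calc ∫⁻ y in D, D.indicator (fun z => ‖φ y - φ z‖ₑ) (w + y)
              = ∫⁻ y in {y | w + y ∈ D} ∩ D, ‖φ (y + w) - φ y‖ₑ := by
                rw [← Measure.restrict_restrict h1, ← lintegral_indicator h1]
                congr with y
                by_cases hy : w + y ∈ D
                · simp [indicator, hy, add_comm y w, enorm_sub_rev (φ y)]
                · simp [indicator, hy]
            _ ≤ ‖w‖ₑ * G := by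
                refine (lintegral_enorm_sub_translate_le hφ (h1.inter hDm) hDm ?_).trans
                  (mul_le_mul_right (lintegral_mono_set hDΩ) _)
                rintro y ⟨hy1, hy2⟩ t ht
                have := hD hy2 hy1 (sub_nonneg.2 ht.2) ht.1.le (by ring)
                convert this using 1
                module
            _ ≤ _ := by
                gcongr
                rw [← ofReal_norm]
                exact ENNReal.ofReal_le_ofReal (by simpa using (mem_ball_zero_iff.1 hw).le)
        · rw [indicator_of_notMem hw]
          have : ∀ y ∈ D, D.indicator (fun z => ‖φ y - φ z‖ₑ) (w + y) = 0 := by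
            intro y hy
            refine indicator_of_notMem (fun hwy => hw ?_) _
            have h1 := mem_ball_zero_iff.1 (hR hy)
            have h2 := mem_ball_zero_iff.1 (hR hwy)
            rw [mem_ball_zero_iff]
            calc ‖w‖ = ‖(w + y) - y‖ := by simp
              _ ≤ ‖w + y‖ + ‖y‖ := norm_sub_le _ _
              _ < _ := by linarith
          rw [setLIntegral_congr_fun hDm this]
          simp
    _ = _ := by
        rw [lintegral_indicator measurableSet_ball, lintegral_const, Measure.restrict_apply_univ]
        ring

/-- All balls in a connected open set have comparable averages. -/
lemma of_balls (hΩo : IsOpen Ω) (hΩc : IsPreconnected Ω) {x y : E} {r s : ℝ} (hr : 0 < r)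
    (hs : 0 < s) (hx : ball x r ⊆ Ω) (hy : ball y s ⊆ Ω) :
    OscBound Ω (volume.restrict (ball x r)) (volume.restrict (ball y s)) := by
  have hfin : ∀ (x : E) (r : ℝ), IsFiniteMeasure (volume.restrict (ball x r)) := fun x r =>
    ⟨by simpa using measure_ball_lt_top⟩
  have hne : ∀ (x : E) {r : ℝ}, 0 < r → (volume.restrict (ball x r) : Measure E) ≠ 0 := by
    intro x r hr
    rw [Ne, Measure.restrict_eq_zero]
    exact (measure_ball_pos volume x hr).ne'
  have hsame : ∀ (x : E) {r s : ℝ}, ball x r ⊆ Ω → ball x s ⊆ Ω →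
      OscBound Ω (volume.restrict (ball x r)) (volume.restrict (ball x s)) := by
    intro x r s hr hs
    have : ball x (max r s) ⊆ Ω := by
      rcases le_total r s with h | h
      · rwa [max_eq_right h]
      · rwa [max_eq_left h]
    exact ((of_convex (convex_ball x (max r s)) isBounded_ball measurableSet_ball this).mono_left
      (Measure.restrict_mono (ball_subset_ball (le_max_left _ _)) le_rfl)).mono_right
      (Measure.restrict_mono (ball_subset_ball (le_max_right _ _)) le_rfl)
  have hP := hΩc.induction₂ (fun x y => ∃ r > 0, ∃ s > 0, ball x r ⊆ Ω ∧ ball y s ⊆ Ω ∧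
      OscBound Ω (volume.restrict (ball x r)) (volume.restrict (ball y s)))
    (by
      intro x hx
      obtain ⟨r, hr, hrx⟩ := Metric.isOpen_iff.1 hΩo x hx
      filter_upwards [mem_nhdsWithin_of_mem_nhds (ball_mem_nhds x hr)] with y hy
      obtain ⟨s, hs, hsy⟩ := Metric.isOpen_iff.1 isOpen_ball y hy
      exact ⟨r, hr, s, hs, hrx, hsy.trans hrx, (hsame x hrx hrx).mono_right
        (Measure.restrict_mono hsy le_rfl)⟩)
    (by
      rintro x y z - - - ⟨r, hr, s, hs, hxr, hys, h1⟩ ⟨s', hs', t, ht, hys', hzt, h2⟩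
      exact ⟨r, hr, t, ht, hxr, hzt,
        h1.trans (hne y hs) ((hsame y hys hys').trans (hne y hs') h2)⟩)
    (by
      rintro x y - - ⟨r, hr, s, hs, hxr, hys, h1⟩
      exact ⟨s, hs, r, hr, hys, hxr, h1.symm⟩)
    (hx (mem_ball_self hr)) (hy (mem_ball_self hs))
  obtain ⟨r', hr', s', hs', hxr, hys, h⟩ := hP
  exact (hsame x hx hxr).trans (hne x hr') (h.trans (hne y hs') (hsame y hys hy))

end OscBound

end Poincare

section Chart

open scoped NNReal

/-- A boundary chart: in the ball of radius `R` about `x`, the set `Ω` is the sublevel set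
`{f < 0}`, and `f` decreases at rate at least `c` in the coordinate direction `σ eᵢ`. -/
structure IsBdryChart {N : ℕ} (Ω : Set (EuclideanSpace ℝ (Fin N))) (x : EuclideanSpace ℝ (Fin N))
    (R : ℝ) (f : EuclideanSpace ℝ (Fin N) → ℝ) (i : Fin N) (σ c M : ℝ) : Prop where
  R_pos : 0 < R
  c_pos : 0 < c
  abs_sigma : |σ| = 1
  contDiff : ContDiff ℝ ∞ f
  mem_iff : ∀ y ∈ ball x R, (y ∈ Ω ↔ f y < 0)
  fderiv_le : ∀ y ∈ ball x R, fderiv ℝ f y (EuclideanSpace.single i σ) ≤ -c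
  norm_fderiv_le : ∀ y ∈ ball x R, ‖fderiv ℝ f y‖ ≤ M

lemma exists_isBdryChart {N : ℕ} {Ω : Set (EuclideanSpace ℝ (Fin N))} (hΩ : HasSmoothBoundary Ω)
    {x : EuclideanSpace ℝ (Fin N)} (hx : x ∈ frontier Ω) :
    ∃ R f i σ c M, IsBdryChart Ω x R f i σ c M := by
  obtain ⟨U, f, hU, hxU, hf, hdf, hmem⟩ := hΩ x hx
  obtain ⟨i, hi⟩ : ∃ i, fderiv ℝ f x (EuclideanSpace.single i 1) ≠ 0 := by
    by_contra! h
    apply hdf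
    apply ContinuousLinearMap.coe_injective
    refine (EuclideanSpace.basisFun (Fin N) ℝ).toBasis.ext fun i => ?_
    simpa using h i
  set d := fderiv ℝ f x (EuclideanSpace.single i 1)
  obtain ⟨σ, hσ, hσd⟩ : ∃ σ : ℝ, |σ| = 1 ∧ σ * d = -|d| := by
    rcases lt_or_gt_of_ne hi with h | h
    · exact ⟨1, by simp, by rw [abs_of_neg h]; ring⟩
    · exact ⟨-1, by simp, by rw [abs_of_pos h]; ring⟩
  have hcont : Continuous (fderiv ℝ f) := hf.continuous_fderiv (by simp)
  have hsingle : EuclideanSpace.single i σ = σ • (EuclideanSpace.single i (1 : ℝ)) := by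
    ext j
    simp
  have h1 : ∀ᶠ y in 𝓝 x, fderiv ℝ f y (EuclideanSpace.single i σ) < -(|d| / 2) := by
    have hc : Continuous fun y => fderiv ℝ f y (EuclideanSpace.single i σ) := by fun_prop
    refine hc.continuousAt.eventually (gt_mem_nhds ?_)
    beta_reduce
    rw [hsingle, map_smul, smul_eq_mul, hσd]
    have := abs_pos.2 hi
    linarith
  have h2 : ∀ᶠ y in 𝓝 x, ‖fderiv ℝ f y‖ < ‖fderiv ℝ f x‖ + 1 :=
    hcont.norm.continuousAt.eventually (gt_mem_nhds (lt_add_one _))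
  obtain ⟨R, hR, hball⟩ := Metric.eventually_nhds_iff_ball.1 (h1.and (h2.and (hU.mem_nhds hxU)))
  exact ⟨R, f, i, σ, |d| / 2, ‖fderiv ℝ f x‖ + 1, hR, half_pos (abs_pos.2 hi), hσ, hf,
    fun y hy => hmem y (hball y hy).2.2, fun y hy => (hball y hy).1.le,
    fun y hy => (hball y hy).2.1.le⟩

namespace IsBdryChart

variable {N : ℕ} {Ω : Set (EuclideanSpace ℝ (Fin N))} {x : EuclideanSpace ℝ (Fin N)} {R : ℝ}
  {f : EuclideanSpace ℝ (Fin N) → ℝ} {i : Fin N} {σ c M : ℝ}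

lemma exists_mvt (h : IsBdryChart Ω x R f i σ c M) {y z : EuclideanSpace ℝ (Fin N)}
    (hy : y ∈ ball x R) (hz : z ∈ ball x R) :
    ∃ w ∈ ball x R, f z - f y = fderiv ℝ f w (z - y) := by
  obtain ⟨w, hw, h'⟩ := domain_mvt (s := ball x R) (f := f) (f' := fderiv ℝ f)
    (fun w _ => (h.contDiff.differentiable (by simp) w).hasFDerivAt.hasFDerivWithinAt)
    (convex_ball x R) hy hz
  exact ⟨w, (convex_ball x R).segment_subset hy hz hw, h'⟩

/-- The defining function decreases along the inner direction. -/
lemma apply_add_le (h : IsBdryChart Ω x R f i σ c M) {y : EuclideanSpace ℝ (Fin N)} {s : ℝ}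
    (hy : y ∈ ball x R) (hs : 0 ≤ s) (hys : y + s • EuclideanSpace.single i σ ∈ ball x R) :
    f (y + s • EuclideanSpace.single i σ) ≤ f y - c * s := by
  obtain ⟨w, hw, h'⟩ := h.exists_mvt hy hys
  rw [add_sub_cancel_left, map_smul, smul_eq_mul] at h'
  nlinarith [h.fderiv_le w hw]

lemma nonpos_of_mem_closure (h : IsBdryChart Ω x R f i σ c M) {y : EuclideanSpace ℝ (Fin N)}
    (hy : y ∈ ball x R) (hyΩ : y ∈ closure Ω) : f y ≤ 0 := by
  have h1 : y ∈ closure (ball x R ∩ Ω) := isOpen_ball.inter_closure ⟨hy, hyΩ⟩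
  have h2 : closure (ball x R ∩ Ω) ⊆ {z | f z ≤ 0} :=
    closure_minimal (fun z hz => ((h.mem_iff z hz.1).1 hz.2).le)
      (isClosed_le h.contDiff.continuous continuous_const)
  exact h2 h1

lemma eq_zero_of_mem_frontier (h : IsBdryChart Ω x R f i σ c M) (hΩ : IsOpen Ω)
    {y : EuclideanSpace ℝ (Fin N)} (hy : y ∈ ball x R) (hyΩ : y ∈ frontier Ω) : f y = 0 := by
  refine le_antisymm (h.nonpos_of_mem_closure hy hyΩ.1) (not_lt.1 fun hlt => ?_)
  rw [hΩ.frontier_eq] at hyΩ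
  exact hyΩ.2 ((h.mem_iff y hy).2 hlt)

/-- Moving in the inner direction leads into `Ω`. -/
lemma add_mem (h : IsBdryChart Ω x R f i σ c M) {y : EuclideanSpace ℝ (Fin N)} {s : ℝ}
    (hy : y ∈ ball x R) (hyΩ : y ∈ closure Ω) (hs : 0 < s)
    (hys : y + s • EuclideanSpace.single i σ ∈ ball x R) :
    y + s • EuclideanSpace.single i σ ∈ Ω := by
  rw [h.mem_iff _ hys]
  have := h.apply_add_le hy hs.le hys
  have := h.nonpos_of_mem_closure hy hyΩ
  nlinarith [h.c_pos]

lemma norm_single_sigma (h : IsBdryChart Ω x R f i σ c M) :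
    ‖(EuclideanSpace.single i σ : EuclideanSpace ℝ (Fin N))‖ = 1 := by
  simp [h.abs_sigma]

end IsBdryChart

/-- The projection of `ℝ^{n+1}` to `ℝ^n` that drops the `i`-th coordinate. -/
def dropCoord {n : ℕ} (i : Fin (n + 1)) (x : EuclideanSpace ℝ (Fin (n + 1))) :
    EuclideanSpace ℝ (Fin n) :=
  WithLp.toLp 2 fun j => x (i.succAbove j)

lemma continuous_dropCoord {n : ℕ} (i : Fin (n + 1)) : Continuous (dropCoord i) := by
  unfold dropCoord
  fun_prop

lemma norm_sq_eq_dropCoord {n : ℕ} (i : Fin (n + 1)) (x : EuclideanSpace ℝ (Fin (n + 1))) :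
    ‖x‖ ^ 2 = x i ^ 2 + ‖dropCoord i x‖ ^ 2 := by
  simp [EuclideanSpace.norm_sq_eq, Fin.sum_univ_succAbove _ i, dropCoord]

lemma dropCoord_sub {n : ℕ} (i : Fin (n + 1)) (x y : EuclideanSpace ℝ (Fin (n + 1))) :
    dropCoord i (x - y) = dropCoord i x - dropCoord i y := by
  ext j
  simp [dropCoord]

lemma lipschitzWith_dropCoord {n : ℕ} (i : Fin (n + 1)) : LipschitzWith 1 (dropCoord i) := by
  refine LipschitzWith.of_dist_le_mul fun x y => ?_
  rw [dist_eq_norm, dist_eq_norm, ← dropCoord_sub, NNReal.coe_one, one_mul]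
  have := norm_sq_eq_dropCoord i (x - y)
  exact abs_le_of_sq_le_sq' (by nlinarith [sq_nonneg ((x - y) i)]) (norm_nonneg _) |>.2

/-- Integration over `ℝ^{n+1}` along the lines in the `i`-th coordinate direction. -/
lemma lintegral_eq_lintegral_insertNth {n : ℕ} (i : Fin (n + 1))
    {ψ : EuclideanSpace ℝ (Fin (n + 1)) → ℝ≥0∞} (hψ : Measurable ψ) :
    ∫⁻ x' : EuclideanSpace ℝ (Fin n), ∫⁻ t : ℝ, ψ (WithLp.toLp 2 (i.insertNth t (WithLp.ofLp x'))) = ∫⁻ x, ψ x := by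
  rw [← (PiLp.volume_preserving_toLp (Fin (n + 1))).lintegral_comp hψ,
    ← ((volume_preserving_piFinSuccAbove (fun _ : Fin (n + 1) => ℝ) i).symm).lintegral_comp
      (by fun_prop),
    Measure.volume_eq_prod, lintegral_prod_symm]
  · rw [← (PiLp.volume_preserving_ofLp (Fin n)).lintegral_comp]
    · rfl
    · apply Measurable.lintegral_prod_left' (f := fun (q : ℝ × (Fin n → ℝ)) =>
        ψ (WithLp.toLp 2 (i.insertNth (α := fun _ => ℝ) q.1 q.2)))
      exact hψ.comp ((WithLp.measurable_toLp 2 _).comp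
        (MeasurableEquiv.piFinSuccAbove (fun _ : Fin (n + 1) => ℝ) i).symm.measurable)
  · apply Measurable.aemeasurable
    exact hψ.comp ((WithLp.measurable_toLp 2 _).comp
        (MeasurableEquiv.piFinSuccAbove (fun _ : Fin (n + 1) => ℝ) i).symm.measurable)

namespace IsBdryChart

variable {n : ℕ} {Ω : Set (EuclideanSpace ℝ (Fin (n + 1)))} {x : EuclideanSpace ℝ (Fin (n + 1))}
  {R : ℝ} {f : EuclideanSpace ℝ (Fin (n + 1)) → ℝ} {i : Fin (n + 1)} {σ c M : ℝ}

/-- In a chart, the boundary is a Lipschitz graph over the hyperplane `{xᵢ = 0}`. -/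
lemma dist_le_dropCoord (h : IsBdryChart Ω x R f i σ c M) (hΩ : IsOpen Ω)
    {y z : EuclideanSpace ℝ (Fin (n + 1))} (hy : y ∈ frontier Ω ∩ ball x R)
    (hz : z ∈ frontier Ω ∩ ball x R) :
    dist y z ≤ (1 + M / c) * dist (dropCoord i y) (dropCoord i z) := by
  obtain ⟨w, hw, hmv⟩ := h.exists_mvt hz.2 hy.2
  rw [h.eq_zero_of_mem_frontier hΩ hy.2 hy.1, h.eq_zero_of_mem_frontier hΩ hz.2 hz.1, sub_zero]
    at hmv
  rw [dist_eq_norm, dist_eq_norm, ← dropCoord_sub]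
  set v := y - z
  have hσ2 : σ * σ = 1 := by
    rcases abs_eq (zero_le_one' ℝ) |>.1 h.abs_sigma with h | h <;> simp [h]
  set d := v i * σ
  have hd : |d| = |v i| := by simp [d, abs_mul, h.abs_sigma]
  set u := v - d • EuclideanSpace.single i σ with hu
  have hui : u i = 0 := by
    simp [hu, d, mul_assoc, hσ2]
  have hud : dropCoord i u = dropCoord i v := by
    ext j
    simp [hu, dropCoord]
  have hun : ‖u‖ = ‖dropCoord i v‖ := by
    have := norm_sq_eq_dropCoord i u
    rw [hui, hud] at this
    exact (sq_eq_sq₀ (norm_nonneg _) (norm_nonneg _)).1 (by linarith)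
  have hv : v = u + d • EuclideanSpace.single i σ := by simp [hu]
  have hM := h.norm_fderiv_le w hw
  have h1 : |d| * c ≤ M * ‖u‖ := by
    rw [hv, map_add, map_smul, smul_eq_mul] at hmv
    have h2 : |fderiv ℝ f w u| ≤ M * ‖u‖ :=
      ((fderiv ℝ f w).le_opNorm u).trans (by gcongr)
    have h3 : fderiv ℝ f w u = -(d * fderiv ℝ f w (EuclideanSpace.single i σ)) := by linarith
    rw [h3, abs_neg, abs_mul] at h2
    refine le_trans ?_ h2
    gcongr
    rw [le_abs]
    right
    linarith [h.fderiv_le w hw]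
  have hdM : |d| ≤ M / c * ‖u‖ := by
    rw [div_mul_eq_mul_div, le_div_iff₀ h.c_pos]
    exact h1
  calc ‖v‖ ≤ ‖u‖ + ‖d • (EuclideanSpace.single i σ : EuclideanSpace ℝ (Fin (n + 1)))‖ := by
        conv_lhs => rw [hv]
        exact norm_add_le _ _
    _ = ‖u‖ + |d| := by rw [norm_smul, h.norm_single_sigma, mul_one, Real.norm_eq_abs]
    _ ≤ _ := by rw [hun] at *; linarith

/-- The surface measure in a chart is bounded by Lebesgue measure on the hyperplane. -/
lemma exists_map_dropCoord_le (h : IsBdryChart Ω x R f i σ c M) (hΩ : IsOpen Ω) :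
    ∃ L : ℝ≥0, ((bdryMeasure Ω).restrict (ball x R)).map (dropCoord i) ≤ L • volume := by
  set T := frontier Ω ∩ ball x R
  let g : T → EuclideanSpace ℝ (Fin n) := fun y => dropCoord i y
  have hg : AntilipschitzWith (1 + M / c).toNNReal g := by
    refine AntilipschitzWith.of_le_mul_dist fun y z => ?_
    refine (h.dist_le_dropCoord hΩ y.2 z.2).trans ?_
    gcongr
    exact Real.le_coe_toNNReal _
  refine ⟨(1 + M / c).toNNReal ^ n, Measure.le_iff.2 fun A hA => ?_⟩
  have hAm : MeasurableSet (dropCoord i ⁻¹' A) := (continuous_dropCoord i).measurable hA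
  rw [Measure.map_apply (continuous_dropCoord i).measurable hA, Measure.restrict_apply hAm,
    bdryMeasure, Measure.restrict_apply (hAm.inter measurableSet_ball), Nat.add_sub_cancel]
  have himg : dropCoord i ⁻¹' A ∩ ball x R ∩ frontier Ω = Subtype.val '' (g ⁻¹' A) := by
    ext y
    simp only [mem_inter_iff, mem_preimage, mem_image, Subtype.exists, g, T]
    constructor
    · rintro ⟨⟨h1, h2⟩, h3⟩
      exact ⟨y, ⟨h3, h2⟩, h1, rfl⟩
    · rintro ⟨y', ⟨h3, h2⟩, h1, rfl⟩
      exact ⟨⟨h1, h2⟩, h3⟩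
  rw [himg, isometry_subtype_coe.euclideanHausdorffMeasure_image,
    ← EuclideanSpace.euclideanHausdorffMeasure_eq_volume,
    Measure.euclideanHausdorffMeasure_def, Measure.euclideanHausdorffMeasure_def]
  simp only [Measure.smul_apply, ENNReal.smul_def, smul_eq_mul]
  have := hg.hausdorffMeasure_preimage_le (d := n) (by positivity) A
  rw [ENNReal.rpow_natCast] at this
  calc _ ≤ _ := mul_le_mul_right this _
    _ = _ := by push_cast; ring

/-- Integrating over the lines through the boundary points is bounded by Lebesgue measure. -/
lemma exists_lintegral_lines_le (h : IsBdryChart Ω x R f i σ c M) (hΩ : IsOpen Ω) :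
    ∃ L : ℝ≥0, ∀ ψ : EuclideanSpace ℝ (Fin (n + 1)) → ℝ≥0∞, Measurable ψ →
      ∫⁻ y in ball x R, ∫⁻ s : ℝ, ψ (y + s • EuclideanSpace.single i σ) ∂volume ∂(bdryMeasure Ω) ≤
        L * ∫⁻ z, ψ z := by
  obtain ⟨L, hL⟩ := h.exists_map_dropCoord_le hΩ
  refine ⟨L, fun ψ hψ => ?_⟩
  set G : EuclideanSpace ℝ (Fin n) → ℝ≥0∞ := fun x' =>
    ∫⁻ t : ℝ, ψ (WithLp.toLp 2 (i.insertNth t (WithLp.ofLp x')))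
  have hGm : Measurable G := by
    apply Measurable.lintegral_prod_right' (f := fun (q : EuclideanSpace ℝ (Fin n) × ℝ) =>
        ψ (WithLp.toLp 2 (i.insertNth (α := fun _ => ℝ) q.2 (WithLp.ofLp q.1))))
    exact hψ.comp ((WithLp.measurable_toLp 2 _).comp
        ((MeasurableEquiv.piFinSuccAbove (fun _ : Fin (n + 1) => ℝ) i).symm.measurable.comp
          (measurable_snd.prodMk ((WithLp.measurable_ofLp 2 _).comp measurable_fst))))
  have hG : ∀ y : EuclideanSpace ℝ (Fin (n + 1)),
      ∫⁻ s : ℝ, ψ (y + s • EuclideanSpace.single i σ) = G (dropCoord i y) := by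
    intro y
    have hins : ∀ s : ℝ, y + s • EuclideanSpace.single i σ =
        WithLp.toLp 2 (i.insertNth (α := fun _ => ℝ) (s * σ + y i)
          (WithLp.ofLp (dropCoord i y))) := by
      intro s
      ext j
      rcases Fin.eq_self_or_eq_succAbove i j with rfl | ⟨k, rfl⟩
      · simp [add_comm]
      · simp [dropCoord]
    simp_rw [hins, G]
    rw [← lintegral_add_right_eq_self (fun t : ℝ => ψ (WithLp.toLp 2 (i.insertNth
      (α := fun _ => ℝ) t (WithLp.ofLp (dropCoord i y))))) (y i)]
    rcases abs_eq (zero_le_one' ℝ) |>.1 h.abs_sigma with hs | hs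
    · simp [hs]
    · rw [← lintegral_neg_eq_self]
      simp [hs]
  simp_rw [hG]
  rw [← lintegral_map hGm (continuous_dropCoord i).measurable]
  calc _ ≤ ∫⁻ x', G x' ∂(L • volume) := lintegral_mono' hL le_rfl
    _ = L * ∫⁻ x', G x' := by rw [ENNReal.smul_def, lintegral_smul_measure, smul_eq_mul]
    _ = _ := by rw [lintegral_eq_lintegral_insertNth i hψ]

end IsBdryChart

end Chart

section Trace

open scoped NNReal

lemma ae_mem_frontier {N : ℕ} (Ω : Set (EuclideanSpace ℝ (Fin N))) :
    ∀ᵐ y ∂(bdryMeasure Ω), y ∈ frontier Ω :=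
  ae_restrict_mem isClosed_frontier.measurableSet

lemma OscBound.finset_sum {E : Type*} [NormedAddCommGroup E] [InnerProductSpace ℝ E]
    [MeasurableSpace E] [BorelSpace E] [FiniteDimensional ℝ E] {Ω : Set E} {ι : Type*}
    (t : Finset ι) (a : ι → Measure E) {b : Measure E} (h : ∀ j ∈ t, OscBound Ω (a j) b) :
    OscBound Ω (∑ j ∈ t, a j) b := by
  choose! C hC using h
  refine ⟨∑ j ∈ t, C j, fun φ hφ => ?_⟩
  rw [lintegral_finsetSum_measure]
  push_cast
  rw [Finset.sum_mul]
  exact Finset.sum_le_sum fun j hj => hC j hj φ hφ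

/-- Near each of its points, the boundary is related to a ball in the interior. -/
lemma exists_oscBound_near_bdry {n : ℕ} {Ω : Set (EuclideanSpace ℝ (Fin (n + 1)))}
    (hΩo : IsOpen Ω) (hΩs : HasSmoothBoundary Ω) {x : EuclideanSpace ℝ (Fin (n + 1))}
    (hx : x ∈ frontier Ω) :
    ∃ r > 0, ∃ z, ∃ ρ > 0, ball z ρ ⊆ Ω ∧ bdryMeasure Ω (ball x r) < ⊤ ∧
      OscBound Ω ((bdryMeasure Ω).restrict (ball x r)) (volume.restrict (ball z ρ)) := by
  obtain ⟨R, f, i, σ, c, M, h⟩ := exists_isBdryChart hΩs hx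
  obtain ⟨L, hL⟩ := h.exists_lintegral_lines_le hΩo
  set e : EuclideanSpace ℝ (Fin (n + 1)) := EuclideanSpace.single i σ
  have he : ‖e‖ = 1 := h.norm_single_sigma
  have hR := h.R_pos
  set H := R / 2 with hH
  have hz : x + H • e ∈ Ω := by
    refine h.add_mem (mem_ball_self hR) hx.1 (half_pos hR) ?_
    rw [mem_ball_iff_norm, add_sub_cancel_left, norm_smul, h.norm_single_sigma, mul_one,
      Real.norm_of_nonneg (half_pos hR).le]
    exact half_lt_self hR
  obtain ⟨ρ, hρ, hρΩ⟩ := Metric.isOpen_iff.1 hΩo _ hz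
  set δ := min ρ R / 4 with hδdef
  have hδ : 0 < δ := by positivity
  have hδρ : δ ≤ ρ / 4 := by rw [hδdef]; gcongr; exact min_le_left _ _
  have hδR : δ ≤ R / 4 := by rw [hδdef]; gcongr; exact min_le_right _ _
  set B := ball (x + H • e) ρ
  set μ := bdryMeasure Ω
  set I := Ioc (H - δ) H
  have hI : volume I = ENNReal.ofReal δ := by simp [I]
  have hI0 : volume I ≠ 0 := by rw [hI]; simpa using hδ
  have hIt : volume I ≠ ⊤ := by rw [hI]; exact ENNReal.ofReal_ne_top
  have hBt : volume B ≠ ⊤ := measure_ball_lt_top.ne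
  have hsub : ball x δ ⊆ ball x R := ball_subset_ball (by linarith)
  have hae : ∀ᵐ y ∂(μ.restrict (ball x δ)), y ∈ frontier Ω ∧ y ∈ ball x δ := by
    filter_upwards [ae_restrict_of_ae (ae_mem_frontier Ω), ae_restrict_mem measurableSet_ball]
      with y h1 h2 using ⟨h1, h2⟩
  have hmemΩ : ∀ y ∈ frontier Ω, y ∈ ball x δ → ∀ t ∈ Ioc 0 H, y + t • e ∈ Ω := by
    intro y hy hyx t ht
    refine h.add_mem (hsub hyx) hy.1 ht.1 ?_
    rw [mem_ball_iff_norm] at hyx ⊢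
    calc ‖y + t • EuclideanSpace.single i σ - x‖ = ‖(y - x) + t • e‖ := by congr 1; simp only [e]; abel
      _ ≤ ‖y - x‖ + ‖t • e‖ := norm_add_le _ _
      _ = ‖y - x‖ + t := by rw [norm_smul, he, mul_one, Real.norm_of_nonneg ht.1.le]
      _ < R := by linarith [ht.2]
  have hmemB : ∀ y ∈ ball x δ, ∀ s ∈ I, y + s • e ∈ B := by
    intro y hyx s hs
    rw [mem_ball_iff_norm] at hyx ⊢
    calc ‖y + s • e - (x + H • e)‖ = ‖(y - x) + (s - H) • e‖ := by congr 1; module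
      _ ≤ ‖y - x‖ + ‖(s - H) • e‖ := norm_add_le _ _
      _ = ‖y - x‖ + |s - H| := by rw [norm_smul, he, mul_one, Real.norm_eq_abs]
      _ < ρ := by rw [abs_of_nonpos (by linarith [hs.2])]; linarith [hs.1]
  have hlines : ∀ (A : Set (EuclideanSpace ℝ (Fin (n + 1)))) (J : Set ℝ)
      (Ψ : EuclideanSpace ℝ (Fin (n + 1)) → ℝ≥0∞), MeasurableSet A → MeasurableSet J →
      Measurable Ψ → (∀ y ∈ frontier Ω, y ∈ ball x δ → ∀ t ∈ J, y + t • e ∈ A) →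
      ∫⁻ y in ball x δ, (∫⁻ s in J, Ψ (y + s • e)) ∂μ ≤ L * ∫⁻ w in A, Ψ w := by
    intro A J Ψ hA hJ hΨ hAJ
    calc ∫⁻ y in ball x δ, (∫⁻ s in J, Ψ (y + s • e)) ∂μ
        ≤ ∫⁻ y in ball x δ, ∫⁻ s : ℝ, A.indicator Ψ (y + s • e) ∂volume ∂μ := by
          refine lintegral_mono_ae ?_
          filter_upwards [hae] with y hy
          rw [← lintegral_indicator hJ]
          gcongr with s
          by_cases hs : s ∈ J
          · simp [hs, hAJ y hy.1 hy.2 s hs]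
          · simp [hs]
      _ ≤ ∫⁻ y in ball x R, ∫⁻ s : ℝ, A.indicator Ψ (y + s • e) ∂volume ∂μ :=
          lintegral_mono_set hsub
      _ ≤ L * ∫⁻ w, A.indicator Ψ w := hL _ (hΨ.indicator hA)
      _ = _ := by rw [lintegral_indicator hA]
  have hfin : μ (ball x δ) < ⊤ := by
    have h1 := hlines B I (fun _ => 1) measurableSet_ball measurableSet_Ioc measurable_const
      (fun y _ hy => hmemB y hy)
    simp only [lintegral_const, Measure.restrict_apply_univ, one_mul] at h1
    have h2 : volume I * μ (ball x δ) < ⊤ := h1.trans_lt (by finiteness)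
    exact (ENNReal.lt_top_of_mul_ne_top_right h2.ne hI0)
  refine ⟨δ, hδ, x + H • e, ρ, hρ, hρΩ, hfin, ?_⟩
  obtain ⟨K, hK⟩ := OscBound.of_convex (convex_ball (x + H • e) ρ) isBounded_ball
    measurableSet_ball hρΩ
  refine ⟨((volume B * (volume I * L) + L * K) / volume I).toNNReal, fun φ hφ => ?_⟩
  rw [ENNReal.coe_toNNReal (ENNReal.div_ne_top (by finiteness) hI0)]
  set G := ∫⁻ x in Ω, ‖fderiv ℝ φ x‖ₑ
  have hφc := hφ.continuous
  have hdc : Continuous (fderiv ℝ φ) := hφ.continuous_fderiv one_ne_zero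
  set Ψ : EuclideanSpace ℝ (Fin (n + 1)) → ℝ≥0∞ := fun w => ∫⁻ z in B, ‖φ w - φ z‖ₑ
  have hΨm : Measurable Ψ := by
    apply Measurable.lintegral_prod_right' (f := fun q : EuclideanSpace ℝ (Fin (n + 1)) ×
      EuclideanSpace ℝ (Fin (n + 1)) => ‖φ q.1 - φ q.2‖ₑ)
    exact Continuous.measurable (by fun_prop)
  have step1 : ∫⁻ y in ball x δ, (∫⁻ s in I, ‖φ (y + s • e) - φ y‖ₑ) ∂μ ≤ volume I * (L * G) := by
    calc ∫⁻ y in ball x δ, (∫⁻ s in I, ‖φ (y + s • e) - φ y‖ₑ) ∂μ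
        ≤ ∫⁻ y in ball x δ, (volume I * ∫⁻ t in Ioc 0 H, ‖fderiv ℝ φ (y + t • e)‖ₑ) ∂μ := by
          gcongr with y
          rw [mul_comm, ← setLIntegral_const]
          refine setLIntegral_mono' measurableSet_Ioc fun s hs => ?_
          have hs0 : 0 ≤ s := by linarith [hs.1]
          refine (enorm_sub_le_lintegral_fderiv hφ y e hs0).trans ?_
          rw [← ofReal_norm, he, ENNReal.ofReal_one, one_mul]
          exact lintegral_mono_set (Ioc_subset_Ioc_right hs.2)
      _ = volume I * ∫⁻ y in ball x δ, (∫⁻ t in Ioc 0 H, ‖fderiv ℝ φ (y + t • e)‖ₑ) ∂μ :=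
          lintegral_const_mul' _ _ hIt
      _ ≤ _ := by
          gcongr
          exact hlines Ω (Ioc 0 H) (fun w => ‖fderiv ℝ φ w‖ₑ) hΩo.measurableSet measurableSet_Ioc
            hdc.enorm.measurable hmemΩ
  have step2 : ∫⁻ y in ball x δ, (∫⁻ s in I, Ψ (y + s • e)) ∂μ ≤ L * (K * G) :=
    (hlines B I Ψ measurableSet_ball measurableSet_Ioc hΨm (fun y _ hy => hmemB y hy)).trans
      (mul_le_mul_right (hK φ hφ) _)
  have key : volume I * ∫⁻ y in ball x δ, (∫⁻ z in B, ‖φ y - φ z‖ₑ) ∂μ ≤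
      volume B * (volume I * (L * G)) + L * (K * G) := by
    calc volume I * ∫⁻ y in ball x δ, (∫⁻ z in B, ‖φ y - φ z‖ₑ) ∂μ
        = ∫⁻ y in ball x δ, (∫⁻ s in I, Ψ y) ∂μ := by
          rw [← lintegral_const_mul' _ _ hIt]
          simp_rw [setLIntegral_const, mul_comm]
          rfl
      _ ≤ ∫⁻ y in ball x δ, (∫⁻ s in I, (volume B * ‖φ (y + s • e) - φ y‖ₑ + Ψ (y + s • e))) ∂μ := by
          gcongr with y s
          simp only [Ψ]
          rw [mul_comm, ← setLIntegral_const, ← lintegral_add_left measurable_const]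
          gcongr with z
          calc ‖φ y - φ z‖ₑ = ‖(φ y - φ (y + s • e)) + (φ (y + s • e) - φ z)‖ₑ := by ring_nf
            _ ≤ _ := (enorm_add_le _ _).trans_eq (by rw [enorm_sub_rev (φ y)])
      _ = ∫⁻ y in ball x δ, (volume B * (∫⁻ s in I, ‖φ (y + s • e) - φ y‖ₑ) +
            ∫⁻ s in I, Ψ (y + s • e)) ∂μ := by
          congr with y
          rw [lintegral_add_left, lintegral_const_mul' _ _ hBt]
          exact Continuous.measurable (by fun_prop (disch := exact hBt))
      _ = volume B * (∫⁻ y in ball x δ, (∫⁻ s in I, ‖φ (y + s • e) - φ y‖ₑ) ∂μ) +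
            ∫⁻ y in ball x δ, (∫⁻ s in I, Ψ (y + s • e)) ∂μ := by
          rw [lintegral_add_left, lintegral_const_mul' _ _ hBt]
          refine Measurable.const_mul ?_ _
          apply Measurable.lintegral_prod_right' (f := fun q : EuclideanSpace ℝ (Fin (n + 1)) ×
            ℝ => ‖φ (q.1 + q.2 • e) - φ q.1‖ₑ)
          exact Continuous.measurable (by fun_prop)
      _ ≤ _ := by gcongr
  rw [mul_comm, ← ENNReal.le_div_iff_mul_le (.inl hI0) (.inl hIt)] at key
  refine key.trans (le_of_eq ?_)
  simp only [div_eq_mul_inv]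
  ring

section Global

variable {n : ℕ} {Ω : Set (EuclideanSpace ℝ (Fin (n + 1)))}

lemma exists_finset_bdry_cover (hΩo : IsOpen Ω) (hΩb : IsBounded Ω) (hΩs : HasSmoothBoundary Ω) :
    ∃ (t : Finset (EuclideanSpace ℝ (Fin (n + 1)))) (r : EuclideanSpace ℝ (Fin (n + 1)) → ℝ),
      bdryMeasure Ω ≤ ∑ j ∈ t, (bdryMeasure Ω).restrict (ball j (r j)) ∧
      ∀ j ∈ t, bdryMeasure Ω (ball j (r j)) < ⊤ ∧ ∃ z, ∃ ρ > 0, ball z ρ ⊆ Ω ∧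
        OscBound Ω ((bdryMeasure Ω).restrict (ball j (r j))) (volume.restrict (ball z ρ)) := by
  have hcomp : IsCompact (frontier Ω) :=
    hΩb.isCompact_closure.of_isClosed_subset isClosed_frontier frontier_subset_closure
  choose! r hr hr' using fun x (hx : x ∈ frontier Ω) => exists_oscBound_near_bdry hΩo hΩs hx
  obtain ⟨t, ht, hcov⟩ := hcomp.elim_nhds_subcover (fun x => ball x (r x))
    (fun x hx => ball_mem_nhds x (hr x hx))
  refine ⟨t, r, ?_, fun j hj => ?_⟩
  · refine Measure.le_iff.2 fun A hA => ?_
    rw [Measure.finsetSum_apply]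
    simp_rw [Measure.restrict_apply hA]
    calc bdryMeasure Ω A ≤ bdryMeasure Ω (⋃ j ∈ t, A ∩ ball j (r j)) := by
          refine measure_mono_ae ?_
          filter_upwards [ae_mem_frontier Ω] with y hy hyA
          obtain ⟨j, hj, hyj⟩ := mem_iUnion₂.1 (hcov hy)
          exact mem_iUnion₂.2 ⟨j, hj, hyA, hyj⟩
      _ ≤ _ := measure_biUnion_finset_le _ _
  · obtain ⟨z, ρ, hρ, hz, hlt, hosc⟩ := hr' j (ht j hj)
    exact ⟨hlt, z, ρ, hρ, hz, hosc⟩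

lemma isFiniteMeasure_bdryMeasure (hΩo : IsOpen Ω) (hΩb : IsBounded Ω)
    (hΩs : HasSmoothBoundary Ω) : IsFiniteMeasure (bdryMeasure Ω) := by
  obtain ⟨t, r, hle, ht⟩ := exists_finset_bdry_cover hΩo hΩb hΩs
  refine ⟨(hle univ).trans_lt ?_⟩
  rw [Measure.finsetSum_apply]
  simp only [Measure.restrict_apply_univ]
  exact ENNReal.sum_lt_top.2 fun j hj => (ht j hj).1

lemma oscBound_bdry_ball (hΩo : IsOpen Ω) (hΩb : IsBounded Ω) (hΩc : IsPreconnected Ω)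
    (hΩs : HasSmoothBoundary Ω) {z : EuclideanSpace ℝ (Fin (n + 1))} {ρ : ℝ} (hρ : 0 < ρ)
    (hz : ball z ρ ⊆ Ω) : OscBound Ω (bdryMeasure Ω) (volume.restrict (ball z ρ)) := by
  have := isFiniteMeasure_bdryMeasure hΩo hΩb hΩs
  obtain ⟨t, r, hle, ht⟩ := exists_finset_bdry_cover hΩo hΩb hΩs
  refine (OscBound.finset_sum t _ fun j hj => ?_).mono_left hle
  obtain ⟨-, w, s, hs, hw, h⟩ := ht j hj
  have hfin : ∀ (x : EuclideanSpace ℝ (Fin (n + 1))) (r : ℝ),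
      IsFiniteMeasure (volume.restrict (ball x r)) := fun x r =>
    ⟨by simpa using measure_ball_lt_top⟩
  refine h.trans ?_ (OscBound.of_balls hΩo hΩc hs hρ hw hz)
  rw [Ne, Measure.restrict_eq_zero]
  exact (measure_ball_pos volume w hs).ne'

/-- A Poincaré inequality for the boundary values. -/
lemma oscBound_bdry_bdry (hΩo : IsOpen Ω) (hΩb : IsBounded Ω) (hΩc : IsConnected Ω)
    (hΩs : HasSmoothBoundary Ω) : OscBound Ω (bdryMeasure Ω) (bdryMeasure Ω) := by
  have := isFiniteMeasure_bdryMeasure hΩo hΩb hΩs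
  obtain ⟨z, hz⟩ := hΩc.nonempty
  obtain ⟨ρ, hρ, hzρ⟩ := Metric.isOpen_iff.1 hΩo z hz
  have hfin : IsFiniteMeasure (volume.restrict (ball z ρ)) := ⟨by simpa using measure_ball_lt_top⟩
  have h := oscBound_bdry_ball hΩo hΩb hΩc.isPreconnected hΩs hρ hzρ
  refine h.trans ?_ h.symm
  rw [Ne, Measure.restrict_eq_zero]
  exact (measure_ball_pos volume z hρ).ne'

/-- The trace inequality in `W^{1,1}`. -/
lemma exists_lintegral_bdry_le (hΩo : IsOpen Ω) (hΩb : IsBounded Ω) (hΩc : IsConnected Ω)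
    (hΩs : HasSmoothBoundary Ω) :
    ∃ C : ℝ≥0, ∀ φ : EuclideanSpace ℝ (Fin (n + 1)) → ℝ, ContDiff ℝ 1 φ →
      ∫⁻ y, ‖φ y‖ₑ ∂(bdryMeasure Ω) ≤ C * ∫⁻ x in Ω, (‖fderiv ℝ φ x‖ₑ + ‖φ x‖ₑ) := by
  have := isFiniteMeasure_bdryMeasure hΩo hΩb hΩs
  obtain ⟨z, hz⟩ := hΩc.nonempty
  obtain ⟨ρ, hρ, hzρ⟩ := Metric.isOpen_iff.1 hΩo z hz
  obtain ⟨C, hC⟩ := oscBound_bdry_ball hΩo hΩb hΩc.isPreconnected hΩs hρ hzρ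
  set μ := bdryMeasure Ω
  have hB0 : volume (ball z ρ) ≠ 0 := (measure_ball_pos volume z hρ).ne'
  have hBt : volume (ball z ρ) ≠ ⊤ := measure_ball_lt_top.ne
  refine ⟨((C + μ univ) / volume (ball z ρ)).toNNReal, fun φ hφ => ?_⟩
  rw [ENNReal.coe_toNNReal (ENNReal.div_ne_top (by finiteness) hB0)]
  have hφc := hφ.continuous
  rw [lintegral_add_right _ hφc.enorm.measurable]
  set G := ∫⁻ x in Ω, ‖fderiv ℝ φ x‖ₑ
  set A := ∫⁻ x in Ω, ‖φ x‖ₑ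
  have key : volume (ball z ρ) * ∫⁻ y, ‖φ y‖ₑ ∂μ ≤ C * G + μ univ * A := by
    calc volume (ball z ρ) * ∫⁻ y, ‖φ y‖ₑ ∂μ
        = ∫⁻ y, (∫⁻ w in ball z ρ, ‖φ y‖ₑ) ∂μ := by
          rw [← lintegral_const_mul' _ _ hBt]
          simp_rw [setLIntegral_const, mul_comm]
      _ ≤ ∫⁻ y, ((∫⁻ w in ball z ρ, ‖φ y - φ w‖ₑ) + ∫⁻ w in ball z ρ, ‖φ w‖ₑ) ∂μ := by
          gcongr with y
          rw [← lintegral_add_right _ hφc.enorm.measurable]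
          gcongr with w
          calc ‖φ y‖ₑ = ‖(φ y - φ w) + φ w‖ₑ := by ring_nf
            _ ≤ _ := enorm_add_le _ _
      _ ≤ C * G + μ univ * A := by
          rw [lintegral_add_right _ measurable_const, lintegral_const, mul_comm _ (μ univ)]
          gcongr
          · exact hC φ hφ
          · exact lintegral_mono_set hzρ
  rw [mul_comm, ← ENNReal.le_div_iff_mul_le (.inl hB0) (.inl hBt)] at key
  refine key.trans ?_
  rw [ENNReal.mul_comm_div, mul_comm, ← mul_div_assoc, mul_comm]
  gcongr
  calc C * G + μ univ * A ≤ C * (G + A) + μ univ * (G + A) := by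
        gcongr
        · exact le_self_add
        · exact le_add_self
    _ = _ := by ring

end Global

end Trace

section Sobolev

open scoped NNReal

lemma enorm_fderiv_mul_le {E : Type*} [NormedAddCommGroup E] [NormedSpace ℝ E] {a b : E → ℝ} {x : E}
    (ha : DifferentiableAt ℝ a x) (hb : DifferentiableAt ℝ b x) :
    ‖fderiv ℝ (fun y => a y * b y) x‖ₑ ≤ ‖a x‖ₑ * ‖fderiv ℝ b x‖ₑ + ‖b x‖ₑ * ‖fderiv ℝ a x‖ₑ := by
  rw [fderiv_fun_mul ha hb, ← enorm_smul, ← enorm_smul]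
  exact enorm_add_le (a x • fderiv ℝ b x) (b x • fderiv ℝ a x)

lemma exists_smoothTransition_deriv_le :
    ∃ K : ℝ≥0, ∀ t : ℝ, ‖deriv Real.smoothTransition t‖ₑ ≤ (Ioo (0 : ℝ) 1).indicator (fun _ => (K : ℝ≥0∞)) t := by
  have hc : Continuous (deriv Real.smoothTransition) :=
    (Real.smoothTransition.contDiff (n := 1)).continuous_deriv le_rfl
  obtain ⟨K, hK⟩ := isCompact_Icc.exists_bound_of_continuousOn
    (s := Icc (0 : ℝ) 1) hc.continuousOn
  refine ⟨K.toNNReal, fun t => ?_⟩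
  by_cases ht : t ∈ Ioo (0 : ℝ) 1
  · rw [indicator_of_mem ht, ← ofReal_norm]
    exact ENNReal.ofReal_le_ofReal (hK t (Ioo_subset_Icc_self ht))
  · rw [indicator_of_notMem ht]
    suffices deriv Real.smoothTransition t = 0 by simp [this]
    rw [mem_Ioo, not_and_or, not_lt, not_lt] at ht
    rcases ht with ht | ht
    · refine IsLocalMin.deriv_eq_zero (Eventually.of_forall fun s => ?_)
      rw [Real.smoothTransition.zero_of_nonpos ht]
      exact Real.smoothTransition.nonneg s
    · refine IsLocalMax.deriv_eq_zero (Eventually.of_forall fun s => ?_)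
      rw [Real.smoothTransition.one_of_one_le ht]
      exact Real.smoothTransition.le_one s

/-- A smooth cutoff function between two concentric balls, with bounded gradient. -/
lemma exists_cutoff {E : Type*} [NormedAddCommGroup E] [InnerProductSpace ℝ E]
    [FiniteDimensional ℝ E] (x : E) {r : ℝ} (hr : 0 < r) :
    ∃ (ζ : E → ℝ) (Z : ℝ≥0), ContDiff ℝ ∞ ζ ∧ HasCompactSupport ζ ∧ (∀ y, 0 ≤ ζ y) ∧
      (∀ y, ζ y ≤ 1) ∧ (∀ y ∈ ball x (r / 2), ζ y = 1) ∧ (∀ y, y ∉ ball x r → ζ y = 0) ∧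
      (∀ y ∈ ball x r, 0 < ζ y) ∧
      (∀ y, ‖fderiv ℝ ζ y‖ₑ ≤ Z) ∧ ∀ y, y ∉ ball x r → ‖fderiv ℝ ζ y‖ₑ = 0 := by
  let b : ContDiffBump x := ⟨r / 2, r, half_pos hr, half_lt_self hr⟩
  have hb : ContDiff ℝ ∞ b := b.contDiff
  have h0 : ∀ y, y ∉ ball x r → b y = 0 := by
    intro y hy
    have := b.support_eq
    rw [← Function.notMem_support, this]
    exact hy
  obtain ⟨Z, hZ⟩ := (hb.continuous_fderiv (by simp)).bounded_above_of_compact_support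
    (b.hasCompactSupport.fderiv (𝕜 := ℝ))
  refine ⟨b, Z.toNNReal, hb, b.hasCompactSupport, fun y => b.nonneg, fun y => b.le_one,
    fun y hy => b.one_of_mem_closedBall (ball_subset_closedBall hy), h0, fun y hy => ?_,
    fun y => ?_, fun y hy => ?_⟩
  · have := b.support_eq
    exact lt_of_le_of_ne b.nonneg (Ne.symm (by
      rw [← Function.mem_support, this]
      exact hy))
  · rw [← ofReal_norm]
    exact ENNReal.ofReal_le_ofReal (hZ y)
  · have : fderiv ℝ b y = 0 := IsLocalMin.fderiv_eq_zero (Eventually.of_forall fun s => by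
      rw [h0 y hy]
      exact b.nonneg)
    rw [this, ← ofReal_norm, norm_zero, ENNReal.ofReal_zero]

variable {N : ℕ} {Ω : Set (EuclideanSpace ℝ (Fin N))} {x : EuclideanSpace ℝ (Fin N)} {R : ℝ}
  {f : EuclideanSpace ℝ (Fin N) → ℝ} {i : Fin N} {σ c M : ℝ}

/-- The boundary layer of depth `1 / k`. -/
def bdryLayer (x : EuclideanSpace ℝ (Fin N)) (r : ℝ) (f : EuclideanSpace ℝ (Fin N) → ℝ) (k : ℝ) :
    Set (EuclideanSpace ℝ (Fin N)) :=
  {y | y ∈ ball x r ∧ -(1 / k) < f y ∧ f y < 0}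

lemma IsBdryChart.lintegral_layer_lines_le (h : IsBdryChart Ω x R f i σ c M) (hΩ : IsOpen Ω)
    {k : ℝ} {Ψ : EuclideanSpace ℝ (Fin N) → ℝ≥0∞} (hΨ : Measurable Ψ) :
    ∫⁻ y in bdryLayer x (R / 4) f k, ∫⁻ s in Ioc 0 (R / 4),
      Ψ (y + s • EuclideanSpace.single i σ) ≤ ENNReal.ofReal (1 / (k * c)) * ∫⁻ w in Ω, Ψ w := by
  have hR := h.R_pos
  have hc := h.c_pos
  have hfc := h.contDiff.continuous
  set e : EuclideanSpace ℝ (Fin N) := EuclideanSpace.single i σ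
  have he : ‖e‖ = 1 := h.norm_single_sigma
  set A := bdryLayer x (R / 4) f k with hA
  have hAm : MeasurableSet A := by
    refine (isOpen_ball.inter ?_).measurableSet
    exact (isOpen_lt continuous_const hfc).inter (isOpen_lt hfc continuous_const)
  have hsub : ball x (R / 4) ⊆ ball x R := ball_subset_ball (by linarith)
  have hmem : ∀ y ∈ A, ∀ s ∈ Ioc 0 (R / 4), y + s • e ∈ Ω := by
    intro y hy s hs
    have hyx := hy.1
    refine h.add_mem (hsub hyx) (subset_closure ((h.mem_iff y (hsub hyx)).2 hy.2.2)) hs.1 ?_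
    rw [mem_ball_iff_norm] at hyx ⊢
    calc ‖y + s • EuclideanSpace.single i σ - x‖ = ‖(y - x) + s • e‖ := by
          congr 1; simp only [e]; abel
      _ ≤ ‖y - x‖ + ‖s • e‖ := norm_add_le _ _
      _ = ‖y - x‖ + s := by rw [norm_smul, he, mul_one, Real.norm_of_nonneg hs.1.le]
      _ < R := by linarith [hs.2]
  calc ∫⁻ y in A, ∫⁻ s in Ioc 0 (R / 4), Ψ (y + s • e)
      = ∫⁻ s in Ioc 0 (R / 4), ∫⁻ y in A, Ψ (y + s • e) := by
        rw [lintegral_lintegral_swap]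
        apply Measurable.aemeasurable
        exact hΨ.comp (Continuous.measurable (by fun_prop))
    _ = ∫⁻ s in Ioc 0 (R / 4), ∫⁻ w in Ω, A.indicator 1 (w - s • e) * Ψ w := by
        refine setLIntegral_congr_fun measurableSet_Ioc fun s hs => ?_
        beta_reduce
        rw [← lintegral_indicator hAm, ← lintegral_indicator hΩ.measurableSet,
          ← lintegral_add_right_eq_self (Ω.indicator _) (s • e)]
        congr with y
        by_cases hy : y ∈ A
        · simp [hy, hmem y hy s hs]
        · by_cases hyΩ : y + s • e ∈ Ω <;> simp [hy, hyΩ]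
    _ = ∫⁻ w in Ω, ∫⁻ s in Ioc 0 (R / 4), A.indicator 1 (w - s • e) * Ψ w := by
        rw [lintegral_lintegral_swap]
        apply Measurable.aemeasurable
        refine Measurable.mul ?_ (hΨ.comp measurable_snd)
        exact (measurable_one.indicator hAm).comp (Continuous.measurable (by fun_prop))
    _ ≤ ∫⁻ w in Ω, ENNReal.ofReal (1 / (k * c)) * Ψ w := by
        gcongr with w
        have hind : Measurable fun s : ℝ => A.indicator (1 : EuclideanSpace ℝ (Fin N) → ℝ≥0∞) (w - s • e) :=
          (measurable_one.indicator hAm).comp (Continuous.measurable (by fun_prop))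
        rw [lintegral_mul_const _ hind]
        gcongr
        have hSm : MeasurableSet {s : ℝ | w - s • e ∈ A} :=
          hAm.preimage (Continuous.measurable (by fun_prop))
        calc ∫⁻ s in Ioc 0 (R / 4), A.indicator (1 : EuclideanSpace ℝ (Fin N) → ℝ≥0∞) (w - s • e)
            ≤ ∫⁻ s, {s : ℝ | w - s • e ∈ A}.indicator (1 : ℝ → ℝ≥0∞) s :=
              setLIntegral_le_lintegral _ _
          _ = volume {s : ℝ | w - s • e ∈ A} := lintegral_indicator_one hSm
          _ ≤ ediam {s : ℝ | w - s • e ∈ A} := Real.volume_le_diam _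
          _ ≤ _ := by
            refine ediam_le_of_forall_dist_le ?_
            have aux : ∀ s ∈ {s : ℝ | w - s • e ∈ A}, ∀ t ∈ {s : ℝ | w - s • e ∈ A}, s ≤ t →
                t - s ≤ 1 / (k * c) := by
              intro s hs t ht hst
              have heq : w - s • e = (w - t • e) + (t - s) • e := by module
              have h1 := h.apply_add_le (s := t - s) (hsub ht.1) (sub_nonneg.2 hst)
                (by rw [← heq]; exact hsub hs.1)
              rw [← heq] at h1
              have h2 := hs.2.1
              have h3 := ht.2.2
              rw [one_div, mul_inv, ← one_div, ← div_eq_mul_inv, le_div_iff₀ hc]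
              linarith
            intro s hs t ht
            rw [Real.dist_eq]
            rcases le_total s t with hst | hst
            · rw [abs_sub_comm, abs_of_nonneg (sub_nonneg.2 hst)]
              exact aux s hs t ht hst
            · rw [abs_of_nonneg (sub_nonneg.2 hst)]
              exact aux t ht s hs hst
    _ = _ := by rw [lintegral_const_mul _ hΨ]

/-- The mean of a function over a thin boundary layer is controlled by its `W^{1,1}` norm. -/
lemma IsBdryChart.exists_layer_le (h : IsBdryChart Ω x R f i σ c M) (hΩ : IsOpen Ω) :
    ∃ C : ℝ≥0, ∀ k : ℝ, 0 < k → ∀ φ : EuclideanSpace ℝ (Fin N) → ℝ, ContDiff ℝ 1 φ →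
      ENNReal.ofReal k * ∫⁻ y in bdryLayer x (R / 4) f k, ‖φ y‖ₑ ≤
        C * ∫⁻ z in Ω, (‖fderiv ℝ φ z‖ₑ + ‖φ z‖ₑ) := by
  have hR := h.R_pos
  have hc := h.c_pos
  set H := R / 4 with hH
  have hHpos : 0 < H := by positivity
  set e : EuclideanSpace ℝ (Fin N) := EuclideanSpace.single i σ
  have he : ‖e‖ₑ = 1 := by rw [← ofReal_norm, h.norm_single_sigma, ENNReal.ofReal_one]
  have hI : volume (Ioc 0 H) = ENNReal.ofReal H := by simp
  have hI0 : ENNReal.ofReal H ≠ 0 := by simpa using hHpos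
  refine ⟨((1 + ENNReal.ofReal H) * ENNReal.ofReal (1 / c) / ENNReal.ofReal H).toNNReal,
    fun k hk φ hφ => ?_⟩
  rw [ENNReal.coe_toNNReal (ENNReal.div_ne_top (by finiteness) hI0)]
  have hφc := hφ.continuous
  have hdc : Continuous (fderiv ℝ φ) := hφ.continuous_fderiv one_ne_zero
  set Ψ : EuclideanSpace ℝ (Fin N) → ℝ≥0∞ :=
    fun z => ‖φ z‖ₑ + ENNReal.ofReal H * ‖fderiv ℝ φ z‖ₑ
  have hΨ : Measurable Ψ := hφc.enorm.measurable.add (hdc.enorm.measurable.const_mul _)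
  have h1 := h.lintegral_layer_lines_le hΩ (k := k) hΨ
  set A := bdryLayer x H f k
  set D := ∫⁻ z in Ω, (‖fderiv ℝ φ z‖ₑ + ‖φ z‖ₑ)
  have h2 : ENNReal.ofReal H * ∫⁻ y in A, ‖φ y‖ₑ ≤ ENNReal.ofReal (1 / (k * c)) * ∫⁻ w in Ω, Ψ w := by
    refine le_trans ?_ h1
    rw [← lintegral_const_mul' _ _ ENNReal.ofReal_ne_top]
    gcongr with y
    have hm1 : Measurable fun s : ℝ => ‖φ (y + s • e)‖ₑ := Continuous.measurable (by fun_prop)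
    have hm2 : Measurable fun s : ℝ => ‖fderiv ℝ φ (y + s • e)‖ₑ := Continuous.measurable (by fun_prop)
    calc ENNReal.ofReal H * ‖φ y‖ₑ = ∫⁻ s in Ioc 0 H, ‖φ y‖ₑ := by
          rw [setLIntegral_const, hI, mul_comm]
      _ ≤ ∫⁻ s in Ioc 0 H, (‖φ (y + s • e)‖ₑ + ∫⁻ t in Ioc 0 H, ‖fderiv ℝ φ (y + t • e)‖ₑ) := by
          refine setLIntegral_mono' measurableSet_Ioc fun s hs => ?_
          calc ‖φ y‖ₑ = ‖φ (y + s • e) - (φ (y + s • e) - φ y)‖ₑ := by ring_nf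
            _ ≤ ‖φ (y + s • e)‖ₑ + ‖φ (y + s • e) - φ y‖ₑ := enorm_sub_le
            _ ≤ _ := by
              gcongr
              refine (enorm_sub_le_lintegral_fderiv hφ y e hs.1.le).trans ?_
              rw [he, one_mul]
              exact lintegral_mono_set (Ioc_subset_Ioc_right hs.2)
      _ = ∫⁻ s in Ioc 0 H, Ψ (y + s • e) := by
          simp only [Ψ]
          rw [lintegral_add_left hm1, lintegral_add_left hm1, setLIntegral_const, hI,
            lintegral_const_mul _ hm2, mul_comm]
  have h3 : ∫⁻ w in Ω, Ψ w ≤ (1 + ENNReal.ofReal H) * D := by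
    rw [← lintegral_const_mul' _ _ (by finiteness)]
    gcongr with w
    simp only [Ψ]
    rw [add_mul, one_mul]
    gcongr
    · exact le_add_self
    · exact le_self_add
  have hkc : ENNReal.ofReal k * ENNReal.ofReal (1 / (k * c)) = ENNReal.ofReal (1 / c) := by
    rw [← ENNReal.ofReal_mul hk.le]
    congr 1
    field_simp
  have key : (ENNReal.ofReal k * ∫⁻ y in A, ‖φ y‖ₑ) * ENNReal.ofReal H ≤
      (1 + ENNReal.ofReal H) * ENNReal.ofReal (1 / c) * D := by
    calc (ENNReal.ofReal k * ∫⁻ y in A, ‖φ y‖ₑ) * ENNReal.ofReal H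
        = ENNReal.ofReal k * (ENNReal.ofReal H * ∫⁻ y in A, ‖φ y‖ₑ) := by ring
      _ ≤ ENNReal.ofReal k * (ENNReal.ofReal (1 / (k * c)) * ((1 + ENNReal.ofReal H) * D)) := by
          exact mul_le_mul_right (h2.trans (mul_le_mul_right h3 _)) _
      _ = (ENNReal.ofReal k * ENNReal.ofReal (1 / (k * c))) * ((1 + ENNReal.ofReal H) * D) := by ring
      _ = _ := by rw [hkc]; ring
  rw [← ENNReal.le_div_iff_mul_le (.inl hI0) (.inl ENNReal.ofReal_ne_top)] at key
  refine key.trans (le_of_eq ?_)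
  simp only [div_eq_mul_inv]
  ring

/-- The Gagliardo-Nirenberg-Sobolev inequality in `W^{1,1}`, near an interior point. -/
lemma exists_sobolev_near_interior (hΩ : IsOpen Ω) (hx : x ∈ Ω) {P : ℝ}
    (hP : Real.HolderConjugate N P) :
    ∃ r > 0, ∃ C : ℝ≥0, ∀ φ : EuclideanSpace ℝ (Fin N) → ℝ, ContDiff ℝ 1 φ →
      ∫⁻ y in ball x r ∩ Ω, ‖φ y‖ₑ ^ P ≤ C * (∫⁻ z in Ω, (‖fderiv ℝ φ z‖ₑ + ‖φ z‖ₑ)) ^ P := by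
  obtain ⟨r, hr, hrΩ⟩ := Metric.isOpen_iff.1 hΩ x hx
  obtain ⟨ζ, Z, hζ, hζc, hζ0, hζ1, hζin, hζout, -, hZ, hdout⟩ := exists_cutoff x hr
  have hP0 : 0 ≤ P := hP.symm.nonneg
  set C₀ := lintegralPowLePowLIntegralFDerivConst (volume : Measure (EuclideanSpace ℝ (Fin N))) P
  refine ⟨r / 2, half_pos hr, C₀ * (1 + Z) ^ P, fun φ hφ => ?_⟩
  have hζ1' : ContDiff ℝ 1 ζ := hζ.of_le (by simp)
  have hφd : Differentiable ℝ φ := hφ.differentiable one_ne_zero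
  have hζd : Differentiable ℝ ζ := hζ.differentiable (by simp)
  have hζe : ∀ y, ‖ζ y‖ₑ ≤ 1 := fun y => by
    rw [← ofReal_norm, Real.norm_of_nonneg (hζ0 y)]
    simpa using hζ1 y
  have hgns := lintegral_pow_le_pow_lintegral_fderiv
    (volume : Measure (EuclideanSpace ℝ (Fin N))) (u := fun y => ζ y * φ y) (hζ1'.mul hφ)
    hζc.mul_right (p := P) (by simpa using hP)
  calc ∫⁻ y in ball x (r / 2) ∩ Ω, ‖φ y‖ₑ ^ P
      ≤ ∫⁻ y in ball x (r / 2), ‖φ y‖ₑ ^ P := lintegral_mono_set inter_subset_left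
    _ = ∫⁻ y in ball x (r / 2), ‖ζ y * φ y‖ₑ ^ P := by
        refine setLIntegral_congr_fun measurableSet_ball fun y hy => ?_
        simp [hζin y hy]
    _ ≤ ∫⁻ y, ‖ζ y * φ y‖ₑ ^ P := setLIntegral_le_lintegral _ _
    _ ≤ C₀ * (∫⁻ y, ‖fderiv ℝ (fun y => ζ y * φ y) y‖ₑ) ^ P := hgns
    _ ≤ C₀ * ((1 + Z) * ∫⁻ z in Ω, (‖fderiv ℝ φ z‖ₑ + ‖φ z‖ₑ)) ^ P := by
        gcongr
        rw [← lintegral_const_mul' _ _ (by finiteness), ← lintegral_indicator hΩ.measurableSet]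
        gcongr with y
        by_cases hy : y ∈ ball x r
        · rw [indicator_of_mem (hrΩ hy)]
          refine (enorm_fderiv_mul_le (hζd y) (hφd y)).trans ?_
          calc ‖ζ y‖ₑ * ‖fderiv ℝ φ y‖ₑ + ‖φ y‖ₑ * ‖fderiv ℝ ζ y‖ₑ
              ≤ 1 * ‖fderiv ℝ φ y‖ₑ + ‖φ y‖ₑ * Z := by gcongr; exacts [hζe y, hZ y]
            _ ≤ (1 + Z) * ‖fderiv ℝ φ y‖ₑ + ‖φ y‖ₑ * (1 + Z) := by
              gcongr; exacts [le_self_add, le_add_self]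
            _ = _ := by ring
        · refine (enorm_fderiv_mul_le (hζd y) (hφd y)).trans ?_
          simp [hζout y hy, hdout y hy]
    _ = _ := by
        rw [ENNReal.mul_rpow_of_nonneg _ _ hP0]
        push_cast
        rw [ENNReal.coe_rpow_of_nonneg _ hP0]
        push_cast
        ring

/-- The Gagliardo-Nirenberg-Sobolev inequality in `W^{1,1}`, near a boundary point. -/
lemma exists_sobolev_near_bdry (hΩ : IsOpen Ω) (hΩs : HasSmoothBoundary Ω)
    (hx : x ∈ frontier Ω) {P : ℝ} (hP : Real.HolderConjugate N P) :
    ∃ r > 0, ∃ C : ℝ≥0, ∀ φ : EuclideanSpace ℝ (Fin N) → ℝ, ContDiff ℝ 1 φ →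
      ∫⁻ y in ball x r ∩ Ω, ‖φ y‖ₑ ^ P ≤ C * (∫⁻ z in Ω, (‖fderiv ℝ φ z‖ₑ + ‖φ z‖ₑ)) ^ P := by
  obtain ⟨R, f, i, σ, c, M, h⟩ := exists_isBdryChart hΩs hx
  obtain ⟨C₁, hC₁⟩ := h.exists_layer_le hΩ
  obtain ⟨K, hK⟩ := exists_smoothTransition_deriv_le
  have hR := h.R_pos
  have hr : 0 < R / 4 := by positivity
  obtain ⟨ζ, Z, hζ, hζc, hζ0, hζ1, hζin, hζout, -, hZ, hdout⟩ := exists_cutoff x hr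
  have hsub : ball x (R / 4) ⊆ ball x R := ball_subset_ball (by linarith)
  have hP0 : 0 ≤ P := hP.symm.nonneg
  set C₀ := lintegralPowLePowLIntegralFDerivConst (volume : Measure (EuclideanSpace ℝ (Fin N))) P
  set M' : ℝ≥0 := M.toNNReal
  have hM' : ∀ y ∈ ball x R, ‖fderiv ℝ f y‖ₑ ≤ M' := fun y hy => by
    rw [← ofReal_norm]
    exact ENNReal.ofReal_le_ofReal (h.norm_fderiv_le y hy)
  refine ⟨R / 4 / 2, half_pos hr, C₀ * (1 + Z + K * M' * C₁) ^ P, fun φ hφ => ?_⟩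
  have hφd : Differentiable ℝ φ := hφ.differentiable one_ne_zero
  have hφc := hφ.continuous
  have hζd : Differentiable ℝ ζ := hζ.differentiable (by simp)
  have hfc := h.contDiff.continuous
  have hfd : Differentiable ℝ f := h.contDiff.differentiable (by simp)
  have hζe : ∀ y, ‖ζ y‖ₑ ≤ 1 := fun y => by
    rw [← ofReal_norm, Real.norm_of_nonneg (hζ0 y)]
    simpa using hζ1 y
  set D := ∫⁻ z in Ω, (‖fderiv ℝ φ z‖ₑ + ‖φ z‖ₑ) with hD
  set θ : ℕ → EuclideanSpace ℝ (Fin N) → ℝ :=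
    fun k y => Real.smoothTransition (-(((k : ℝ) + 1) * f y)) with hθ
  have hθs : ∀ k, ContDiff ℝ 1 (θ k) := fun k =>
    Real.smoothTransition.contDiff.comp ((contDiff_const.mul (h.contDiff.of_le (by simp))).neg)
  have hθe : ∀ k y, ‖θ k y‖ₑ ≤ 1 := fun k y => by
    rw [← ofReal_norm, Real.norm_of_nonneg (Real.smoothTransition.nonneg _)]
    simpa using Real.smoothTransition.le_one _
  have hθd : ∀ k y, ‖fderiv ℝ (θ k) y‖ₑ ≤
      (Ioo (0 : ℝ) 1).indicator (fun _ => (K : ℝ≥0∞)) (-(((k : ℝ) + 1) * f y)) *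
        (ENNReal.ofReal ((k : ℝ) + 1) * ‖fderiv ℝ f y‖ₑ) := by
    intro k y
    have hst : DifferentiableAt ℝ Real.smoothTransition (-(((k : ℝ) + 1) * f y)) :=
      (Real.smoothTransition.contDiff (n := 1)).differentiable one_ne_zero _
    have h1 : HasFDerivAt (fun y => -(((k : ℝ) + 1) * f y)) (-(((k : ℝ) + 1) • fderiv ℝ f y)) y :=
      ((hfd y).hasFDerivAt.const_mul _).neg
    have h2 := hst.hasDerivAt.comp_hasFDerivAt y h1
    have h3 : fderiv ℝ (θ k) y = deriv Real.smoothTransition (-(((k : ℝ) + 1) * f y)) •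
        -(((k : ℝ) + 1) • fderiv ℝ f y) := h2.fderiv
    rw [h3, enorm_smul, enorm_neg, enorm_smul]
    gcongr
    · exact hK _
    · rw [← ofReal_norm, Real.norm_of_nonneg (by positivity)]
  set w : ℕ → EuclideanSpace ℝ (Fin N) → ℝ := fun k y => ζ y * (θ k y * φ y) with hw
  have hws : ∀ k, ContDiff ℝ 1 (w k) := fun k =>
    (hζ.of_le (by simp)).mul ((hθs k).mul hφ)
  have hwd : ∀ k y, ‖fderiv ℝ (w k) y‖ₑ ≤
      Ω.indicator (fun y => (1 + Z) * (‖fderiv ℝ φ y‖ₑ + ‖φ y‖ₑ)) y +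
      (bdryLayer x (R / 4) f (k + 1)).indicator
        (fun y => K * M' * (ENNReal.ofReal ((k : ℝ) + 1) * ‖φ y‖ₑ)) y := by
    intro k y
    have hk : (0 : ℝ) < k + 1 := by positivity
    have hθdiff : Differentiable ℝ (θ k) := (hθs k).differentiable one_ne_zero
    have hbound : ‖fderiv ℝ (w k) y‖ₑ ≤ ‖ζ y‖ₑ * (‖θ k y‖ₑ * ‖fderiv ℝ φ y‖ₑ +
        ‖φ y‖ₑ * ‖fderiv ℝ (θ k) y‖ₑ) + ‖θ k y‖ₑ * ‖φ y‖ₑ * ‖fderiv ℝ ζ y‖ₑ := by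
      refine (enorm_fderiv_mul_le (hζd y) ((hθdiff y).mul (hφd y))).trans ?_
      gcongr
      · exact enorm_fderiv_mul_le (hθdiff y) (hφd y)
      · exact (enorm_mul _ _).le
    refine hbound.trans ?_
    by_cases hy : y ∈ ball x (R / 4)
    swap
    · simp [hζout y hy, hdout y hy]
    by_cases hyΩ : y ∈ Ω
    · have hfy := (h.mem_iff y (hsub hy)).1 hyΩ
      rw [indicator_of_mem hyΩ]
      have hfirst : ‖ζ y‖ₑ * (‖θ k y‖ₑ * ‖fderiv ℝ φ y‖ₑ + ‖φ y‖ₑ * ‖fderiv ℝ (θ k) y‖ₑ) +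
          ‖θ k y‖ₑ * ‖φ y‖ₑ * ‖fderiv ℝ ζ y‖ₑ ≤
          (1 + Z) * (‖fderiv ℝ φ y‖ₑ + ‖φ y‖ₑ) + ‖φ y‖ₑ * ‖fderiv ℝ (θ k) y‖ₑ := by
        calc _ ≤ 1 * (1 * ‖fderiv ℝ φ y‖ₑ + ‖φ y‖ₑ * ‖fderiv ℝ (θ k) y‖ₑ) +
              1 * ‖φ y‖ₑ * Z := by
              gcongr
              exacts [hζe y, hθe k y, hθe k y, hZ y]
          _ = ‖fderiv ℝ φ y‖ₑ + ‖φ y‖ₑ * Z + ‖φ y‖ₑ * ‖fderiv ℝ (θ k) y‖ₑ := by ring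
          _ ≤ (1 + Z) * ‖fderiv ℝ φ y‖ₑ + ‖φ y‖ₑ * (1 + Z) + ‖φ y‖ₑ * ‖fderiv ℝ (θ k) y‖ₑ := by
              gcongr
              · exact le_mul_of_one_le_left zero_le le_self_add
              · exact le_add_self
          _ = _ := by ring
      refine hfirst.trans ?_
      gcongr
      have hθy := hθd k y
      by_cases hin : -(((k : ℝ) + 1) * f y) ∈ Ioo (0 : ℝ) 1
      · have hyl : y ∈ bdryLayer x (R / 4) f (k + 1) := by
          refine ⟨hy, ?_, hfy⟩
          have := hin.2
          rw [neg_lt, one_div, ← mul_lt_mul_iff_right₀ hk, mul_inv_cancel₀ hk.ne']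
          linarith
        rw [indicator_of_mem hyl]
        rw [indicator_of_mem hin] at hθy
        calc ‖φ y‖ₑ * ‖fderiv ℝ (θ k) y‖ₑ
            ≤ ‖φ y‖ₑ * (K * (ENNReal.ofReal ((k : ℝ) + 1) * M')) := by
              gcongr
              refine hθy.trans ?_
              gcongr
              exact hM' y (hsub hy)
          _ = _ := by ring
      · rw [indicator_of_notMem hin, zero_mul] at hθy
        simp [le_zero_iff.1 hθy]
    · have hfy : 0 ≤ f y := not_lt.1 fun hlt => hyΩ ((h.mem_iff y (hsub hy)).2 hlt)
      have harg : -(((k : ℝ) + 1) * f y) ≤ 0 := by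
        have := mul_nonneg hk.le hfy
        linarith
      have hθ0 : θ k y = 0 := Real.smoothTransition.zero_of_nonpos harg
      have hθy := hθd k y
      rw [indicator_of_notMem (fun hin => absurd hin.1 (not_lt.2 harg)), zero_mul] at hθy
      simp [hθ0, le_zero_iff.1 hθy]
  have hint : ∀ k, ∫⁻ y, ‖fderiv ℝ (w k) y‖ₑ ≤ (1 + Z + K * M' * C₁) * D := by
    intro k
    have hk : (0 : ℝ) < k + 1 := by positivity
    have hlm : MeasurableSet (bdryLayer x (R / 4) f (k + 1)) :=
      (isOpen_ball.inter ((isOpen_lt continuous_const hfc).inter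
        (isOpen_lt hfc continuous_const))).measurableSet
    refine (lintegral_mono (hwd k)).trans ?_
    rw [lintegral_add_right, lintegral_indicator hΩ.measurableSet, lintegral_indicator hlm,
      lintegral_const_mul' _ _ (by finiteness), lintegral_const_mul' _ _ (by finiteness),
      lintegral_const_mul' _ _ (by finiteness)]
    · rw [add_mul (1 + (Z : ℝ≥0∞)), mul_assoc (K * M' : ℝ≥0∞) C₁ D]
      exact add_le_add le_rfl (mul_le_mul_right (hC₁ _ hk φ hφ) _)
    · refine Measurable.indicator ?_ hlm
      exact (hφc.enorm.measurable.const_mul _).const_mul _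
  have hgns : ∀ k, ∫⁻ y, ‖w k y‖ₑ ^ P ≤ C₀ * ((1 + Z + K * M' * C₁) * D) ^ P := by
    intro k
    refine (lintegral_pow_le_pow_lintegral_fderiv
      (volume : Measure (EuclideanSpace ℝ (Fin N))) (hws k) hζc.mul_right (p := P)
      (by simpa using hP)).trans ?_
    gcongr
    exact hint k
  calc ∫⁻ y in ball x (R / 4 / 2) ∩ Ω, ‖φ y‖ₑ ^ P
      = ∫⁻ y in ball x (R / 4 / 2) ∩ Ω, liminf (fun k => ‖w k y‖ₑ ^ P) atTop := by
        refine setLIntegral_congr_fun (measurableSet_ball.inter hΩ.measurableSet) fun y hy => ?_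
        refine (Tendsto.liminf_eq ?_).symm
        refine tendsto_const_nhds.congr' ?_
        have hyR : y ∈ ball x R := hsub (ball_subset_ball (by linarith) hy.1)
        have hfy := (h.mem_iff y hyR).1 hy.2
        obtain ⟨k₀, hk₀⟩ := exists_nat_ge (1 / -f y)
        filter_upwards [eventually_ge_atTop k₀] with k hk
        have h1 : (k₀ : ℝ) ≤ k := by exact_mod_cast hk
        have h2 : θ k y = 1 := by
          refine Real.smoothTransition.one_of_one_le ?_
          rw [div_le_iff₀ (by linarith)] at hk₀
          nlinarith
        simp [hw, h2, hζin y hy.1]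
    _ ≤ ∫⁻ y, liminf (fun k => ‖w k y‖ₑ ^ P) atTop := setLIntegral_le_lintegral _ _
    _ ≤ liminf (fun k => ∫⁻ y, ‖w k y‖ₑ ^ P) atTop := lintegral_liminf_le fun k =>
        (hws k).continuous.enorm.measurable.pow_const _
    _ ≤ C₀ * ((1 + Z + K * M' * C₁) * D) ^ P :=
        liminf_le_of_le (by isBoundedDefault) fun b hb => by
          obtain ⟨k, hk⟩ := hb.exists
          exact hk.trans (hgns k)
    _ = _ := by
        rw [ENNReal.mul_rpow_of_nonneg _ _ hP0]
        push_cast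
        rw [ENNReal.coe_rpow_of_nonneg _ hP0]
        push_cast
        ring

/-- The Gagliardo-Nirenberg-Sobolev inequality in `W^{1,1}(Ω)`. -/
lemma exists_sobolev (hΩ : IsOpen Ω) (hΩb : IsBounded Ω) (hΩs : HasSmoothBoundary Ω) {P : ℝ}
    (hP : Real.HolderConjugate N P) :
    ∃ C : ℝ≥0, ∀ φ : EuclideanSpace ℝ (Fin N) → ℝ, ContDiff ℝ 1 φ →
      ∫⁻ y in Ω, ‖φ y‖ₑ ^ P ≤ C * (∫⁻ z in Ω, (‖fderiv ℝ φ z‖ₑ + ‖φ z‖ₑ)) ^ P := by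
  have hloc : ∀ x ∈ closure Ω, ∃ r > 0, ∃ C : ℝ≥0, ∀ φ : EuclideanSpace ℝ (Fin N) → ℝ,
      ContDiff ℝ 1 φ → ∫⁻ y in ball x r ∩ Ω, ‖φ y‖ₑ ^ P ≤
        C * (∫⁻ z in Ω, (‖fderiv ℝ φ z‖ₑ + ‖φ z‖ₑ)) ^ P := by
    intro x hx
    by_cases hxΩ : x ∈ Ω
    · exact exists_sobolev_near_interior hΩ hxΩ hP
    · refine exists_sobolev_near_bdry hΩ hΩs ?_ hP
      rw [hΩ.frontier_eq]
      exact ⟨hx, hxΩ⟩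
  choose! r hr C hC using hloc
  obtain ⟨t, ht, hcov⟩ := hΩb.isCompact_closure.elim_nhds_subcover (fun x => ball x (r x))
    (fun x hx => ball_mem_nhds x (hr x hx))
  refine ⟨∑ j ∈ t, C j, fun φ hφ => ?_⟩
  calc ∫⁻ y in Ω, ‖φ y‖ₑ ^ P ≤ ∫⁻ y in ⋃ j ∈ t, ball j (r j) ∩ Ω, ‖φ y‖ₑ ^ P := by
        refine lintegral_mono_set fun y hy => ?_
        obtain ⟨j, hj, hyj⟩ := mem_iUnion₂.1 (hcov (subset_closure hy))
        exact mem_iUnion₂.2 ⟨j, hj, hyj, hy⟩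
    _ ≤ ∑ j ∈ t, ∫⁻ y in ball j (r j) ∩ Ω, ‖φ y‖ₑ ^ P := by
        refine (lintegral_mono' (?_ : _ ≤ ∑ j ∈ t, volume.restrict (ball j (r j) ∩ Ω)) le_rfl).trans
          (lintegral_finsetSum_measure _ _ _).le
        refine Measure.le_iff.2 fun A hA => ?_
        rw [Measure.finsetSum_apply, Measure.restrict_apply hA, inter_iUnion₂]
        simp_rw [Measure.restrict_apply hA]
        exact measure_biUnion_finset_le _ _
    _ ≤ ∑ j ∈ t, C j * (∫⁻ z in Ω, (‖fderiv ℝ φ z‖ₑ + ‖φ z‖ₑ)) ^ P :=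
        Finset.sum_le_sum fun j hj => hC j (ht j hj) φ hφ
    _ = _ := by rw [← Finset.sum_mul]; push_cast; rfl

end Sobolev

section SobolevTrace

open scoped NNReal

lemma SubcriticalTrace.exists_exponent {N : ℕ} {p q : ℝ} (hsub : SubcriticalTrace N p q)
    (hp : 1 < p) (hq : 1 ≤ q) :
    ∃ s, 1 < s ∧ q < s ∧ s * N ≤ p * (N - 1 + s) := by
  by_cases hpN : p < N
  · have h1 := hsub hpN
    refine ⟨p * (N - 1) / (N - p), hq.trans_lt h1, h1, le_of_eq ?_⟩
    have : (N : ℝ) - p ≠ 0 := by linarith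
    field_simp
    ring
  · have hN : (0 : ℝ) ≤ N := N.cast_nonneg
    refine ⟨q + 1, by linarith, by linarith, ?_⟩
    push Not at hpN
    rcases Nat.eq_zero_or_pos N with h0 | h0
    · subst h0
      simp only [Nat.cast_zero, mul_zero]
      nlinarith
    · have : (1 : ℝ) ≤ N := by exact_mod_cast h0
      nlinarith

variable {n : ℕ} {Ω : Set (EuclideanSpace ℝ (Fin (n + 1)))}

/-- The Sobolev trace inequality for smooth functions, with the critical exponent. -/
lemma exists_sobolev_trace_critical (hn : 1 ≤ n) (hΩo : IsOpen Ω) (hΩb : IsBounded Ω)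
    (hΩc : IsConnected Ω) (hΩs : HasSmoothBoundary Ω) {s : ℝ} (hs : 1 < s) :
    ∃ C : ℝ≥0, ∀ φ : EuclideanSpace ℝ (Fin (n + 1)) → ℝ, ContDiff ℝ 1 φ →
      ∫⁻ y, ‖φ y‖ₑ ^ s ∂(bdryMeasure Ω) ≤
        C * ((∫⁻ x in Ω, (‖fderiv ℝ φ x‖ₑ + ‖φ x‖ₑ) ^ (s * (n + 1) / (n + s))) ^
          (1 / (s * (n + 1) / (n + s)))) ^ s := by
  have hn' : (1 : ℝ) ≤ n := by exact_mod_cast hn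
  set P : ℝ := (n + 1) / n with hPdef
  have hP0 : 0 < P := by positivity
  have hP : Real.HolderConjugate ((n + 1 : ℕ) : ℝ) P := by
    rw [Real.holderConjugate_iff]
    push_cast
    refine ⟨by linarith, ?_⟩
    rw [hPdef]
    field_simp
    ring
  set t : ℝ := s * (n + 1) / (n + s) with ht
  set t' : ℝ := s * P / (s - 1) with ht'
  have hs1 : 0 < s - 1 := by linarith
  have htt : Real.HolderConjugate t' t := by
    refine Real.HolderConjugate.symm ?_
    rw [Real.holderConjugate_iff]
    constructor
    · rw [ht, one_lt_div (by positivity)]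
      nlinarith
    · rw [ht, ht', hPdef]
      field_simp
      ring
  obtain ⟨C₁, hC₁⟩ := exists_sobolev hΩo hΩb hΩs hP
  obtain ⟨C₂, hC₂⟩ := exists_lintegral_bdry_le hΩo hΩb hΩc hΩs
  set S : ℝ≥0 := s.toNNReal
  have hS : (S : ℝ) = s := Real.coe_toNNReal _ (by linarith)
  have hS1 : 1 < S := by rw [← NNReal.coe_lt_coe, hS]; exact hs
  set κ : ℝ≥0 := C₁ * S ^ P
  refine ⟨C₂ * S * κ ^ ((s - 1) / P), fun φ hφ => ?_⟩
  have hφc := hφ.continuous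
  have hdc : Continuous (fderiv ℝ φ) := hφ.continuous_fderiv one_ne_zero
  set A := (∫⁻ x in Ω, (‖fderiv ℝ φ x‖ₑ + ‖φ x‖ₑ) ^ t) ^ (1 / t) with hA
  set Y := ∫⁻ x in Ω, ‖φ x‖ₑ ^ (s * P) with hY
  have hYtop : Y ≠ ⊤ := by
    obtain ⟨B, hB⟩ := hΩb.isCompact_closure.exists_bound_of_continuousOn hφc.continuousOn
    have : Y ≤ ∫⁻ x in Ω, ENNReal.ofReal B ^ (s * P) := by
      refine setLIntegral_mono' hΩo.measurableSet fun x hx => ?_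
      gcongr
      rw [← ofReal_norm]
      exact ENNReal.ofReal_le_ofReal (hB x (subset_closure hx))
    refine (this.trans_lt ?_).ne
    rw [setLIntegral_const]
    exact ENNReal.mul_lt_top (ENNReal.rpow_lt_top_of_nonneg (by positivity) ENNReal.ofReal_ne_top)
      hΩb.measure_lt_top
  set h : EuclideanSpace ℝ (Fin (n + 1)) → ℝ := fun x => ‖φ x‖ ^ s with hh
  have hhs : ContDiff ℝ 1 h := hφ.norm_rpow hs
  have hhe : ∀ x, ‖h x‖ₑ = ‖φ x‖ₑ ^ s := by
    intro x
    rw [hh, ← ofReal_norm, Real.norm_of_nonneg (by positivity),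
      ← ENNReal.ofReal_rpow_of_nonneg (norm_nonneg _) (by linarith), ofReal_norm]
  have hhd : ∀ x, ‖fderiv ℝ h x‖ₑ + ‖h x‖ₑ ≤
      S * (‖φ x‖ₑ ^ (s - 1) * (‖fderiv ℝ φ x‖ₑ + ‖φ x‖ₑ)) := by
    intro x
    have h1 := enorm_fderiv_norm_rpow_le (hφ.differentiable one_ne_zero) (x := x) hS1
    rw [hS] at h1
    have h2 : ‖φ x‖ₑ ^ s = ‖φ x‖ₑ ^ (s - 1) * ‖φ x‖ₑ := by
      conv_rhs => rw [← ENNReal.rpow_one ‖φ x‖ₑ, ← ENNReal.rpow_mul]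
      rw [one_mul, ← ENNReal.rpow_add_of_nonneg _ _ hs1.le zero_le_one, sub_add_cancel]
    rw [hhe, h2]
    calc _ ≤ S * ‖φ x‖ₑ ^ (s - 1) * ‖fderiv ℝ φ x‖ₑ + S * (‖φ x‖ₑ ^ (s - 1) * ‖φ x‖ₑ) := by
          refine add_le_add h1 (le_mul_of_one_le_left zero_le ?_)
          exact_mod_cast hS1.le
      _ = _ := by ring
  have hint : ∫⁻ x in Ω, (‖fderiv ℝ h x‖ₑ + ‖h x‖ₑ) ≤ S * (Y ^ (1 / t') * A) := by
    refine (lintegral_mono hhd).trans ?_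
    rw [lintegral_const_mul' _ _ ENNReal.coe_ne_top]
    refine mul_le_mul_right ?_ _
    refine (ENNReal.lintegral_mul_le_Lp_mul_Lq _ htt
      (hφc.enorm.measurable.pow_const _).aemeasurable
      (hdc.enorm.measurable.add hφc.enorm.measurable).aemeasurable).trans (le_of_eq ?_)
    simp_rw [← ENNReal.rpow_mul]
    congr 4
    ext x
    congr 1
    rw [ht']
    field_simp
  have hYle : Y ^ (1 / s) ≤ κ * A ^ P := by
    have h1 := hC₁ h hhs
    simp_rw [hhe, ← ENNReal.rpow_mul] at h1
    have h2 : Y ≤ κ * A ^ P * Y ^ ((s - 1) / s) := by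
      refine h1.trans ?_
      have h3 : (∫⁻ z in Ω, (‖fderiv ℝ h z‖ₑ + ‖φ z‖ₑ ^ s)) ^ P ≤ (S * (Y ^ (1 / t') * A)) ^ P := by
        gcongr
        simpa only [hhe] using hint
      refine (mul_le_mul_right h3 _).trans (le_of_eq ?_)
      rw [ENNReal.mul_rpow_of_nonneg _ _ hP0.le, ENNReal.mul_rpow_of_nonneg _ _ hP0.le,
        ← ENNReal.rpow_mul]
      have h4 : 1 / t' * P = (s - 1) / s := by
        rw [ht']
        field_simp
      rw [h4]
      simp only [κ]
      push_cast
      rw [ENNReal.coe_rpow_of_nonneg _ hP0.le]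
      ring
    by_cases hY0 : Y = 0
    · rw [hY0, ENNReal.zero_rpow_of_pos (by positivity)]
      exact zero_le
    have hZ0 : Y ^ ((s - 1) / s) ≠ 0 := (ENNReal.rpow_pos (pos_iff_ne_zero.2 hY0) hYtop).ne'
    have hZt : Y ^ ((s - 1) / s) ≠ ⊤ := ENNReal.rpow_ne_top_of_nonneg (by positivity) hYtop
    have h5 : Y = Y ^ (1 / s) * Y ^ ((s - 1) / s) := by
      rw [← ENNReal.rpow_add _ _ hY0 hYtop]
      have : 1 / s + (s - 1) / s = 1 := by field_simp; ring
      rw [this, ENNReal.rpow_one]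
    have h6 : Y ^ (1 / s) * Y ^ ((s - 1) / s) ≤ κ * A ^ P * Y ^ ((s - 1) / s) := by rwa [← h5]
    exact (ENNReal.mul_le_mul_iff_left hZ0 hZt).1 h6
  have hYle' : Y ^ (1 / t') ≤ κ ^ ((s - 1) / P) * A ^ (s - 1) := by
    calc Y ^ (1 / t') = (Y ^ (1 / s)) ^ ((s - 1) / P) := by
          rw [← ENNReal.rpow_mul]
          congr 1
          rw [ht']
          field_simp
      _ ≤ (κ * A ^ P) ^ ((s - 1) / P) := by gcongr
      _ = _ := by
          rw [ENNReal.mul_rpow_of_nonneg _ _ (by positivity), ← ENNReal.rpow_mul]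
          congr 2
          field_simp
  have htr := hC₂ h hhs
  simp_rw [hhe] at htr
  refine htr.trans ?_
  have h7 : A ^ s = A ^ (s - 1) * A := by
    conv_rhs => rw [← ENNReal.rpow_one A, ← ENNReal.rpow_mul]
    rw [one_mul, ← ENNReal.rpow_add_of_nonneg _ _ hs1.le zero_le_one, sub_add_cancel]
  calc C₂ * ∫⁻ x in Ω, (‖fderiv ℝ h x‖ₑ + ‖φ x‖ₑ ^ s)
      ≤ C₂ * (S * ((κ ^ ((s - 1) / P) * A ^ (s - 1)) * A)) := by
        refine mul_le_mul_right ?_ _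
        refine le_trans (by simpa only [hhe] using hint) ?_
        gcongr
    _ = _ := by
        rw [h7]
        push_cast
        rw [ENNReal.coe_rpow_of_nonneg _ (by positivity)]
        ring

/-- The Sobolev trace inequality `W^{1,p}(Ω) → L^s(∂Ω)` for smooth functions. -/
lemma exists_sobolev_trace (hn : 1 ≤ n) (hΩo : IsOpen Ω) (hΩb : IsBounded Ω)
    (hΩc : IsConnected Ω) (hΩs : HasSmoothBoundary Ω) {s p : ℝ} (hs : 1 < s) (hp : 1 < p)
    (hsp : s * (n + 1) ≤ p * (n + s)) :
    ∃ C : ℝ≥0, ∀ φ : EuclideanSpace ℝ (Fin (n + 1)) → ℝ, ContDiff ℝ 1 φ →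
      ∫⁻ y, ‖φ y‖ₑ ^ s ∂(bdryMeasure Ω) ≤
        C * (∫⁻ x in Ω, (‖fderiv ℝ φ x‖ₑ ^ p + ‖φ x‖ₑ ^ p)) ^ (s / p) := by
  obtain ⟨C, hC⟩ := exists_sobolev_trace_critical hn hΩo hΩb hΩc hΩs hs
  set t : ℝ := s * (n + 1) / (n + s) with ht
  have ht0 : 0 < t := by positivity
  have htp : t ≤ p := by
    rw [ht, div_le_iff₀ (by positivity)]
    exact hsp
  have hp0 : 0 < p := by linarith
  have he0 : 0 ≤ 1 / t - 1 / p := sub_nonneg.2 (one_div_le_one_div_of_le ht0 htp)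
  have hΩt : volume Ω ≠ ⊤ := hΩb.measure_lt_top.ne
  set K : ℝ≥0∞ := ((2 : ℝ≥0∞) ^ (p - 1)) ^ (1 / p) * volume Ω ^ (1 / t - 1 / p)
  have hKt : K ≠ ⊤ := by
    refine ENNReal.mul_ne_top ?_ (ENNReal.rpow_ne_top_of_nonneg he0 hΩt)
    exact ENNReal.rpow_ne_top_of_nonneg (by positivity)
      (ENNReal.rpow_ne_top_of_nonneg (by linarith) (by simp))
  refine ⟨(C * K ^ s).toNNReal, fun φ hφ => ?_⟩
  rw [ENNReal.coe_toNNReal (ENNReal.mul_ne_top ENNReal.coe_ne_top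
    (ENNReal.rpow_ne_top_of_nonneg (by linarith) hKt))]
  have hφc := hφ.continuous
  have hdc : Continuous (fderiv ℝ φ) := hφ.continuous_fderiv one_ne_zero
  refine (hC φ hφ).trans ?_
  set W := ∫⁻ x in Ω, (‖fderiv ℝ φ x‖ₑ ^ p + ‖φ x‖ₑ ^ p)
  set a : EuclideanSpace ℝ (Fin (n + 1)) → ℝ := fun x => ‖fderiv ℝ φ x‖ + ‖φ x‖
  have ha : Continuous a := by fun_prop
  have hae : ∀ x, ‖a x‖ₑ = ‖fderiv ℝ φ x‖ₑ + ‖φ x‖ₑ := fun x => by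
    rw [← ofReal_norm, Real.norm_of_nonneg (by positivity),
      ENNReal.ofReal_add (norm_nonneg _) (norm_nonneg _), ofReal_norm, ofReal_norm]
  have h1 := eLpNorm'_le_eLpNorm'_mul_rpow_measure_univ (μ := volume.restrict Ω) ht0 htp
    ha.aestronglyMeasurable
  simp only [eLpNorm', hae, Measure.restrict_apply_univ] at h1
  have h2 : (∫⁻ x in Ω, (‖fderiv ℝ φ x‖ₑ + ‖φ x‖ₑ) ^ t) ^ (1 / t) ≤ K * W ^ (1 / p) := by
    refine h1.trans ?_
    have h3 : ∫⁻ x in Ω, (‖fderiv ℝ φ x‖ₑ + ‖φ x‖ₑ) ^ p ≤ 2 ^ (p - 1) * W := by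
      rw [← lintegral_const_mul' _ _ (ENNReal.rpow_ne_top_of_nonneg (by linarith) (by simp))]
      gcongr with x
      exact ENNReal.rpow_add_le_mul_rpow_add_rpow _ _ hp.le
    calc _ ≤ (2 ^ (p - 1) * W) ^ (1 / p) * volume Ω ^ (1 / t - 1 / p) := by gcongr
      _ = _ := by
        rw [ENNReal.mul_rpow_of_nonneg _ _ (by positivity)]
        ring
  calc _ ≤ C * (K * W ^ (1 / p)) ^ s := by gcongr
    _ = _ := by
      rw [ENNReal.mul_rpow_of_nonneg _ _ (by linarith), ← ENNReal.rpow_mul]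
      ring_nf

end SobolevTrace

section LpConvergence

open scoped NNReal

variable {α F G : Type*} [MeasurableSpace α] {m : Measure α} [NormedAddCommGroup F]
  [NormedAddCommGroup G] {p : ℝ≥0∞}

lemma tendsto_eLpNorm_zero_of_le {f : ℕ → α → F} {h : ℕ → α → G} (K : ℝ)
    (hle : ∀ n, ∀ᵐ x ∂m, ‖h n x‖ ≤ K * ‖f n x‖)
    (hf : Tendsto (fun n => eLpNorm (f n) p m) atTop (𝓝 0)) :
    Tendsto (fun n => eLpNorm (h n) p m) atTop (𝓝 0) := by
  have h1 : Tendsto (fun n => ENNReal.ofReal K * eLpNorm (f n) p m) atTop (𝓝 0) := by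
    simpa using ENNReal.Tendsto.const_mul hf (.inr ENNReal.ofReal_ne_top)
  exact tendsto_of_tendsto_of_tendsto_of_le_of_le tendsto_const_nhds h1 (fun _ => zero_le)
    fun n => eLpNorm_le_mul_eLpNorm_of_ae_le_mul (hle n) p

lemma tendsto_eLpNorm_zero_add {f h : ℕ → α → F} (hp : 1 ≤ p)
    (hfm : ∀ n, AEStronglyMeasurable (f n) m) (hhm : ∀ n, AEStronglyMeasurable (h n) m)
    (hf : Tendsto (fun n => eLpNorm (f n) p m) atTop (𝓝 0))
    (hh : Tendsto (fun n => eLpNorm (h n) p m) atTop (𝓝 0)) :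
    Tendsto (fun n => eLpNorm (fun x => f n x + h n x) p m) atTop (𝓝 0) := by
  have h1 : Tendsto (fun n => eLpNorm (f n) p m + eLpNorm (h n) p m) atTop (𝓝 0) := by
    simpa using hf.add hh
  exact tendsto_of_tendsto_of_tendsto_of_le_of_le tendsto_const_nhds h1 (fun _ => zero_le)
    fun n => eLpNorm_add_le (hfm n) (hhm n) hp

lemma tendsto_eLpNorm_zero_one [IsFiniteMeasure m] {f : ℕ → α → F} (hp : 1 ≤ p)
    (hfm : ∀ n, AEStronglyMeasurable (f n) m)
    (hf : Tendsto (fun n => eLpNorm (f n) p m) atTop (𝓝 0)) :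
    Tendsto (fun n => eLpNorm (f n) 1 m) atTop (𝓝 0) := by
  have hexp : 0 ≤ 1 / (1 : ℝ≥0∞).toReal - 1 / p.toReal := by
    rcases eq_or_ne p ⊤ with h | h
    · simp [h]
    · have : 1 ≤ p.toReal := by
        rw [← ENNReal.toReal_one]
        exact (ENNReal.toReal_le_toReal (by simp) h).2 hp
      rw [ENNReal.toReal_one, div_one, sub_nonneg]
      exact (div_le_one (by linarith)).2 this
  have h1 : Tendsto (fun n => eLpNorm (f n) p m *
      m univ ^ (1 / (1 : ℝ≥0∞).toReal - 1 / p.toReal)) atTop (𝓝 0) := by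
    simpa using ENNReal.Tendsto.mul_const hf
      (.inr (ENNReal.rpow_ne_top_of_nonneg hexp (measure_ne_top m univ)))
  exact tendsto_of_tendsto_of_tendsto_of_le_of_le tendsto_const_nhds h1 (fun _ => zero_le)
    fun n => eLpNorm_le_eLpNorm_mul_rpow_measure_univ hp (hfm n)

/-- Multiplication of an `L^p` function by bounded functions that converge to `0` a.e. -/
lemma tendsto_eLpNorm_zero_smul [NormedSpace ℝ F] {g : α → F} {a : ℕ → α → ℝ} {K : ℝ}
    (hp0 : p ≠ 0) (hp : p ≠ ⊤) (hg : MemLp g p m) (ham : ∀ n, AEStronglyMeasurable (a n) m)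
    (hK : ∀ n x, ‖a n x‖ ≤ K) (ha : ∀ᵐ x ∂m, Tendsto (fun n => a n x) atTop (𝓝 0)) :
    Tendsto (fun n => eLpNorm (fun x => a n x • g x) p m) atTop (𝓝 0) := by
  have hp' : 0 < p.toReal := ENNReal.toReal_pos hp0 hp
  have hgfin : ∫⁻ x, ‖g x‖ₑ ^ p.toReal ∂m < ⊤ := (eLpNorm_lt_top_iff_lintegral_rpow_enorm_lt_top hp0 hp).1 hg.2
  have hint : Tendsto (fun n => ∫⁻ x, ‖a n x • g x‖ₑ ^ p.toReal ∂m) atTop (𝓝 (∫⁻ _, 0 ∂m)) := by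
    refine tendsto_lintegral_of_dominated_convergence'
      (fun x => (ENNReal.ofReal K * ‖g x‖ₑ) ^ p.toReal)
      (fun n => ((ham n).smul hg.1).enorm.pow_const _) (fun n => ?_) ?_ ?_
    · filter_upwards with x
      gcongr
      rw [enorm_smul]
      gcongr
      rw [← ofReal_norm]
      exact ENNReal.ofReal_le_ofReal (hK n x)
    · simp_rw [ENNReal.mul_rpow_of_nonneg _ _ hp'.le]
      rw [lintegral_const_mul' _ _ (ENNReal.rpow_ne_top_of_nonneg hp'.le ENNReal.ofReal_ne_top)]
      exact ENNReal.mul_ne_top (ENNReal.rpow_ne_top_of_nonneg hp'.le ENNReal.ofReal_ne_top) hgfin.ne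
    · filter_upwards [ha] with x hx
      have h1 : Tendsto (fun n => ‖a n x • g x‖ₑ) atTop (𝓝 ‖(0 : ℝ) • g x‖ₑ) :=
        (hx.smul_const (g x)).enorm
      rw [zero_smul, enorm_zero] at h1
      have h2 := (ENNReal.continuous_rpow_const (y := p.toReal)).continuousAt.tendsto.comp h1
      simpa [ENNReal.zero_rpow_of_pos hp', Function.comp_def] using h2
  simp only [lintegral_zero] at hint
  have h3 := (ENNReal.continuous_rpow_const (y := 1 / p.toReal)).continuousAt.tendsto.comp hint
  simp only [ENNReal.zero_rpow_of_pos (one_div_pos.2 hp')] at h3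
  refine h3.congr fun n => ?_
  rw [eLpNorm_eq_lintegral_rpow_enorm_toReal hp0 hp]
  rfl

lemma lintegral_enorm_rpow_eq {p : ℝ} (hp : 0 < p) (f : α → F) :
    ∫⁻ x, ‖f x‖ₑ ^ p ∂m = eLpNorm f (ENNReal.ofReal p) m ^ p := by
  rw [eLpNorm_eq_lintegral_rpow_enorm_toReal (by simpa using hp) ENNReal.ofReal_ne_top,
    ENNReal.toReal_ofReal hp.le, ← ENNReal.rpow_mul, one_div, inv_mul_cancel₀ hp.ne',
    ENNReal.rpow_one]

end LpConvergence

section HasTrace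

open scoped NNReal

variable {N : ℕ} {Ω : Set (EuclideanSpace ℝ (Fin N))} {p : ℝ}
  {u : EuclideanSpace ℝ (Fin N) → ℝ} {g : EuclideanSpace ℝ (Fin N) → EuclideanSpace ℝ (Fin N)}
  {τ : EuclideanSpace ℝ (Fin N) → ℝ}

lemma norm_gradient (φ : EuclideanSpace ℝ (Fin N) → ℝ) (x : EuclideanSpace ℝ (Fin N)) :
    ‖gradient φ x‖ = ‖fderiv ℝ φ x‖ := by
  rw [← toDual_gradient, LinearIsometryEquiv.norm_map]

lemma enorm_gradient (φ : EuclideanSpace ℝ (Fin N) → ℝ) (x : EuclideanSpace ℝ (Fin N)) :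
    ‖gradient φ x‖ₑ = ‖fderiv ℝ φ x‖ₑ := by
  rw [← ofReal_norm, ← ofReal_norm, norm_gradient]

lemma continuous_gradient {φ : EuclideanSpace ℝ (Fin N) → ℝ} (hφ : ContDiff ℝ ∞ φ) :
    Continuous (gradient φ) := by
  have : Continuous (fderiv ℝ φ) := hφ.continuous_fderiv (by simp)
  unfold gradient
  fun_prop

/-- `u ∈ L^p(Ω)` is the limit in `W^{1,p}(Ω)` of functions smooth up to the boundary, with gradient
`g` and trace `τ`. -/
structure HasTrace (Ω : Set (EuclideanSpace ℝ (Fin N))) (p : ℝ)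
    (u : EuclideanSpace ℝ (Fin N) → ℝ)
    (g : EuclideanSpace ℝ (Fin N) → EuclideanSpace ℝ (Fin N))
    (τ : EuclideanSpace ℝ (Fin N) → ℝ) : Prop where
  memLp : MemLp u (ENNReal.ofReal p) (volume.restrict Ω)
  memLp_grad : MemLp g (ENNReal.ofReal p) (volume.restrict Ω)
  isTrace : IsTrace Ω p u g τ

namespace HasTrace

lemma exists_seq (h : HasTrace Ω p u g τ) (hp : 1 < p) :
    ∃ φ : ℕ → EuclideanSpace ℝ (Fin N) → ℝ, (∀ n, ContDiff ℝ ∞ (φ n)) ∧ TendstoW1p Ω p φ u g ∧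
      Tendsto (fun n => eLpNorm (fun x => φ n x - τ x) (ENNReal.ofReal p) (bdryMeasure Ω))
        atTop (𝓝 0) ∧
      (∀ᵐ x ∂(volume.restrict Ω), Tendsto (fun n => φ n x) atTop (𝓝 (u x))) ∧
      ∀ᵐ x ∂(bdryMeasure Ω), Tendsto (fun n => φ n x) atTop (𝓝 (τ x)) := by
  obtain ⟨hτ, φ, hφ, ⟨h1, h2⟩, h3⟩ := h.isTrace
  have hp0 : ENNReal.ofReal p ≠ 0 := by simp; linarith
  have hm1 := tendstoInMeasure_of_tendsto_eLpNorm (f := φ) (g := u) hp0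
    (fun n => (hφ n).continuous.aestronglyMeasurable) h.memLp.1 h1
  obtain ⟨ns, hns, hae⟩ := hm1.exists_seq_tendsto_ae
  have hm2 := tendstoInMeasure_of_tendsto_eLpNorm (f := fun n => φ (ns n)) (g := τ) hp0
    (fun n => (hφ _).continuous.aestronglyMeasurable) hτ.1 (h3.comp hns.tendsto_atTop)
  obtain ⟨ms, hms, hae'⟩ := hm2.exists_seq_tendsto_ae
  have hsub : Tendsto (fun n => ns (ms n)) atTop atTop :=
    hns.tendsto_atTop.comp hms.tendsto_atTop
  refine ⟨fun n => φ (ns (ms n)), fun n => hφ _, ⟨h1.comp hsub, h2.comp hsub⟩, h3.comp hsub, ?_,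
    hae'⟩
  filter_upwards [hae] with x hx using hx.comp hms.tendsto_atTop

/-- Post-composition with a smooth function with bounded derivative. -/
lemma comp [IsFiniteMeasure (volume.restrict Ω)] [IsFiniteMeasure (bdryMeasure Ω)]
    (h : HasTrace Ω p u g τ) (hp : 1 < p) {F : ℝ → ℝ} (hF : ContDiff ℝ ∞ F) {K : ℝ}
    (hK : ∀ s, |deriv F s| ≤ K) :
    HasTrace Ω p (fun x => F (u x)) (fun x => deriv F (u x) • g x) (fun x => F (τ x)) := by
  obtain ⟨φ, hφ, ⟨h1, h2⟩, h3, h4, -⟩ := h.exists_seq hp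
  have hp1 : 1 ≤ ENNReal.ofReal p := by simpa using hp.le
  have hp0 : ENNReal.ofReal p ≠ 0 := by simp; linarith
  have hFd : Differentiable ℝ F := hF.differentiable (by simp)
  have hFc := hF.continuous
  have hdc : Continuous (deriv F) := hF.continuous_deriv (by simp)
  have hlip : ∀ s t, ‖F s - F t‖ ≤ K * ‖s - t‖ := fun s t =>
    convex_univ.norm_image_sub_le_of_norm_deriv_le (fun x _ => hFd x) (fun x _ => hK x)
      (mem_univ t) (mem_univ s)
  have hmem : ∀ (m : Measure (EuclideanSpace ℝ (Fin N))) [IsFiniteMeasure m]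
      (v : EuclideanSpace ℝ (Fin N) → ℝ), MemLp v (ENNReal.ofReal p) m →
      MemLp (fun x => F (v x)) (ENNReal.ofReal p) m := by
    intro m _ v hv
    have hm1 : MemLp (fun x => F (v x) - F 0) (ENNReal.ofReal p) m :=
      hv.of_le_mul ((hFc.comp_aestronglyMeasurable hv.1).sub aestronglyMeasurable_const)
        (Eventually.of_forall fun x => by simpa using hlip (v x) 0)
    refine (hm1.add (memLp_const (F 0))).congr_norm (hFc.comp_aestronglyMeasurable hv.1)
      (Eventually.of_forall fun x => ?_)
    simp
  have hdu : AEStronglyMeasurable (fun x => deriv F (u x)) (volume.restrict Ω) :=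
    hdc.comp_aestronglyMeasurable h.memLp.1
  refine ⟨hmem _ u h.memLp, h.memLp_grad.of_le_mul (c := K) (hdu.smul h.memLp_grad.1)
    (Eventually.of_forall fun x => ?_), hmem _ τ h.isTrace.1, fun n x => F (φ n x),
    fun n => hF.comp (hφ n), ⟨?_, ?_⟩, ?_⟩
  · rw [norm_smul]
    exact mul_le_mul_of_nonneg_right (hK _) (norm_nonneg _)
  · exact tendsto_eLpNorm_zero_of_le K (fun n => Eventually.of_forall fun x => hlip _ _) h1
  · have hgrad : ∀ n x, gradient (fun x => F (φ n x)) x - deriv F (u x) • g x =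
        deriv F (φ n x) • (gradient (φ n) x - g x) +
          (deriv F (φ n x) - deriv F (u x)) • g x := by
      intro n x
      have hd : HasFDerivAt (fun x => F (φ n x)) (deriv F (φ n x) • fderiv ℝ (φ n) x) x :=
        (hFd _).hasDerivAt.comp_hasFDerivAt x ((hφ n).differentiable (by simp) x).hasFDerivAt
      have : gradient (fun x => F (φ n x)) x = deriv F (φ n x) • gradient (φ n) x := by
        unfold gradient
        rw [hd.fderiv, map_smul]
      rw [this]
      module
    simp_rw [hgrad]
    have hφm : ∀ n, AEStronglyMeasurable (fun x => deriv F (φ n x)) (volume.restrict Ω) :=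
      fun n => (hdc.comp (hφ n).continuous).aestronglyMeasurable
    refine tendsto_eLpNorm_zero_add hp1
      (fun n => (hφm n).smul ((continuous_gradient (hφ n)).aestronglyMeasurable.sub
        h.memLp_grad.1)) (fun n => ((hφm n).sub hdu).smul h.memLp_grad.1) ?_ ?_
    · refine tendsto_eLpNorm_zero_of_le K (fun n => Eventually.of_forall fun x => ?_) h2
      rw [norm_smul]
      exact mul_le_mul_of_nonneg_right (hK _) (norm_nonneg _)
    · refine tendsto_eLpNorm_zero_smul (K := K + K) hp0 ENNReal.ofReal_ne_top h.memLp_grad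
        (fun n => (hφm n).sub hdu) (fun n x => ?_) ?_
      · exact (norm_sub_le _ _).trans (add_le_add (hK _) (hK _))
      · filter_upwards [h4] with x hx
        have := (hdc.continuousAt.tendsto.comp hx).sub_const (deriv F (u x))
        simpa [Function.comp_def] using this
  · exact tendsto_eLpNorm_zero_of_le K (fun n => Eventually.of_forall fun x => hlip _ _) h3

/-- Multiplication with a bounded smooth function with bounded gradient. -/
lemma smooth_mul (h : HasTrace Ω p u g τ) (hp : 1 < p) {η : EuclideanSpace ℝ (Fin N) → ℝ}
    (hη : ContDiff ℝ ∞ η) {K Z : ℝ} (hK : ∀ x, |η x| ≤ K) (hZ : ∀ x, ‖fderiv ℝ η x‖ ≤ Z) :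
    HasTrace Ω p (fun x => η x * u x) (fun x => η x • g x + u x • gradient η x)
      (fun x => η x * τ x) := by
  obtain ⟨φ, hφ, ⟨h1, h2⟩, h3, -, -⟩ := h.exists_seq hp
  have hp1 : 1 ≤ ENNReal.ofReal p := by simpa using hp.le
  have hηc := hη.continuous
  have hgc := continuous_gradient hη
  have hgn : ∀ (m : Measure (EuclideanSpace ℝ (Fin N))) (v : EuclideanSpace ℝ (Fin N) → ℝ),
      MemLp v (ENNReal.ofReal p) m → MemLp (fun x => η x * v x) (ENNReal.ofReal p) m :=
    fun m v hv => hv.of_le_mul (hηc.aestronglyMeasurable.mul hv.1)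
      (Eventually.of_forall fun x => by
        rw [norm_mul]; exact mul_le_mul_of_nonneg_right (hK x) (norm_nonneg _))
  have hZ' : ∀ x, ‖gradient η x‖ ≤ Z := fun x => by rw [norm_gradient]; exact hZ x
  refine ⟨hgn _ u h.memLp, MemLp.add ?_ ?_, hgn _ τ h.isTrace.1, fun n x => η x * φ n x,
    fun n => hη.mul (hφ n), ⟨?_, ?_⟩, ?_⟩
  · refine h.memLp_grad.of_le_mul (c := K) (hηc.aestronglyMeasurable.smul h.memLp_grad.1)
      (Eventually.of_forall fun x => ?_)
    rw [norm_smul]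
    exact mul_le_mul_of_nonneg_right (hK x) (norm_nonneg _)
  · refine h.memLp.of_le_mul (c := Z) (h.memLp.1.smul hgc.aestronglyMeasurable)
      (Eventually.of_forall fun x => ?_)
    rw [norm_smul, mul_comm]
    exact mul_le_mul_of_nonneg_right (hZ' x) (norm_nonneg _)
  · refine tendsto_eLpNorm_zero_of_le K (fun n => Eventually.of_forall fun x => ?_) h1
    rw [← mul_sub, norm_mul]
    exact mul_le_mul_of_nonneg_right (hK x) (norm_nonneg _)
  · have hgrad : ∀ n x, gradient (fun x => η x * φ n x) x - (η x • g x + u x • gradient η x) =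
        η x • (gradient (φ n) x - g x) + (φ n x - u x) • gradient η x := by
      intro n x
      have : gradient (fun x => η x * φ n x) x = η x • gradient (φ n) x + φ n x • gradient η x := by
        unfold gradient
        rw [fderiv_fun_mul (hη.differentiable (by simp) x) ((hφ n).differentiable (by simp) x),
          map_add, map_smul, map_smul]
      rw [this]
      module
    simp_rw [hgrad]
    refine tendsto_eLpNorm_zero_add hp1
      (fun n => hηc.aestronglyMeasurable.smul
        ((continuous_gradient (hφ n)).aestronglyMeasurable.sub h.memLp_grad.1))
      (fun n => ((hφ n).continuous.aestronglyMeasurable.sub h.memLp.1).smul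
        hgc.aestronglyMeasurable) ?_ ?_
    · refine tendsto_eLpNorm_zero_of_le K (fun n => Eventually.of_forall fun x => ?_) h2
      rw [norm_smul]
      exact mul_le_mul_of_nonneg_right (hK x) (norm_nonneg _)
    · refine tendsto_eLpNorm_zero_of_le Z (fun n => Eventually.of_forall fun x => ?_) h1
      rw [norm_smul, mul_comm]
      exact mul_le_mul_of_nonneg_right (hZ' x) (norm_nonneg _)
  · refine tendsto_eLpNorm_zero_of_le K (fun n => Eventually.of_forall fun x => ?_) h3
    rw [← mul_sub, norm_mul]
    exact mul_le_mul_of_nonneg_right (hK x) (norm_nonneg _)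

lemma add {u' : EuclideanSpace ℝ (Fin N) → ℝ}
    {g' : EuclideanSpace ℝ (Fin N) → EuclideanSpace ℝ (Fin N)} {τ' : EuclideanSpace ℝ (Fin N) → ℝ}
    (h : HasTrace Ω p u g τ) (h' : HasTrace Ω p u' g' τ') (hp : 1 < p) :
    HasTrace Ω p (fun x => u x + u' x) (fun x => g x + g' x) (fun x => τ x + τ' x) := by
  obtain ⟨φ, hφ, ⟨h1, h2⟩, h3, -, -⟩ := h.exists_seq hp
  obtain ⟨ψ, hψ, ⟨k1, k2⟩, k3, -, -⟩ := h'.exists_seq hp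
  have hp1 : 1 ≤ ENNReal.ofReal p := by simpa using hp.le
  refine ⟨h.memLp.add h'.memLp, h.memLp_grad.add h'.memLp_grad, h.isTrace.1.add h'.isTrace.1,
    fun n x => φ n x + ψ n x, fun n => (hφ n).add (hψ n), ⟨?_, ?_⟩, ?_⟩
  · simp_rw [add_sub_add_comm]
    exact tendsto_eLpNorm_zero_add hp1
      (fun n => (hφ n).continuous.aestronglyMeasurable.sub h.memLp.1)
      (fun n => (hψ n).continuous.aestronglyMeasurable.sub h'.memLp.1) h1 k1
  · have hgrad : ∀ n x, gradient (fun x => φ n x + ψ n x) x =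
        gradient (φ n) x + gradient (ψ n) x := by
      intro n x
      unfold gradient
      rw [fderiv_fun_add ((hφ n).differentiable (by simp) x) ((hψ n).differentiable (by simp) x),
        map_add]
    simp_rw [hgrad, add_sub_add_comm]
    exact tendsto_eLpNorm_zero_add hp1
      (fun n => (continuous_gradient (hφ n)).aestronglyMeasurable.sub h.memLp_grad.1)
      (fun n => (continuous_gradient (hψ n)).aestronglyMeasurable.sub h'.memLp_grad.1) h2 k2
  · simp_rw [add_sub_add_comm]
    exact tendsto_eLpNorm_zero_add hp1
      (fun n => (hφ n).continuous.aestronglyMeasurable.sub h.isTrace.1.1)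
      (fun n => (hψ n).continuous.aestronglyMeasurable.sub h'.isTrace.1.1) h3 k3

end HasTrace

end HasTrace

section HasTrace

open scoped NNReal

namespace HasTrace

section General

variable {N : ℕ} {Ω : Set (EuclideanSpace ℝ (Fin N))} {p : ℝ}
  {u : EuclideanSpace ℝ (Fin N) → ℝ} {g : EuclideanSpace ℝ (Fin N) → EuclideanSpace ℝ (Fin N)}
  {τ : EuclideanSpace ℝ (Fin N) → ℝ}

lemma isWeakGradient [IsFiniteMeasure (volume.restrict Ω)] (h : HasTrace Ω p u g τ) (hp : 1 < p) :
    IsWeakGradient Ω u g := by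
  intro ψ hψ hψc hψΩ v
  obtain ⟨φ, hφ, ⟨h1, h2⟩, -, -, -⟩ := h.exists_seq hp
  have hp1 : 1 ≤ ENNReal.ofReal p := by simpa using hp.le
  have hψcont := hψ.continuous
  have hdψ : Continuous (fderiv ℝ ψ) := hψ.continuous_fderiv (by simp)
  have hdψv : Continuous fun x => fderiv ℝ ψ x v := by fun_prop
  have hdψc : HasCompactSupport fun x => fderiv ℝ ψ x v := by
    exact (hψc.fderiv (𝕜 := ℝ)).comp_left (g := fun L : EuclideanSpace ℝ (Fin N) →L[ℝ] ℝ => L v)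
      (by simp)
  obtain ⟨K, hK⟩ := hdψv.bounded_above_of_compact_support hdψc
  obtain ⟨Z, hZ⟩ := hψcont.bounded_above_of_compact_support hψc
  have hψ0 : ∀ x, x ∉ Ω → ψ x = 0 := fun x hx => image_eq_zero_of_notMem_tsupport fun h' => hx (hψΩ h')
  have hdψ0 : ∀ x, x ∉ Ω → fderiv ℝ ψ x v = 0 := fun x hx => by
    have : fderiv ℝ ψ x = 0 := image_eq_zero_of_notMem_tsupport fun h' =>
      hx (hψΩ (tsupport_fderiv_subset ℝ h'))
    simp [this]
  have hip : ∀ n, ∫ x in Ω, φ n x * fderiv ℝ ψ x v = - ∫ x in Ω, ψ x * ⟪gradient (φ n) x, v⟫ := by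
    intro n
    have hφd : Continuous (fderiv ℝ (φ n)) := (hφ n).continuous_fderiv (by simp)
    have hφc := (hφ n).continuous
    rw [setIntegral_eq_integral_of_forall_compl_eq_zero (fun x hx => by simp [hdψ0 x hx]),
      setIntegral_eq_integral_of_forall_compl_eq_zero (fun x hx => by simp [hψ0 x hx])]
    simp_rw [inner_gradient_left, mul_comm (ψ _)]
    refine integral_mul_fderiv_eq_neg_fderiv_mul_of_integrable ?_ ?_ ?_
      (fun x _ => (hφ n).differentiable (by simp) x) (fun x _ => hψ.differentiable (by simp) x)
    · exact Continuous.integrable_of_hasCompactSupport (by fun_prop) hψc.mul_left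
    · exact Continuous.integrable_of_hasCompactSupport (by fun_prop) hdψc.mul_left
    · exact Continuous.integrable_of_hasCompactSupport (by fun_prop) hψc.mul_left
  have hintp : ∀ f : EuclideanSpace ℝ (Fin N) → ℝ, MemLp f (ENNReal.ofReal p) (volume.restrict Ω) →
      Integrable f (volume.restrict Ω) := fun f hf => hf.integrable hp1
  have hu1 : Integrable (fun x => u x * fderiv ℝ ψ x v) (volume.restrict Ω) :=
    ((hintp u h.memLp).mul_bdd (c := K) hdψv.aestronglyMeasurable (Eventually.of_forall hK))
  have hgv : MemLp (fun x => ⟪g x, v⟫) (ENNReal.ofReal p) (volume.restrict Ω) := by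
    refine h.memLp_grad.of_le_mul (c := ‖v‖) (h.memLp_grad.1.inner aestronglyMeasurable_const)
      (Eventually.of_forall fun x => ?_)
    rw [mul_comm]
    exact norm_inner_le_norm _ _
  have hg1 : Integrable (fun x => ψ x * ⟪g x, v⟫) (volume.restrict Ω) :=
    (hintp _ hgv).bdd_mul (c := Z) hψcont.aestronglyMeasurable (Eventually.of_forall hZ)
  have hfinite : ∀ f : EuclideanSpace ℝ (Fin N) → ℝ, Continuous f → HasCompactSupport f →
      Integrable f (volume.restrict Ω) := fun f hf hf' =>
    (hf.integrable_of_hasCompactSupport hf').restrict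
  have hL : Tendsto (fun n => ∫ x in Ω, φ n x * fderiv ℝ ψ x v) atTop
      (𝓝 (∫ x in Ω, u x * fderiv ℝ ψ x v)) := by
    refine tendsto_integral_of_L1' _ hu1.aestronglyMeasurable (Eventually.of_forall fun n => ?_) ?_
    · have := (hφ n).continuous
      exact hfinite _ (by fun_prop) hdψc.mul_left
    · refine tendsto_eLpNorm_zero_of_le (f := fun n x => φ n x - u x) K
        (fun n => Eventually.of_forall fun x => ?_) (tendsto_eLpNorm_zero_one hp1
          (fun n => (hφ n).continuous.aestronglyMeasurable.sub h.memLp.1) h1)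
      rw [Pi.sub_apply, ← sub_mul, norm_mul, mul_comm]
      exact mul_le_mul_of_nonneg_right (hK x) (norm_nonneg _)
  have hR : Tendsto (fun n => - ∫ x in Ω, ψ x * ⟪gradient (φ n) x, v⟫) atTop
      (𝓝 (- ∫ x in Ω, ψ x * ⟪g x, v⟫)) := by
    refine Tendsto.neg (tendsto_integral_of_L1' _ hg1.aestronglyMeasurable
      (Eventually.of_forall fun n => ?_) ?_)
    · have := continuous_gradient (hφ n)
      exact hfinite _ (by fun_prop) hψc.mul_right
    · refine tendsto_eLpNorm_zero_of_le (f := fun n x => gradient (φ n) x - g x) (Z * ‖v‖)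
        (fun n => Eventually.of_forall fun x => ?_) (tendsto_eLpNorm_zero_one hp1
          (fun n => (continuous_gradient (hφ n)).aestronglyMeasurable.sub h.memLp_grad.1) h2)
      rw [Pi.sub_apply, ← mul_sub, ← inner_sub_left, norm_mul, mul_assoc]
      refine mul_le_mul (hZ x) ?_ (norm_nonneg _) ((norm_nonneg _).trans (hZ x))
      rw [mul_comm]
      exact norm_inner_le_norm _ _
  exact tendsto_nhds_unique hL (by simpa only [hip] using hR)

lemma memW1p [IsFiniteMeasure (volume.restrict Ω)] (h : HasTrace Ω p u g τ) (hp : 1 < p) :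
    MemW1p Ω p u g :=
  ⟨h.memLp, h.memLp_grad, h.isWeakGradient hp⟩

end General

variable {n : ℕ} {Ω : Set (EuclideanSpace ℝ (Fin (n + 1)))} {p : ℝ}
  {u : EuclideanSpace ℝ (Fin (n + 1)) → ℝ}
  {g : EuclideanSpace ℝ (Fin (n + 1)) → EuclideanSpace ℝ (Fin (n + 1))}
  {τ : EuclideanSpace ℝ (Fin (n + 1)) → ℝ}

/-- The trace of a function in `W^{1,p}_0` vanishes. -/
lemma ae_eq_zero_of_memW1p0 (h : HasTrace Ω p u g τ) (hp : 1 < p) (hΩo : IsOpen Ω)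
    (hΩb : IsBounded Ω) (hΩc : IsConnected Ω) (hΩs : HasSmoothBoundary Ω)
    (h0 : MemW1p0 Ω p u g) : τ =ᵐ[bdryMeasure Ω] 0 := by
  have := isFiniteMeasure_bdryMeasure hΩo hΩb hΩs
  have : IsFiniteMeasure (volume.restrict Ω) := ⟨by simpa using hΩb.measure_lt_top⟩
  obtain ⟨C, hC⟩ := exists_lintegral_bdry_le hΩo hΩb hΩc hΩs
  obtain ⟨φ, hφ, ⟨h1, h2⟩, h3, -, -⟩ := h.exists_seq hp
  obtain ⟨-, ψ, hψ, k1, k2⟩ := h0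
  have hp1 : 1 ≤ ENNReal.ofReal p := by simpa using hp.le
  have hd : Tendsto (fun j => eLpNorm (fun x => φ j x - ψ j x) 1 (volume.restrict Ω)) atTop
      (𝓝 0) := by
    have ha := tendsto_eLpNorm_zero_one hp1
      (fun j => (hφ j).continuous.aestronglyMeasurable.sub h.memLp.1) h1
    have hb := tendsto_eLpNorm_zero_one hp1
      (fun j => (hψ j).1.continuous.aestronglyMeasurable.sub h.memLp.1) k1
    have hb' := tendsto_eLpNorm_zero_of_le (h := fun j x => u x - ψ j x) 1
      (fun j => Eventually.of_forall fun x => by rw [one_mul, norm_sub_rev]; exact le_rfl) hb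
    have := tendsto_eLpNorm_zero_add le_rfl
      (fun j => (hφ j).continuous.aestronglyMeasurable.sub h.memLp.1)
      (fun j => h.memLp.1.sub (hψ j).1.continuous.aestronglyMeasurable) ha hb'
    simpa using this
  have hdg : Tendsto (fun j => eLpNorm (fun x => gradient (φ j) x - gradient (ψ j) x) 1
      (volume.restrict Ω)) atTop (𝓝 0) := by
    have ha := tendsto_eLpNorm_zero_one hp1
      (fun j => (continuous_gradient (hφ j)).aestronglyMeasurable.sub h.memLp_grad.1) h2
    have hb := tendsto_eLpNorm_zero_one hp1
      (fun j => (continuous_gradient (hψ j).1).aestronglyMeasurable.sub h.memLp_grad.1) k2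
    have hb' := tendsto_eLpNorm_zero_of_le (h := fun j x => g x - gradient (ψ j) x) 1
      (fun j => Eventually.of_forall fun x => by rw [one_mul, norm_sub_rev]; exact le_rfl) hb
    have := tendsto_eLpNorm_zero_add le_rfl
      (fun j => (continuous_gradient (hφ j)).aestronglyMeasurable.sub h.memLp_grad.1)
      (fun j => h.memLp_grad.1.sub (continuous_gradient (hψ j).1).aestronglyMeasurable) ha hb'
    simpa using this
  have hbd : ∀ j, eLpNorm (φ j) 1 (bdryMeasure Ω) ≤
      C * (eLpNorm (fun x => gradient (φ j) x - gradient (ψ j) x) 1 (volume.restrict Ω) +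
        eLpNorm (fun x => φ j x - ψ j x) 1 (volume.restrict Ω)) := by
    intro j
    have hs : ContDiff ℝ 1 (fun x => φ j x - ψ j x) :=
      ((hφ j).sub (hψ j).1).of_le (by simp)
    have h4 := hC _ hs
    have h5 : ∀ x, ‖fderiv ℝ (fun x => φ j x - ψ j x) x‖ₑ =
        ‖gradient (φ j) x - gradient (ψ j) x‖ₑ := by
      intro x
      rw [← enorm_gradient]
      congr 1
      unfold gradient
      rw [fderiv_fun_sub ((hφ j).differentiable (by simp) x)
        ((hψ j).1.differentiable (by simp) x), map_sub]
    simp_rw [h5] at h4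
    rw [lintegral_add_right _ hs.continuous.enorm.measurable] at h4
    rw [eLpNorm_one_eq_lintegral_enorm, eLpNorm_one_eq_lintegral_enorm,
      eLpNorm_one_eq_lintegral_enorm]
    refine le_trans (lintegral_mono_ae ?_) h4
    filter_upwards [ae_mem_frontier Ω] with y hy
    have : ψ j y = 0 := image_eq_zero_of_notMem_tsupport fun h' => by
      rw [hΩo.frontier_eq] at hy
      exact hy.2 ((hψ j).2.2 h')
    simp [this]
  have hφ0 : Tendsto (fun j => eLpNorm (φ j) 1 (bdryMeasure Ω)) atTop (𝓝 0) := by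
    refine tendsto_of_tendsto_of_tendsto_of_le_of_le tendsto_const_nhds ?_ (fun _ => zero_le) hbd
    have := ENNReal.Tendsto.const_mul (a := (C : ℝ≥0∞)) (hdg.add hd) (.inr ENNReal.coe_ne_top)
    simpa using this
  have hτ1 := tendsto_eLpNorm_zero_one hp1
      (fun j => (hφ j).continuous.aestronglyMeasurable.sub h.isTrace.1.1) h3
  have hsum := hφ0.add hτ1
  rw [add_zero] at hsum
  have hle : ∀ j, eLpNorm τ 1 (bdryMeasure Ω) ≤ eLpNorm (φ j) 1 (bdryMeasure Ω) +
      eLpNorm (fun x => φ j x - τ x) 1 (bdryMeasure Ω) := by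
    intro j
    have heq : τ = φ j - (fun x => φ j x - τ x) := by ext x; simp
    conv_lhs => rw [heq]
    exact eLpNorm_sub_le (hφ j).continuous.aestronglyMeasurable
      ((hφ j).continuous.aestronglyMeasurable.sub h.isTrace.1.1) le_rfl
  have hz : eLpNorm τ 1 (bdryMeasure Ω) = 0 :=
    le_zero_iff.1 (ge_of_tendsto hsum (Eventually.of_forall hle))
  exact (eLpNorm_eq_zero_iff h.isTrace.1.1 one_ne_zero).1 hz

/-- The Sobolev trace inequality. -/
lemma exists_lintegral_trace_le (hn : 1 ≤ n) (hΩo : IsOpen Ω) (hΩb : IsBounded Ω)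
    (hΩc : IsConnected Ω) (hΩs : HasSmoothBoundary Ω) {s p : ℝ} (hs : 1 < s) (hp : 1 < p)
    (hsp : s * (n + 1) ≤ p * (n + s)) :
    ∃ C : ℝ≥0, ∀ u g τ, HasTrace Ω p u g τ →
      ∫⁻ y, ‖τ y‖ₑ ^ s ∂(bdryMeasure Ω) ≤
        C * (∫⁻ x in Ω, (‖g x‖ₑ ^ p + ‖u x‖ₑ ^ p)) ^ (s / p) := by
  obtain ⟨C, hC⟩ := exists_sobolev_trace hn hΩo hΩb hΩc hΩs hs hp hsp
  refine ⟨C, fun u g τ h => ?_⟩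
  obtain ⟨φ, hφ, ⟨h1, h2⟩, -, -, h5⟩ := h.exists_seq hp
  have hp0 : 0 < p := by linarith
  have hs0 : 0 < s := by linarith
  have hp1 : 1 ≤ ENNReal.ofReal p := by simpa using hp.le
  have hu := h.memLp
  have hg := h.memLp_grad
  set m := volume.restrict Ω
  set P := ENNReal.ofReal p
  have hE : ∫⁻ x in Ω, (‖g x‖ₑ ^ p + ‖u x‖ₑ ^ p) = eLpNorm g P m ^ p + eLpNorm u P m ^ p := by
    rw [lintegral_add_left' (hg.1.enorm.pow_const _), lintegral_enorm_rpow_eq hp0,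
      lintegral_enorm_rpow_eq hp0]
  set b : ℕ → ℝ≥0∞ := fun j => C * ((eLpNorm (fun x => gradient (φ j) x - g x) P m +
    eLpNorm g P m) ^ p + (eLpNorm (fun x => φ j x - u x) P m + eLpNorm u P m) ^ p) ^ (s / p)
  have hb : ∀ j, ∫⁻ y, ‖φ j y‖ₑ ^ s ∂(bdryMeasure Ω) ≤ b j := by
    intro j
    refine (hC (φ j) ((hφ j).of_le (by simp))).trans ?_
    simp_rw [← enorm_gradient]
    rw [lintegral_add_right _ ((hφ j).continuous.enorm.measurable.pow_const _),
      lintegral_enorm_rpow_eq hp0, lintegral_enorm_rpow_eq hp0]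
    simp only [b]
    gcongr
    · have heq : gradient (φ j) = (fun x => gradient (φ j) x - g x) + g := by ext x; simp
      conv_lhs => rw [heq]
      exact eLpNorm_add_le ((continuous_gradient (hφ j)).aestronglyMeasurable.sub hg.1) hg.1 hp1
    · have heq : φ j = (fun x => φ j x - u x) + u := by ext x; simp
      conv_lhs => rw [heq]
      exact eLpNorm_add_le ((hφ j).continuous.aestronglyMeasurable.sub hu.1) hu.1 hp1
  have hlim : Tendsto b atTop (𝓝 (C * (eLpNorm g P m ^ p + eLpNorm u P m ^ p) ^ (s / p))) := by
    have ha := ((h2.add_const (eLpNorm g P m)).ennrpow_const p).add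
      ((h1.add_const (eLpNorm u P m)).ennrpow_const p)
    simp only [zero_add] at ha
    exact ENNReal.Tendsto.const_mul (ha.ennrpow_const (s / p)) (.inr ENNReal.coe_ne_top)
  rw [hE]
  calc ∫⁻ y, ‖τ y‖ₑ ^ s ∂(bdryMeasure Ω)
      = ∫⁻ y, liminf (fun j => ‖φ j y‖ₑ ^ s) atTop ∂(bdryMeasure Ω) := by
        refine lintegral_congr_ae ?_
        filter_upwards [h5] with y hy
        exact (hy.enorm.ennrpow_const s).liminf_eq.symm
    _ ≤ liminf (fun j => ∫⁻ y, ‖φ j y‖ₑ ^ s ∂(bdryMeasure Ω)) atTop :=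
        lintegral_liminf_le fun j => (hφ j).continuous.enorm.measurable.pow_const _
    _ ≤ liminf b atTop := liminf_le_liminf (Eventually.of_forall hb)
    _ = _ := hlim.liminf_eq

/-- A Poincaré inequality on the boundary, for traces vanishing on a set `Γ`. -/
lemma exists_measure_mul_lintegral_le (hΩo : IsOpen Ω) (hΩb : IsBounded Ω)
    (hΩc : IsConnected Ω) (hΩs : HasSmoothBoundary Ω) {p : ℝ} (hp : 1 < p) :
    ∃ C : ℝ≥0, ∀ u g τ Γ, HasTrace Ω p u g τ → NullMeasurableSet Γ (bdryMeasure Ω) →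
      (∀ᵐ x ∂(bdryMeasure Ω), x ∈ Γ → τ x = 0) →
      bdryMeasure Ω Γ * ∫⁻ y, ‖τ y‖ₑ ∂(bdryMeasure Ω) ≤ C * ∫⁻ x in Ω, ‖g x‖ₑ := by
  have := isFiniteMeasure_bdryMeasure hΩo hΩb hΩs
  have : IsFiniteMeasure (volume.restrict Ω) := ⟨by simpa using hΩb.measure_lt_top⟩
  obtain ⟨C, hC⟩ := oscBound_bdry_bdry hΩo hΩb hΩc hΩs
  refine ⟨C, fun u g τ Γ h hΓm hΓ => ?_⟩
  obtain ⟨φ, hφ, ⟨h1, h2⟩, -, -, h5⟩ := h.exists_seq hp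
  have hp1 : 1 ≤ ENNReal.ofReal p := by simpa using hp.le
  have hg := h.memLp_grad
  set μ := bdryMeasure Ω
  set m := volume.restrict Ω
  set b : ℕ → ℝ≥0∞ := fun j => C * (eLpNorm (fun x => gradient (φ j) x - g x) 1 m + eLpNorm g 1 m)
  have hb : ∀ j, ∫⁻ y, ∫⁻ z, ‖φ j y - φ j z‖ₑ ∂μ ∂μ ≤ b j := by
    intro j
    refine (hC (φ j) ((hφ j).of_le (by simp))).trans ?_
    simp_rw [← enorm_gradient]
    rw [← eLpNorm_one_eq_lintegral_enorm]
    simp only [b]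
    gcongr
    have heq : gradient (φ j) = (fun x => gradient (φ j) x - g x) + g := by ext x; simp
    conv_lhs => rw [heq]
    exact eLpNorm_add_le ((continuous_gradient (hφ j)).aestronglyMeasurable.sub hg.1) hg.1 le_rfl
  have hlim : Tendsto b atTop (𝓝 (C * eLpNorm g 1 m)) := by
    have ha := (tendsto_eLpNorm_zero_one hp1
      (fun j => (continuous_gradient (hφ j)).aestronglyMeasurable.sub hg.1) h2).add_const
      (eLpNorm g 1 m)
    rw [zero_add] at ha
    exact ENNReal.Tendsto.const_mul ha (.inr ENNReal.coe_ne_top)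
  rw [← eLpNorm_one_eq_lintegral_enorm (f := g)]
  have hlow : μ Γ * ∫⁻ y, ‖τ y‖ₑ ∂μ ≤ ∫⁻ y, ∫⁻ z, ‖τ y - τ z‖ₑ ∂μ ∂μ := by
    rw [← lintegral_const_mul' _ _ (measure_ne_top _ _)]
    gcongr with y
    have hrest : ∀ᵐ z ∂(μ.restrict Γ), τ z = 0 :=
      (ae_restrict_iff'₀ hΓm).2 hΓ
    calc μ Γ * ‖τ y‖ₑ = ∫⁻ z in Γ, ‖τ y‖ₑ ∂μ := by rw [setLIntegral_const, mul_comm]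
      _ = ∫⁻ z in Γ, ‖τ y - τ z‖ₑ ∂μ := by
          refine lintegral_congr_ae ?_
          filter_upwards [hrest] with z hz
          simp [hz]
      _ ≤ _ := setLIntegral_le_lintegral _ _
  refine hlow.trans ?_
  calc ∫⁻ y, ∫⁻ z, ‖τ y - τ z‖ₑ ∂μ ∂μ
      = ∫⁻ y, ∫⁻ z, liminf (fun j => ‖φ j y - φ j z‖ₑ) atTop ∂μ ∂μ := by
        refine lintegral_congr_ae ?_
        filter_upwards [h5] with y hy
        refine lintegral_congr_ae ?_
        filter_upwards [h5] with z hz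
        exact (hy.sub hz).enorm.liminf_eq.symm
    _ ≤ ∫⁻ y, liminf (fun j => ∫⁻ z, ‖φ j y - φ j z‖ₑ ∂μ) atTop ∂μ := by
        gcongr with y
        refine lintegral_liminf_le fun j => ?_
        have := (hφ j).continuous
        exact Continuous.measurable (by fun_prop)
    _ ≤ liminf (fun j => ∫⁻ y, ∫⁻ z, ‖φ j y - φ j z‖ₑ ∂μ ∂μ) atTop := by
        refine lintegral_liminf_le fun j => ?_
        have := (hφ j).continuous
        apply Measurable.lintegral_prod_right' (f := fun q : EuclideanSpace ℝ (Fin (n + 1)) ×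
          EuclideanSpace ℝ (Fin (n + 1)) => ‖φ j q.1 - φ j q.2‖ₑ)
        exact Continuous.measurable (by fun_prop)
    _ ≤ liminf b atTop := liminf_le_liminf (Eventually.of_forall hb)
    _ = _ := hlim.liminf_eq

end HasTrace

end HasTrace

section ExactMeasure

lemma exists_measure_Iic_eq (ν : Measure ℝ) [IsFiniteMeasure ν] [NullSingletonClass ν] {c : ℝ≥0∞}
    (h0 : 0 < c) (hc : c < ν univ) : ∃ t, ν (Iic t) = c := by
  have hcont : Continuous fun t => ν.real (Iic t) := by
    have hint : ∀ t, IntegrableOn (fun _ : ℝ => (1 : ℝ)) (Iic t) ν := fun t => integrableOn_const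
    have h1 : Continuous fun t => ∫ _ in (0 : ℝ)..t, (1 : ℝ) ∂ν :=
      intervalIntegral.continuous_primitive (fun a b => ⟨integrableOn_const, integrableOn_const⟩) 0
    have h2 : (fun t => ν.real (Iic t)) =
        fun t => ν.real (Iic 0) + ∫ _ in (0 : ℝ)..t, (1 : ℝ) ∂ν := by
      ext t
      rw [← intervalIntegral.integral_Iic_sub_Iic (hint 0) (hint t)]
      simp
    rw [h2]
    exact continuous_const.add h1
  have hcf : c ≠ ⊤ := (hc.trans (measure_lt_top _ _)).ne
  have htop := tendsto_measure_Iic_atTop ν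
  have hbot : Tendsto (fun t => ν (Iic t)) atBot (𝓝 0) := by
    have h1 := tendsto_measure_Ici_atBot ν
    have h2 : ∀ t, ν (Iic t) = ν univ - ν (Ici t) := by
      intro t
      rw [← measure_compl measurableSet_Ici (measure_ne_top _ _), compl_Ici]
      exact (measure_congr Iio_ae_eq_Iic).symm
    simp_rw [h2]
    have := ENNReal.Tendsto.sub (tendsto_const_nhds (x := ν univ)) h1 (.inl (measure_ne_top _ _))
    simpa using this
  obtain ⟨a, ha⟩ := (hbot.eventually (gt_mem_nhds h0)).exists
  obtain ⟨b, hb⟩ := (htop.eventually (lt_mem_nhds hc)).exists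
  obtain ⟨t, ht⟩ := mem_range_of_exists_le_of_exists_ge (c := c.toReal) hcont
    ⟨a, ENNReal.toReal_mono hcf ha.le⟩ ⟨b, ENNReal.toReal_mono (measure_ne_top _ _) hb.le⟩
  exact ⟨t, (ENNReal.toReal_eq_toReal_iff' (measure_ne_top _ _) hcf).1 ht⟩

/-- A finite measure without atoms takes all intermediate values. -/
lemma exists_measurableSet_subset_measure_eq {X : Type*} [MeasurableSpace X] [StandardBorelSpace X]
    (μ : Measure X) [IsFiniteMeasure μ] [NullSingletonClass μ] {A : Set X}
    (hA : NullMeasurableSet A μ) {c : ℝ≥0∞} (hc : c ≤ μ A) :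
    ∃ B ⊆ A, MeasurableSet B ∧ μ B = c := by
  obtain ⟨A', hA'A, hA'm, hA'e⟩ := hA.exists_measurable_subset_ae_eq
  rw [← measure_congr hA'e] at hc
  rcases eq_or_ne c 0 with rfl | h0
  · exact ⟨∅, empty_subset _, .empty, measure_empty⟩
  rcases hc.eq_or_lt with rfl | hlt
  · exact ⟨A', hA'A, hA'm, rfl⟩
  have hX : ¬ Countable X := fun h => by
    have h1 : μ A' = 0 := (to_countable A').measure_zero μ
    simp [h1] at hlt
  let e : X ≃ᵐ ℝ := PolishSpace.measurableEquivOfNotCountable hX not_countable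
  let ν := (μ.restrict A').map e
  have : NullSingletonClass ν := ⟨fun t => by
    rw [e.map_apply, show e ⁻¹' {t} = {e.symm t} by ext; simp [e.eq_symm_apply]]
    exact measure_singleton _⟩
  have hν : c < ν univ := by simpa [ν, e.map_apply] using hlt
  obtain ⟨t, ht⟩ := exists_measure_Iic_eq ν (pos_iff_ne_zero.2 h0) hν
  have hm := e.measurable (measurableSet_Iic (a := t))
  refine ⟨e ⁻¹' Iic t ∩ A', inter_subset_right.trans hA'A, hm.inter hA'm, ?_⟩
  rw [← Measure.restrict_apply hm, ← e.map_apply]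
  exact ht

/-- Points without mass have neighbourhoods of small measure. -/
lemma exists_measure_closedBall_le {X : Type*} [MetricSpace X] [MeasurableSpace X]
    [OpensMeasurableSpace X] (μ : Measure X) [IsFiniteMeasure μ] [NullSingletonClass μ] (x : X)
    {c : ℝ≥0∞} (hc : 0 < c) : ∃ r > 0, μ (closedBall x r) ≤ c := by
  have h1 : Tendsto (fun r => μ (closedBall x r)) (𝓝[>] 0) (𝓝 (μ (⋂ r > (0 : ℝ), closedBall x r))) :=
    tendsto_measure_biInter_gt (fun r _ => isClosed_closedBall.measurableSet.nullMeasurableSet)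
      (fun _ _ _ h => closedBall_subset_closedBall h) ⟨1, one_pos, measure_ne_top _ _⟩
  have h2 : ⋂ r > (0 : ℝ), closedBall x r = {x} := by
    ext y
    simp only [mem_iInter, mem_closedBall, mem_singleton_iff]
    refine ⟨fun h => dist_le_zero.1 (le_of_forall_pos_le_add fun ε hε => by simpa using h ε hε), ?_⟩
    rintro rfl r hr
    simpa using hr.le
  rw [h2, measure_singleton] at h1
  obtain ⟨r, hr, hr0⟩ := ((h1.eventually (gt_mem_nhds hc)).and self_mem_nhdsWithin).exists
  exact ⟨r, hr0, hr.le⟩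

end ExactMeasure

section BdryMeasure

variable {n : ℕ} {Ω : Set (EuclideanSpace ℝ (Fin (n + 1)))}

lemma nullSingletonClass_bdryMeasure (hn : 1 ≤ n) : NullSingletonClass (bdryMeasure Ω) := by
  have h1 := Measure.nullSingletonClass_hausdorff (X := EuclideanSpace ℝ (Fin (n + 1)))
    (d := (n : ℕ)) (by exact_mod_cast hn)
  have h2 : NullSingletonClass (μHE[n + 1 - 1] : Measure (EuclideanSpace ℝ (Fin (n + 1)))) := by
    refine ⟨fun x => ?_⟩
    rw [Nat.add_sub_cancel, Measure.euclideanHausdorffMeasure_def, Measure.smul_apply,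
      measure_singleton, smul_zero]
  unfold bdryMeasure
  infer_instance

lemma dropCoord_image_subset (hΩb : IsBounded Ω) (i : Fin (n + 1)) :
    dropCoord i '' Ω ⊆ dropCoord i '' frontier Ω := by
  rintro _ ⟨x, hx, rfl⟩
  set f : ℝ → EuclideanSpace ℝ (Fin (n + 1)) := fun s => x + s • EuclideanSpace.single i 1
  have hf : Continuous f := by fun_prop
  have hne : (frontier (f ⁻¹' Ω)).Nonempty := by
    rw [nonempty_frontier_iff]
    refine ⟨⟨0, by simpa [f] using hx⟩, fun h => ?_⟩
    obtain ⟨R, hR⟩ := hΩb.exists_norm_le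
    have h1 : f (R + ‖x‖ + 1) ∈ Ω := by
      have : R + ‖x‖ + 1 ∈ f ⁻¹' Ω := h ▸ mem_univ _
      exact this
    have h2 := hR _ h1
    have hR0 : 0 ≤ R := (norm_nonneg _).trans (hR x hx)
    have h3 : ‖(R + ‖x‖ + 1) • EuclideanSpace.single i (1 : ℝ)‖ = R + ‖x‖ + 1 := by
      rw [norm_smul, PiLp.norm_single, norm_one, mul_one, Real.norm_eq_abs,
        abs_of_nonneg (by positivity)]
    have h4 := norm_sub_le (f (R + ‖x‖ + 1)) x
    simp only [f, add_sub_cancel_left] at h4 h2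
    rw [h3] at h4
    linarith
  obtain ⟨s, hs⟩ := hne
  refine ⟨f s, hf.frontier_preimage_subset _ hs, ?_⟩
  ext j
  simp [f, dropCoord]

lemma bdryMeasure_frontier_pos (hΩo : IsOpen Ω) (hΩb : IsBounded Ω) (hΩn : Ω.Nonempty) :
    0 < bdryMeasure Ω (frontier Ω) := by
  obtain ⟨x, hx⟩ := hΩn
  obtain ⟨r, hr, hrΩ⟩ := Metric.isOpen_iff.1 hΩo x hx
  have hsub : ball (dropCoord 0 x) r ⊆ dropCoord 0 '' frontier Ω := by
    refine Subset.trans ?_ (dropCoord_image_subset hΩb 0)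
    intro y hy
    refine ⟨WithLp.toLp 2 ((0 : Fin (n + 1)).insertNth (α := fun _ => ℝ) (x 0) (WithLp.ofLp y)),
      hrΩ ?_, by ext j; simp [dropCoord]⟩
    set z : EuclideanSpace ℝ (Fin (n + 1)) :=
      WithLp.toLp 2 ((0 : Fin (n + 1)).insertNth (α := fun _ => ℝ) (x 0) (WithLp.ofLp y)) with hz
    have hzy : dropCoord 0 z = y := by ext j; simp [dropCoord, hz]
    have h1 := norm_sq_eq_dropCoord 0 (z - x)
    have h2 : (z - x) 0 = 0 := by simp [hz]
    rw [h2, dropCoord_sub, hzy] at h1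
    rw [mem_ball_iff_norm] at hy ⊢
    nlinarith [norm_nonneg (z - x), norm_nonneg (y - dropCoord 0 x)]
  rw [bdryMeasure, Measure.restrict_apply_self, Nat.add_sub_cancel,
    Measure.euclideanHausdorffMeasure_def]
  have h1 : volume (ball (dropCoord 0 x) r) ≤
      (μHE[n] : Measure (EuclideanSpace ℝ (Fin n))) (dropCoord 0 '' frontier Ω) := by
    rw [EuclideanSpace.euclideanHausdorffMeasure_eq_volume]
    exact measure_mono hsub
  refine (measure_ball_pos volume (dropCoord 0 x) hr).trans_le (h1.trans ?_)
  rw [Measure.euclideanHausdorffMeasure_def]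
  simp only [Measure.smul_apply, ENNReal.smul_def, smul_eq_mul]
  gcongr
  have := (lipschitzWith_dropCoord (n := n) 0).hausdorffMeasure_image_le (d := n) (by positivity)
    (frontier Ω)
  simpa using this

end BdryMeasure

section Admissible

open scoped NNReal

lemma MemAdmissible.hasTrace {N : ℕ} {Ω Γ : Set (EuclideanSpace ℝ (Fin N))} {p : ℝ}
    {u : EuclideanSpace ℝ (Fin N) → ℝ} {g : EuclideanSpace ℝ (Fin N) → EuclideanSpace ℝ (Fin N)}
    {τ : EuclideanSpace ℝ (Fin N) → ℝ} (h : MemAdmissible Ω p Γ u g τ) : HasTrace Ω p u g τ :=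
  ⟨h.memW1p.memLp, h.memW1p.memLp_grad, h.isTrace⟩

lemma MemAdmissible.energy_ne_zero {N : ℕ} {Ω Γ : Set (EuclideanSpace ℝ (Fin N))} {p : ℝ}
    (hp : 0 < p) {u : EuclideanSpace ℝ (Fin N) → ℝ}
    {g : EuclideanSpace ℝ (Fin N) → EuclideanSpace ℝ (Fin N)}
    {τ : EuclideanSpace ℝ (Fin N) → ℝ} (h : MemAdmissible Ω p Γ u g τ) :
    ∫⁻ x in Ω, (‖g x‖ₑ ^ p + ‖u x‖ₑ ^ p) ≠ 0 := by
  intro h0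
  rw [lintegral_add_left' (h.memW1p.memLp_grad.1.enorm.pow_const _), lintegral_enorm_rpow_eq hp,
    lintegral_enorm_rpow_eq hp, add_eq_zero, ENNReal.rpow_eq_zero_iff_of_pos hp,
    ENNReal.rpow_eq_zero_iff_of_pos hp] at h0
  refine h.notMemW1p0 ⟨h.memW1p, fun _ _ => 0, fun _ => ⟨contDiff_const, HasCompactSupport.zero, ?_⟩,
    ?_, ?_⟩
  · have : tsupport (fun _ : EuclideanSpace ℝ (Fin N) => (0 : ℝ)) = ∅ := by simp
    rw [this]
    exact empty_subset _
  · have : eLpNorm (fun x => 0 - u x) (ENNReal.ofReal p) (volume.restrict Ω) = 0 := by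
      rw [← h0.2, ← eLpNorm_neg]
      congr 1
      ext x
      simp
    exact tendsto_const_nhds.congr fun _ => this.symm
  · have : eLpNorm (fun x => gradient (fun _ : EuclideanSpace ℝ (Fin N) => (0 : ℝ)) x - g x)
        (ENNReal.ofReal p) (volume.restrict Ω) = 0 := by
      rw [← h0.1, ← eLpNorm_neg]
      congr 1
      ext x
      simp [gradient]
    exact tendsto_const_nhds.congr fun _ => this.symm

lemma HasTrace.of_contDiff {N : ℕ} {Ω : Set (EuclideanSpace ℝ (Fin N))} {p : ℝ}
    [IsFiniteMeasure (volume.restrict Ω)] [IsFiniteMeasure (bdryMeasure Ω)]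
    {η : EuclideanSpace ℝ (Fin N) → ℝ} (hη : ContDiff ℝ ∞ η) {K Z : ℝ} (hK : ∀ x, |η x| ≤ K)
    (hZ : ∀ x, ‖fderiv ℝ η x‖ ≤ Z) : HasTrace Ω p η (gradient η) η := by
  have hc := hη.continuous
  refine ⟨.of_bound hc.aestronglyMeasurable K (Eventually.of_forall hK),
    .of_bound (continuous_gradient hη).aestronglyMeasurable Z
      (Eventually.of_forall fun x => by rw [norm_gradient]; exact hZ x),
    .of_bound hc.aestronglyMeasurable K (Eventually.of_forall hK), fun _ => η, fun _ => hη,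
    ⟨?_, ?_⟩, ?_⟩
  all_goals simp

lemma HasTrace.energy_ne_top {N : ℕ} {Ω : Set (EuclideanSpace ℝ (Fin N))} {p : ℝ} (hp : 0 < p)
    {u : EuclideanSpace ℝ (Fin N) → ℝ} {g : EuclideanSpace ℝ (Fin N) → EuclideanSpace ℝ (Fin N)}
    {τ : EuclideanSpace ℝ (Fin N) → ℝ} (h : HasTrace Ω p u g τ) :
    ∫⁻ x in Ω, (‖g x‖ₑ ^ p + ‖u x‖ₑ ^ p) ≠ ⊤ := by
  rw [lintegral_add_left' (h.memLp_grad.1.enorm.pow_const _), lintegral_enorm_rpow_eq hp,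
    lintegral_enorm_rpow_eq hp]
  exact ENNReal.add_ne_top.2 ⟨ENNReal.rpow_ne_top_of_nonneg hp.le h.memLp_grad.2.ne,
    ENNReal.rpow_ne_top_of_nonneg hp.le h.memLp.2.ne⟩

variable {n : ℕ} {Ω : Set (EuclideanSpace ℝ (Fin (n + 1)))} {p q : ℝ}
  {u : EuclideanSpace ℝ (Fin (n + 1)) → ℝ}
  {g : EuclideanSpace ℝ (Fin (n + 1)) → EuclideanSpace ℝ (Fin (n + 1))}
  {τ : EuclideanSpace ℝ (Fin (n + 1)) → ℝ} {Γ : Set (EuclideanSpace ℝ (Fin (n + 1)))}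

/-- A function whose trace vanishes on a set of relative measure at least `α` is a competitor for
`𝒮(α)`. -/
lemma HasTrace.optTraceConst_le (h : HasTrace Ω p u g τ) (hn : 1 ≤ n) (hΩo : IsOpen Ω)
    (hΩb : IsBounded Ω) (hΩc : IsConnected Ω) (hΩs : HasSmoothBoundary Ω) (hp : 1 < p)
    (hΓ : Γ ⊆ frontier Ω) (hΓm : NullMeasurableSet Γ (bdryMeasure Ω)) {α : ℝ}
    (hα : ENNReal.ofReal α * bdryMeasure Ω (frontier Ω) ≤ bdryMeasure Ω Γ)
    (hτΓ : ∀ᵐ x ∂(bdryMeasure Ω), x ∈ Γ → τ x = 0) (hτ : ¬ τ =ᵐ[bdryMeasure Ω] 0) :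
    optTraceConst Ω p q α ≤ rayleighQuot Ω p q u g τ := by
  have := isFiniteMeasure_bdryMeasure hΩo hΩb hΩs
  have : IsFiniteMeasure (volume.restrict Ω) := ⟨by simpa using hΩb.measure_lt_top⟩
  have := nullSingletonClass_bdryMeasure (Ω := Ω) hn
  obtain ⟨B, hBΓ, hBm, hB⟩ := exists_measurableSet_subset_measure_eq _ hΓm hα
  refine sInf_le_of_le ⟨B, hBΓ.trans hΓ, hBm.nullMeasurableSet, hB, rfl⟩
    (sInf_le ⟨u, g, τ, ⟨h.memW1p hp, fun h0 => ?_, h.isTrace, ?_⟩, rfl⟩)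
  · exact hτ (h.ae_eq_zero_of_memW1p0 hp hΩo hΩb hΩc hΩs h0)
  · filter_upwards [hτΓ] with x hx hxB using hx (hBΓ hxB)

lemma optTraceConst_lt_top (hn : 1 ≤ n) (hΩo : IsOpen Ω) (hΩb : IsBounded Ω)
    (hΩc : IsConnected Ω) (hΩs : HasSmoothBoundary Ω) (hp : 1 < p) (hq : 1 ≤ q) {α : ℝ}
    (hα0 : 0 < α) (hα : α < 1) : optTraceConst Ω p q α < ⊤ := by
  have := isFiniteMeasure_bdryMeasure hΩo hΩb hΩs
  have : IsFiniteMeasure (volume.restrict Ω) := ⟨by simpa using hΩb.measure_lt_top⟩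
  have := nullSingletonClass_bdryMeasure (Ω := Ω) hn
  have hpos := bdryMeasure_frontier_pos hΩo hΩb hΩc.nonempty
  obtain ⟨x, -, hx⟩ := exists_mem_forall_mem_nhdsWithin_pos_measure hpos.ne'
  have hc : 0 < ENNReal.ofReal (1 - α) * bdryMeasure Ω (frontier Ω) :=
    ENNReal.mul_pos (by simpa using hα) hpos.ne'
  obtain ⟨r, hr, hrc⟩ := exists_measure_closedBall_le (bdryMeasure Ω) x hc
  obtain ⟨ζ, Z, hζ, -, h0, h1, hζ1, hζ0, -, hZ, -⟩ := exists_cutoff x hr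
  have hK : ∀ y, |ζ y| ≤ 1 := fun y => abs_le.2 ⟨by linarith [h0 y], h1 y⟩
  have hZ' : ∀ y, ‖fderiv ℝ ζ y‖ ≤ Z := fun y => by exact_mod_cast hZ y
  have hT : HasTrace Ω p ζ (gradient ζ) ζ := HasTrace.of_contDiff hζ hK hZ'
  have hball : 0 < bdryMeasure Ω (ball x (r / 2)) :=
    hx _ (mem_nhdsWithin_of_mem_nhds (ball_mem_nhds x (by positivity)))
  have hne : ¬ ζ =ᵐ[bdryMeasure Ω] 0 := by
    intro h
    refine hball.ne' (measure_mono_null (fun y hy => ?_) h)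
    simp [hζ1 y hy]
  refine (hT.optTraceConst_le (q := q) (Γ := frontier Ω \ closedBall x r) hn hΩo hΩb hΩc hΩs hp
    sdiff_subset (isClosed_frontier.measurableSet.diff
      isClosed_closedBall.measurableSet).nullMeasurableSet ?_ ?_ hne).trans_lt ?_
  · have h2 := le_measure_sdiff (μ := bdryMeasure Ω) (s₁ := frontier Ω) (s₂ := closedBall x r)
    refine le_trans ?_ h2
    refine le_trans ?_ (tsub_le_tsub_left hrc _)
    refine ENNReal.le_sub_of_add_le_right
      (ENNReal.mul_ne_top ENNReal.ofReal_ne_top (measure_ne_top _ _)) ?_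
    rw [← add_mul, ← ENNReal.ofReal_add hα0.le (by linarith)]
    simp
  · exact Eventually.of_forall fun y hy => hζ0 y fun h => hy.2 (ball_subset_closedBall h)
  · refine ENNReal.div_lt_top (hT.energy_ne_top (by linarith)) ?_
    intro h
    rw [ENNReal.rpow_eq_zero_iff_of_pos (by positivity), lintegral_eq_zero_iff
      (hζ.continuous.enorm.measurable.pow_const _)] at h
    refine hne (h.mono fun y hy => ?_)
    simpa [ENNReal.rpow_eq_zero_iff_of_pos (show 0 < q by linarith)] using hy

end Admissible

section SmoothAbs

/-- A smooth approximation of the absolute value that vanishes at `0`. -/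
noncomputable def smoothAbs (δ s : ℝ) : ℝ := √(s ^ 2 + δ ^ 2) - δ

variable {δ : ℝ}

lemma contDiff_smoothAbs (hδ : 0 < δ) : ContDiff ℝ ∞ (smoothAbs δ) := by
  unfold smoothAbs
  exact (ContDiff.sqrt (by fun_prop) fun s => by positivity).sub contDiff_const

lemma abs_deriv_smoothAbs_le (hδ : 0 < δ) (s : ℝ) : |deriv (smoothAbs δ) s| ≤ 1 := by
  have h1 : HasDerivAt (fun s : ℝ => s ^ 2 + δ ^ 2) (2 * s) s := by
    simpa using (hasDerivAt_pow 2 s).add_const (δ ^ 2)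
  have h2 := (h1.sqrt (by positivity)).sub_const δ
  have h3 : deriv (smoothAbs δ) s = 2 * s / (2 * √(s ^ 2 + δ ^ 2)) := h2.deriv
  rw [h3, mul_div_mul_left _ _ two_ne_zero, abs_div, abs_of_nonneg (Real.sqrt_nonneg _)]
  refine div_le_one_of_le₀ (Real.le_sqrt_of_sq_le ?_) (Real.sqrt_nonneg _)
  rw [sq_abs]
  nlinarith

lemma smoothAbs_nonneg (s : ℝ) : 0 ≤ smoothAbs δ s :=
  sub_nonneg.2 (Real.le_sqrt_of_sq_le (by nlinarith))

lemma smoothAbs_le (hδ : 0 < δ) (s : ℝ) : smoothAbs δ s ≤ |s| := by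
  rw [smoothAbs, sub_le_iff_le_add, Real.sqrt_le_left (by positivity)]
  nlinarith [sq_abs s, mul_nonneg (abs_nonneg s) hδ.le]

lemma smoothAbs_zero (hδ : 0 < δ) : smoothAbs δ 0 = 0 := by
  simp [smoothAbs, Real.sqrt_sq hδ.le]

lemma tendsto_smoothAbs (s : ℝ) : Tendsto (fun δ => smoothAbs δ s) (𝓝 0) (𝓝 |s|) := by
  have : Continuous fun δ => smoothAbs δ s := by unfold smoothAbs; fun_prop
  have h := this.tendsto 0
  simpa [smoothAbs, Real.sqrt_sq_eq_abs] using h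

end SmoothAbs

section AlmostMinimizer

open scoped NNReal

/-- `F ∘ w` is nonnegative, vanishes on a set `Γ` of relative measure `β`, and minimizes the
quotient that defines `𝒮(α)` up to the error `κ`. -/
structure IsAlmostMinimizer {N : ℕ} (Ω : Set (EuclideanSpace ℝ (Fin N))) (p q α β : ℝ) (κ : ℝ≥0∞)
    (Γ : Set (EuclideanSpace ℝ (Fin N))) (F : ℝ → ℝ) (w : EuclideanSpace ℝ (Fin N) → ℝ)
    (g : EuclideanSpace ℝ (Fin N) → EuclideanSpace ℝ (Fin N))
    (τ : EuclideanSpace ℝ (Fin N) → ℝ) : Prop where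
  hasTrace : HasTrace Ω p w g τ
  contDiff : ContDiff ℝ ∞ F
  abs_deriv_le : ∀ s, |deriv F s| ≤ 1
  nonneg : ∀ s, 0 ≤ F s
  subset : Γ ⊆ frontier Ω
  nullMeasurableSet : NullMeasurableSet Γ (bdryMeasure Ω)
  measure_eq : bdryMeasure Ω Γ = ENNReal.ofReal β * bdryMeasure Ω (frontier Ω)
  trace_eq_zero : ∀ᵐ x ∂(bdryMeasure Ω), x ∈ Γ → F (τ x) = 0
  energy_le : ∫⁻ x in Ω, (‖deriv F (w x) • g x‖ₑ ^ p + ‖F (w x)‖ₑ ^ p) ≤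
    optTraceConst Ω p q α * (∫⁻ x, ‖F (τ x)‖ₑ ^ q ∂(bdryMeasure Ω)) ^ (p / q) + κ
  energy_le_add_one : ∫⁻ x in Ω, (‖deriv F (w x) • g x‖ₑ ^ p + ‖F (w x)‖ₑ ^ p) ≤
    optTraceConst Ω p q α + 1
  half_le : 2⁻¹ ≤ ∫⁻ x, ‖F (τ x)‖ₑ ^ q ∂(bdryMeasure Ω)

/-- Composition with a function that is smooth on `[0, ∞)` only. -/
lemma HasTrace.comp_comp {N : ℕ} {Ω : Set (EuclideanSpace ℝ (Fin N))} {p : ℝ}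
    {w : EuclideanSpace ℝ (Fin N) → ℝ} {g : EuclideanSpace ℝ (Fin N) → EuclideanSpace ℝ (Fin N)}
    {τ : EuclideanSpace ℝ (Fin N) → ℝ} [IsFiniteMeasure (volume.restrict Ω)]
    [IsFiniteMeasure (bdryMeasure Ω)] (h : HasTrace Ω p w g τ) (hp : 1 < p) {F G : ℝ → ℝ}
    (hF : ContDiff ℝ ∞ F) (hF1 : ∀ s, |deriv F s| ≤ 1) (hF0 : ∀ s, 0 ≤ F s)
    (hG : ∀ s, 0 ≤ s → ContDiffAt ℝ ∞ G s) {K : ℝ} (hK : ∀ s, 0 ≤ s → |deriv G s| ≤ K) :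
    HasTrace Ω p (fun x => G (F (w x))) (fun x => deriv G (F (w x)) • deriv F (w x) • g x)
      (fun x => G (F (τ x))) := by
  have hd : ∀ s, deriv (fun s => G (F s)) s = deriv G (F s) * deriv F s := fun s =>
    (((hG _ (hF0 s)).differentiableAt (by simp)).hasDerivAt.comp s
      (hF.differentiable (by simp) s).hasDerivAt).deriv
  have hGF : ContDiff ℝ ∞ fun s => G (F s) :=
    contDiff_iff_contDiffAt.2 fun s => (hG _ (hF0 s)).comp s hF.contDiffAt
  have := h.comp hp hGF (K := K) fun s => by
    rw [hd, abs_mul]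
    calc _ ≤ |deriv G (F s)| * 1 := by gcongr; exact hF1 s
      _ ≤ K := by rw [mul_one]; exact hK _ (hF0 s)
  simpa only [hd, mul_smul] using this

lemma lintegral_enorm_mul_rpow {X : Type*} [MeasurableSpace X] (m : Measure X) {E : Type*}
    [NormedAddCommGroup E] [NormedSpace ℝ E] (f : X → E) (c : ℝ) {p : ℝ} (hp : 0 ≤ p) :
    ∫⁻ x, ‖c • f x‖ₑ ^ p ∂m = ‖c‖ₑ ^ p * ∫⁻ x, ‖f x‖ₑ ^ p ∂m := by
  simp_rw [enorm_smul, ENNReal.mul_rpow_of_nonneg _ _ hp]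
  exact lintegral_const_mul' _ _ (ENNReal.rpow_ne_top_of_nonneg hp enorm_ne_top)

variable {n : ℕ} {Ω : Set (EuclideanSpace ℝ (Fin (n + 1)))} {p q : ℝ}

lemma exists_normalized (hn : 1 ≤ n) (hΩo : IsOpen Ω)
    (hΩb : IsBounded Ω) (hΩc : IsConnected Ω) (hΩs : HasSmoothBoundary Ω) (hp : 1 < p)
    (hq : 1 ≤ q) (hsub : SubcriticalTrace (n + 1) p q) {β : ℝ} {S : ℝ≥0∞}
    (hβ : optTraceConst Ω p q β < S) :
    ∃ Γ w g τ, Γ ⊆ frontier Ω ∧ NullMeasurableSet Γ (bdryMeasure Ω) ∧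
      bdryMeasure Ω Γ = ENNReal.ofReal β * bdryMeasure Ω (frontier Ω) ∧ HasTrace Ω p w g τ ∧
      (∀ᵐ x ∂(bdryMeasure Ω), x ∈ Γ → τ x = 0) ∧
      ∫⁻ x in Ω, (‖g x‖ₑ ^ p + ‖w x‖ₑ ^ p) ≤ S ∧ ∫⁻ x, ‖τ x‖ₑ ^ q ∂(bdryMeasure Ω) = 1 := by
  have := isFiniteMeasure_bdryMeasure hΩo hΩb hΩs
  have : IsFiniteMeasure (volume.restrict Ω) := ⟨by simpa using hΩb.measure_lt_top⟩
  have hp0 : 0 < p := by linarith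
  have hq0 : 0 < q := by linarith
  obtain ⟨_, ⟨Γ, hΓ, hΓm, hΓβ, rfl⟩, hlt⟩ := sInf_lt_iff.1 hβ
  obtain ⟨_, ⟨u, g, τ, hadm, rfl⟩, hlt⟩ := sInf_lt_iff.1 hlt
  have hT := hadm.hasTrace
  set T := ∫⁻ x, ‖τ x‖ₑ ^ q ∂(bdryMeasure Ω) with hTdef
  have hT0 : T ≠ 0 := by
    intro h
    rw [rayleighQuot, ← hTdef, h, ENNReal.zero_rpow_of_pos (by positivity),
      ENNReal.div_zero (hadm.energy_ne_zero hp0)] at hlt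
    exact not_top_lt hlt
  have hTtop : T ≠ ⊤ := by
    obtain ⟨s, hs, hqs, hsN⟩ := hsub.exists_exponent hp hq
    push_cast at hsN
    obtain ⟨C, hC⟩ := HasTrace.exists_lintegral_trace_le hn hΩo hΩb hΩc hΩs hs hp
      (by linarith)
    have h1 := (hC u g τ hT).trans_lt (ENNReal.mul_lt_top ENNReal.coe_lt_top
      (ENNReal.rpow_lt_top_of_nonneg (by positivity) (hT.energy_ne_top hp0)))
    have h2 : T ≤ ∫⁻ x, (1 + ‖τ x‖ₑ ^ s) ∂(bdryMeasure Ω) := by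
      refine lintegral_mono fun x => ?_
      rcases le_total ‖τ x‖ₑ 1 with h | h
      · exact (ENNReal.rpow_le_one h hq0.le).trans le_self_add
      · exact (ENNReal.rpow_le_rpow_of_exponent_le h hqs.le).trans le_add_self
    rw [lintegral_add_left measurable_const, lintegral_one] at h2
    exact (h2.trans_lt (ENNReal.add_lt_top.2 ⟨measure_lt_top _ _, h1⟩)).ne
  set c : ℝ := T.toReal ^ (-(1 / q)) with hc
  have hTr : 0 < T.toReal := ENNReal.toReal_pos hT0 hTtop
  have hcn : ‖c‖ₑ = T ^ (-(1 / q)) := by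
    rw [Real.enorm_eq_ofReal (by positivity), hc, ← ENNReal.ofReal_rpow_of_pos hTr,
      ENNReal.ofReal_toReal hTtop]
  have hderiv : ∀ s, deriv (fun s => c * s) s = c := fun s => by
    simp
  have hcT := hT.comp hp (F := fun s => c * s) (by fun_prop) (K := |c|)
    fun s => by rw [hderiv]
  simp only [hderiv] at hcT
  refine ⟨Γ, _, _, _, hΓ, hΓm, hΓβ, hcT, ?_, ?_, ?_⟩
  · filter_upwards [hadm.trace_eq_zero] with x hx hxΓ
    simp [hx hxΓ]
  · rw [lintegral_add_left' (hcT.memLp_grad.1.enorm.pow_const _), lintegral_enorm_mul_rpow _ _ _ hp0.le]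
    have := lintegral_enorm_mul_rpow (volume.restrict Ω) u c hp0.le
    simp only [smul_eq_mul] at this
    rw [this, ← mul_add, ← lintegral_add_left' (hT.memLp_grad.1.enorm.pow_const _), hcn,
      ← ENNReal.rpow_mul, mul_comm]
    refine le_trans (le_of_eq ?_) hlt.le
    rw [rayleighQuot, ENNReal.div_eq_inv_mul, mul_comm, ← ENNReal.rpow_neg]
    congr 2
    field_simp
  · have := lintegral_enorm_mul_rpow (bdryMeasure Ω) τ c hq0.le
    simp only [smul_eq_mul] at this
    rw [this, hcn, ← ENNReal.rpow_mul, ← hTdef, show -(1 / q) * q = -1 by field_simp,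
      ENNReal.rpow_neg_one, ENNReal.inv_mul_cancel hT0 hTtop]

lemma exists_isAlmostMinimizer (hn : 1 ≤ n) (hΩo : IsOpen Ω)
    (hΩb : IsBounded Ω) (hΩc : IsConnected Ω) (hΩs : HasSmoothBoundary Ω) (hp : 1 < p)
    (hq : 1 ≤ q) (hsub : SubcriticalTrace (n + 1) p q) {α β : ℝ}
    (hα : optTraceConst Ω p q α < ⊤) (hβ : optTraceConst Ω p q β ≤ optTraceConst Ω p q α)
    {κ : ℝ≥0∞} (hκ : 0 < κ) :
    ∃ Γ F w g τ, IsAlmostMinimizer Ω p q α β κ Γ F w g τ := by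
  have := isFiniteMeasure_bdryMeasure hΩo hΩb hΩs
  have : IsFiniteMeasure (volume.restrict Ω) := ⟨by simpa using hΩb.measure_lt_top⟩
  have hp0 : 0 < p := by linarith
  have hq0 : 0 < q := by linarith
  set S := optTraceConst Ω p q α
  set κ' : ℝ≥0∞ := min (κ / 2) 1 with hκ'def
  have hκ' : 0 < κ' := lt_min (ENNReal.half_pos hκ.ne') one_pos
  obtain ⟨Γ, w, g, τ, hΓ, hΓm, hΓβ, hT, hτΓ, hE, hT1⟩ := exists_normalized (S := S + κ') hn hΩo hΩb
    hΩc hΩs hp hq hsub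
    (hβ.trans_lt (ENNReal.lt_add_right hα.ne hκ'.ne'))
  have hτm : AEStronglyMeasurable τ (bdryMeasure Ω) := hT.isTrace.1.1
  have hlim : Tendsto (fun δ => ∫⁻ x, ‖smoothAbs δ (τ x)‖ₑ ^ q ∂(bdryMeasure Ω)) (𝓝[>] 0)
      (𝓝 1) := by
    rw [← hT1]
    refine tendsto_lintegral_filter_of_dominated_convergence' (fun x => ‖τ x‖ₑ ^ q) ?_ ?_
      (by rw [hT1]; simp) ?_
    · filter_upwards [self_mem_nhdsWithin] with δ hδ
      exact ((contDiff_smoothAbs hδ).continuous.comp_aestronglyMeasurable hτm).enorm.pow_const _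
    · filter_upwards [self_mem_nhdsWithin] with δ hδ
      filter_upwards with x
      gcongr
      rw [enorm_le_iff_norm_le, Real.norm_eq_abs, Real.norm_eq_abs,
        abs_of_nonneg (smoothAbs_nonneg _)]
      exact smoothAbs_le hδ _
    · filter_upwards with x
      have h1 := ((tendsto_smoothAbs (τ x)).mono_left (nhdsWithin_le_nhds (s := Ioi 0))).enorm
      rw [Real.enorm_abs] at h1
      exact h1.ennrpow_const q
  have hlim2 : Tendsto (fun δ => S * (∫⁻ x, ‖smoothAbs δ (τ x)‖ₑ ^ q ∂(bdryMeasure Ω)) ^ (p / q) +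
      κ') (𝓝[>] 0) (𝓝 (S + κ')) := by
    have := (ENNReal.Tendsto.const_mul (a := S) (hlim.ennrpow_const (p / q)) (.inr hα.ne)).add_const
      κ'
    simpa using this
  have hev : ∀ᶠ δ in 𝓝[>] (0 : ℝ), S ≤
      S * (∫⁻ x, ‖smoothAbs δ (τ x)‖ₑ ^ q ∂(bdryMeasure Ω)) ^ (p / q) + κ' :=
    (hlim2.eventually (lt_mem_nhds (ENNReal.lt_add_right hα.ne hκ'.ne'))).mono fun _ h => h.le
  have hev2 : ∀ᶠ δ in 𝓝[>] (0 : ℝ), 2⁻¹ ≤ ∫⁻ x, ‖smoothAbs δ (τ x)‖ₑ ^ q ∂(bdryMeasure Ω) :=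
    (hlim.eventually (lt_mem_nhds ENNReal.one_half_lt_one)).mono fun _ h => h.le
  obtain ⟨δ, ⟨h1, h2⟩, hδ : 0 < δ⟩ := ((hev.and hev2).and self_mem_nhdsWithin).exists
  have hE' : ∫⁻ x in Ω, (‖deriv (smoothAbs δ) (w x) • g x‖ₑ ^ p + ‖smoothAbs δ (w x)‖ₑ ^ p) ≤
      S + κ' := by
    refine le_trans (lintegral_mono fun x => ?_) hE
    gcongr
    · rw [enorm_smul]
      refine mul_le_of_le_one_left' ?_
      rw [Real.enorm_eq_ofReal_abs]
      exact ENNReal.ofReal_le_one.2 (abs_deriv_smoothAbs_le hδ _)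
    · rw [enorm_le_iff_norm_le, Real.norm_eq_abs, Real.norm_eq_abs,
        abs_of_nonneg (smoothAbs_nonneg _)]
      exact smoothAbs_le hδ _
  refine ⟨Γ, smoothAbs δ, w, g, τ, hT, contDiff_smoothAbs hδ, abs_deriv_smoothAbs_le hδ,
    smoothAbs_nonneg, hΓ, hΓm, hΓβ, ?_, ?_, hE'.trans (by gcongr; exact min_le_right _ _), h2⟩
  · filter_upwards [hτΓ] with x hx hxΓ
    rw [hx hxΓ, smoothAbs_zero hδ]
  · calc _ ≤ S + κ' := hE'
      _ ≤ _ + κ' + κ' := by gcongr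
      _ = _ + (κ' + κ') := add_assoc _ _ _
      _ ≤ _ + κ := by
          gcongr
          calc κ' + κ' ≤ κ / 2 + κ / 2 := by gcongr <;> exact min_le_left _ _
            _ = κ := ENNReal.add_halves κ

end AlmostMinimizer

section Pointwise

open scoped NNReal

variable {p : ℝ}

lemma norm_rpow_convex_le {V : Type*} [NormedAddCommGroup V] [NormedSpace ℝ V] (hp : 1 ≤ p)
    {s : ℝ} (hs0 : 0 ≤ s) (hs1 : s ≤ 1) (a b : V) :
    ‖(1 - s) • a + s • b‖ ^ p ≤ (1 - s) * ‖a‖ ^ p + s * ‖b‖ ^ p := by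
  have h1 : ‖(1 - s) • a + s • b‖ ≤ (1 - s) * ‖a‖ + s * ‖b‖ := by
    refine (norm_add_le _ _).trans ?_
    rw [norm_smul, norm_smul, Real.norm_of_nonneg hs0, Real.norm_of_nonneg (sub_nonneg.2 hs1)]
  refine (Real.rpow_le_rpow (norm_nonneg _) h1 (by linarith)).trans ?_
  exact (convexOn_rpow hp).2 (norm_nonneg a) (norm_nonneg b) (sub_nonneg.2 hs1) hs0 (by ring)

/-- Convexity estimate for the gradient of `u + t η (u + ε) ^ (1 - p)`, where `y = u + ε`. -/
lemma norm_rpow_perturb_le {V : Type*} [NormedAddCommGroup V] [NormedSpace ℝ V] (hp : 1 < p)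
    {t y η A : ℝ} (ht : 0 < t) (hy : 0 < y) (hη : 0 ≤ η) (hA : 0 ≤ A)
    (hs : t * ((p - 1) * η * y ^ (-p)) ≤ 1) (G H : V) (hH : ‖H‖ ≤ A * η ^ (1 - 1 / p)) :
    ‖(1 - t * ((p - 1) * η * y ^ (-p))) • G + (t * y ^ (1 - p)) • H‖ ^ p +
      t * ((p - 1) * η * y ^ (-p)) * ‖G‖ ^ p ≤ ‖G‖ ^ p + t * ((p - 1) ^ (1 - p) * A ^ p) := by
  have hp0 : 0 < p := by linarith
  have hp1 : 0 < p - 1 := by linarith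
  rcases hη.eq_or_lt with rfl | hη
  · have h1 : 1 - 1 / p ≠ 0 := by
      have : 1 / p < 1 := (div_lt_one hp0).2 hp
      linarith
    rw [Real.zero_rpow h1, mul_zero, norm_le_zero_iff] at hH
    simp only [hH, mul_zero, zero_mul, sub_zero, one_smul, smul_zero, add_zero]
    have : 0 ≤ t * ((p - 1) ^ (1 - p) * A ^ p) := by positivity
    linarith
  set s := t * ((p - 1) * η * y ^ (-p)) with hsdef
  have hs0 : 0 < s := by positivity
  have hfac : (t * y ^ (1 - p)) • H = s • ((y / ((p - 1) * η)) • H) := by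
    rw [smul_smul]
    congr 1
    rw [hsdef, show (1 : ℝ) - p = 1 + -p by ring, Real.rpow_add hy, Real.rpow_one]
    field_simp
  have h1 := norm_rpow_convex_le hp.le hs0.le hs G ((y / ((p - 1) * η)) • H)
  rw [hfac]
  have h2 : s * ‖(y / ((p - 1) * η)) • H‖ ^ p ≤ t * ((p - 1) ^ (1 - p) * A ^ p) := by
    have h3 : ‖(y / ((p - 1) * η)) • H‖ ≤ y * (p - 1)⁻¹ * A * η ^ (-(1 / p)) := by
      rw [norm_smul, Real.norm_of_nonneg (by positivity)]
      refine (mul_le_mul_of_nonneg_left hH (by positivity)).trans (le_of_eq ?_)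
      rw [show (1 : ℝ) - 1 / p = 1 + -(1 / p) by ring, Real.rpow_add hη, Real.rpow_one]
      field_simp
    have h4 : ‖(y / ((p - 1) * η)) • H‖ ^ p ≤ y ^ p * (p - 1) ^ (-p) * A ^ p * η⁻¹ := by
      refine (Real.rpow_le_rpow (norm_nonneg _) h3 hp0.le).trans (le_of_eq ?_)
      rw [Real.mul_rpow (by positivity) (by positivity), Real.mul_rpow (by positivity) hA,
        Real.mul_rpow hy.le (by positivity), ← Real.rpow_mul hη.le, Real.inv_rpow hp1.le,
        Real.rpow_neg hp1.le, show -(1 / p) * p = -1 by field_simp, Real.rpow_neg_one]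
    refine (mul_le_mul_of_nonneg_left h4 hs0.le).trans (le_of_eq ?_)
    rw [hsdef, Real.rpow_neg hy.le, show (1 : ℝ) - p = 1 + -p by ring, Real.rpow_add hp1,
      Real.rpow_one]
    have : y ^ p ≠ 0 := by positivity
    field_simp
  linarith

lemma rpow_sub_rpow_le (hp : 1 ≤ p) {a b : ℝ} (ha : 0 ≤ a) (hb : 0 < b) :
    b ^ p ≤ a ^ p + p * (b ^ (p - 1) * (b - a)) := by
  have h1 := one_add_mul_self_le_rpow_one_add (s := a / b - 1) (by
    have : 0 ≤ a / b := by positivity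
    linarith) hp
  rw [add_sub_cancel, Real.div_rpow ha hb.le, le_div_iff₀ (by positivity)] at h1
  have h2 : b ^ p = b ^ (p - 1) * b := by
    rw [← Real.rpow_add_one hb.ne']
    congr 1
    ring
  have h3 : (1 + p * (a / b - 1)) * b ^ p = b ^ p - p * (b ^ (p - 1) * (b - a)) := by
    rw [h2]
    field_simp
    ring
  linarith

/-- The estimate for `u + t η (u + ε) ^ (1 - p)` itself. -/
lemma rpow_perturb_le (hp : 1 < p) {t u ε η : ℝ} (ht : 0 < t) (hu : 0 ≤ u) (hε : 0 < ε)
    (hη0 : 0 ≤ η) (hη1 : η ≤ 1) (htε : t ≤ ε ^ p) :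
    (u + η * (t * (u + ε) ^ (1 - p))) ^ p ≤ u ^ p + t * p := by
  have hy : 0 < u + ε := by positivity
  rcases (show 0 ≤ u + η * (t * (u + ε) ^ (1 - p)) by positivity).eq_or_lt with h0 | h0
  · rw [← h0, Real.zero_rpow (by linarith)]
    have : 0 ≤ p := by linarith
    positivity
  refine (rpow_sub_rpow_le hp.le hu h0).trans ?_
  rw [mul_comm t p, add_le_add_iff_left]
  refine mul_le_mul_of_nonneg_left ?_ (by linarith)
  rw [add_sub_cancel_left]
  have h1 : t * (u + ε) ^ (1 - p) ≤ ε := by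
    calc t * (u + ε) ^ (1 - p) ≤ ε ^ p * ε ^ (1 - p) := by
          gcongr ?_ * ?_
          exact Real.rpow_le_rpow_of_nonpos hε (by linarith) (by linarith)
      _ = ε := by rw [← Real.rpow_add hε]; simp
  have h2 : u + η * (t * (u + ε) ^ (1 - p)) ≤ u + ε := by
    gcongr
    calc _ ≤ 1 * (t * (u + ε) ^ (1 - p)) := by gcongr
      _ ≤ ε := by rwa [one_mul]
  calc (u + η * (t * (u + ε) ^ (1 - p))) ^ (p - 1) * (η * (t * (u + ε) ^ (1 - p)))
      ≤ (u + ε) ^ (p - 1) * (1 * (t * (u + ε) ^ (1 - p))) := by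
        gcongr
    _ = t * ((u + ε) ^ (p - 1) * (u + ε) ^ (1 - p)) := by ring
    _ = t := by rw [← Real.rpow_add hy]; simp

lemma enorm_rpow_eq_ofReal {V : Type*} [NormedAddCommGroup V] (hp : 0 ≤ p) (v : V) :
    ‖v‖ₑ ^ p = ENNReal.ofReal (‖v‖ ^ p) := by
  rw [← ofReal_norm, ENNReal.ofReal_rpow_of_nonneg (norm_nonneg _) hp]

/-- Cut-off functions whose gradient is controlled by a power of the function. -/
lemma exists_cutoff_rpow {E : Type*} [NormedAddCommGroup E] [InnerProductSpace ℝ E]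
    [FiniteDimensional ℝ E] (x : E) {r : ℝ} (hr : 0 < r) (hp : 1 < p) :
    ∃ (η : E → ℝ) (A : ℝ), ContDiff ℝ ∞ η ∧ (∀ y, 0 ≤ η y) ∧ (∀ y, η y ≤ 1) ∧
      (∀ y ∈ ball x (r / 2), η y = 1) ∧ (∀ y, y ∉ ball x r → η y = 0) ∧ 0 ≤ A ∧
      ∀ y, ‖fderiv ℝ η y‖ ≤ A * η y ^ (1 - 1 / p) := by
  obtain ⟨ζ, Z, hζ, -, h0, h1, hζ1, hζ0, -, hZ, -⟩ := exists_cutoff x hr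
  have hp0 : 0 < p := by linarith
  obtain ⟨k, hk⟩ := exists_nat_ge p
  have hk0 : k ≠ 0 := by
    rintro rfl
    norm_num at hk
    linarith
  refine ⟨fun y => ζ y ^ (k + 1), (k + 1) * Z, hζ.pow _, fun y => pow_nonneg (h0 y) _,
    fun y => pow_le_one₀ (h0 y) (h1 y), fun y hy => by simp [hζ1 y hy],
    fun y hy => by simp [hζ0 y hy], by positivity, fun y => ?_⟩
  have hd := ((hζ.differentiable (by simp) y).hasFDerivAt.pow (k + 1)).fderiv
  have hZ' : ‖fderiv ℝ ζ y‖ ≤ Z := by exact_mod_cast hZ y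
  change ‖fderiv ℝ (fun y => ζ y ^ (k + 1)) y‖ ≤ _
  rw [hd, norm_smul]
  have hpow : ζ y ^ k ≤ (ζ y ^ (k + 1)) ^ (1 - 1 / p) := by
    rcases (h0 y).eq_or_lt with h | h
    · rw [← h, zero_pow hk0]
      positivity
    · rw [← Real.rpow_natCast, ← Real.rpow_natCast, ← Real.rpow_mul (h0 y)]
      refine Real.rpow_le_rpow_of_exponent_ge h (h1 y) ?_
      have : (1 : ℝ) ≤ (k + 1) / p := (one_le_div hp0).2 (by linarith)
      push_cast
      have h5 : ((k : ℝ) + 1) * (1 - 1 / p) = k + 1 - (k + 1) / p := by ring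
      linarith
  have hnn : ‖(k + 1) • ζ y ^ (k + 1 - 1)‖ = (k + 1) * ζ y ^ k := by
    have := pow_nonneg (h0 y) k
    rw [nsmul_eq_mul, Real.norm_of_nonneg (by simpa using by positivity)]
    simp
  rw [hnn]
  have := pow_nonneg (h0 y) (k + 1)
  calc (k + 1) * ζ y ^ k * ‖fderiv ℝ ζ y‖ ≤ (k + 1) * (ζ y ^ (k + 1)) ^ (1 - 1 / p) * Z := by
        gcongr
    _ = _ := by ring

end Pointwise

section Perturbation

open scoped NNReal

variable {n : ℕ} {Ω Γ : Set (EuclideanSpace ℝ (Fin (n + 1)))} {p q α β t ε : ℝ} {F : ℝ → ℝ}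
  {w : EuclideanSpace ℝ (Fin (n + 1)) → ℝ}
  {g : EuclideanSpace ℝ (Fin (n + 1)) → EuclideanSpace ℝ (Fin (n + 1))}
  {τ : EuclideanSpace ℝ (Fin (n + 1)) → ℝ}

/-- Comparison of an almost minimizer `u = F ∘ w` with `u + t η (u + ε) ^ (1 - p)`. -/
lemma IsAlmostMinimizer.lintegral_le
    (h : IsAlmostMinimizer Ω p q α β (ENNReal.ofReal t) Γ F w g τ) (hn : 1 ≤ n) (hΩo : IsOpen Ω)
    (hΩb : IsBounded Ω) (hΩc : IsConnected Ω) (hΩs : HasSmoothBoundary Ω) (hp : 1 < p)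
    (hq : 1 ≤ q) (hα : 0 < α) (hαβ : α < β) (hε : 0 < ε) (ht : 0 < t) (htε : t * p ≤ ε ^ p)
    {x : EuclideanSpace ℝ (Fin (n + 1))} {r : ℝ}
    (hr : bdryMeasure Ω (closedBall x r) ≤
      ENNReal.ofReal (β - α) * bdryMeasure Ω (frontier Ω))
    {η : EuclideanSpace ℝ (Fin (n + 1)) → ℝ} {A : ℝ} (hη : ContDiff ℝ ∞ η) (hη0 : ∀ y, 0 ≤ η y)
    (hη1 : ∀ y, η y ≤ 1) (hηr : ∀ y, y ∉ ball x r → η y = 0) (hA : 0 ≤ A)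
    (hηA : ∀ y, ‖fderiv ℝ η y‖ ≤ A * η y ^ (1 - 1 / p)) :
    ∫⁻ y in Ω, ENNReal.ofReal ((p - 1) * η y * (F (w y) + ε) ^ (-p)) *
        ‖deriv F (w y) • g y‖ₑ ^ p ≤
      1 + ENNReal.ofReal ((p - 1) ^ (1 - p) * A ^ p + p) * volume Ω := by
  have := isFiniteMeasure_bdryMeasure hΩo hΩb hΩs
  have : IsFiniteMeasure (volume.restrict Ω) := ⟨by simpa using hΩb.measure_lt_top⟩
  have hp0 : 0 < p := by linarith
  have hq0 : 0 < q := by linarith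
  have hp1 : 0 < p - 1 := by linarith
  have ht1 : t ≤ ε ^ p := by nlinarith
  have hF0 := h.nonneg
  set G : ℝ → ℝ := fun s => t * (s + ε) ^ (1 - p) with hGdef
  have hGd : ∀ s, 0 ≤ s → HasDerivAt G (t * ((1 - p) * (s + ε) ^ (-p))) s := by
    intro s hs
    have h1 := (((hasDerivAt_id s).add_const ε).rpow_const (p := 1 - p)
      (.inl (by simp; linarith))).const_mul t
    refine h1.congr_deriv ?_
    change t * (1 * (1 - p) * (s + ε) ^ (1 - p - 1)) = _
    rw [one_mul, show 1 - p - 1 = -p by ring]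
  have hneg : ∀ s, 0 ≤ s → (s + ε) ^ (-p) ≤ ε ^ (-p) := fun s hs =>
    Real.rpow_le_rpow_of_nonpos hε (by linarith) (by linarith)
  have hGs : ∀ s, 0 ≤ s → ContDiffAt ℝ ∞ G s := fun s hs =>
    contDiffAt_const.mul ((contDiffAt_id.add contDiffAt_const).rpow_const_of_ne
      (by simp; linarith))
  have hGK : ∀ s, 0 ≤ s → |deriv G s| ≤ t * ((p - 1) * ε ^ (-p)) := by
    intro s hs
    have hy : 0 < s + ε := by positivity
    rw [(hGd s hs).deriv, abs_mul, abs_of_pos ht, abs_mul, abs_of_neg (by linarith), neg_sub,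
      abs_of_nonneg (by positivity)]
    exact mul_le_mul_of_nonneg_left (mul_le_mul_of_nonneg_left (hneg s hs) hp1.le) ht.le
  have hηK : ∀ y, |η y| ≤ 1 := fun y => by rw [abs_of_nonneg (hη0 y)]; exact hη1 y
  have hexp : 0 ≤ 1 - 1 / p := by
    rw [sub_nonneg, div_le_one hp0]
    exact hp.le
  have hηZ : ∀ y, ‖fderiv ℝ η y‖ ≤ A := fun y => (hηA y).trans
    (mul_le_of_le_one_right hA (Real.rpow_le_one (hη0 y) (hη1 y) hexp))
  have hu := h.hasTrace.comp hp h.contDiff h.abs_deriv_le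
  have hz := hu.add ((h.hasTrace.comp_comp hp h.contDiff h.abs_deriv_le hF0 hGs hGK).smooth_mul hp
    hη hηK hηZ) hp
  have hGn : ∀ s, 0 ≤ s → 0 ≤ G s := fun s hs => by positivity
  have hτle : ∀ y, F (τ y) ≤ F (τ y) + η y * G (F (τ y)) := fun y =>
    le_add_of_nonneg_right (mul_nonneg (hη0 y) (hGn _ (hF0 _)))
  have hτe : ∀ y, ‖F (τ y)‖ₑ ≤ ‖F (τ y) + η y * G (F (τ y))‖ₑ := fun y => by
    rw [enorm_le_iff_norm_le, Real.norm_of_nonneg (hF0 _),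
      Real.norm_of_nonneg ((hF0 _).trans (hτle y))]
    exact hτle y
  have hlow := hz.optTraceConst_le (q := q) (Γ := Γ \ closedBall x r) (α := α) hn hΩo hΩb hΩc hΩs hp
    (sdiff_subset.trans h.subset)
    (h.nullMeasurableSet.diff isClosed_closedBall.measurableSet.nullMeasurableSet) (by
      refine le_trans ?_ le_measure_sdiff
      refine le_trans ?_ (tsub_le_tsub_left hr _)
      refine ENNReal.le_sub_of_add_le_right
        (ENNReal.mul_ne_top ENNReal.ofReal_ne_top (measure_ne_top _ _)) ?_
      rw [← add_mul, ← ENNReal.ofReal_add hα.le (by linarith), h.measure_eq]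
      simp) (by
      filter_upwards [h.trace_eq_zero] with y hy hyΓ
      simp [hy hyΓ.1, hηr y fun h' => hyΓ.2 (ball_subset_closedBall h')]) (by
      intro h0
      have h1 : ∫⁻ y, ‖F (τ y)‖ₑ ^ q ∂(bdryMeasure Ω) = 0 := by
        rw [← lintegral_zero (μ := bdryMeasure Ω)]
        refine lintegral_congr_ae ?_
        filter_upwards [h0] with y hy
        have h2 := hτe y
        rw [hy, Pi.zero_apply, enorm_zero, nonpos_iff_eq_zero] at h2
        rw [h2, ENNReal.zero_rpow_of_pos hq0]
      have := h.half_le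
      rw [h1] at this
      simp at this)
  have hlow2 := ENNReal.mul_le_of_le_div hlow
  set Eu := ∫⁻ y in Ω, (‖deriv F (w y) • g y‖ₑ ^ p + ‖F (w y)‖ₑ ^ p)
  set Ez := ∫⁻ y in Ω, (‖deriv F (w y) • g y + (η y • deriv G (F (w y)) • deriv F (w y) • g y +
    G (F (w y)) • gradient η y)‖ₑ ^ p + ‖F (w y) + η y * G (F (w y))‖ₑ ^ p) with hEz
  set I := ∫⁻ y in Ω, ENNReal.ofReal ((p - 1) * η y * (F (w y) + ε) ^ (-p)) *
        ‖deriv F (w y) • g y‖ₑ ^ p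
  set C₀ := (p - 1) ^ (1 - p) * A ^ p + p with hC₀
  have hEu : Eu ≤ Ez + ENNReal.ofReal t := by
    refine h.energy_le.trans ?_
    gcongr
    refine le_trans ?_ hlow2
    gcongr with y
    exact hτe y
  have hpt : ∀ y, ‖deriv F (w y) • g y + (η y • deriv G (F (w y)) • deriv F (w y) • g y +
      G (F (w y)) • gradient η y)‖ₑ ^ p + ‖F (w y) + η y * G (F (w y))‖ₑ ^ p +
      ENNReal.ofReal t * (ENNReal.ofReal ((p - 1) * η y * (F (w y) + ε) ^ (-p)) *
        ‖deriv F (w y) • g y‖ₑ ^ p) ≤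
      ‖deriv F (w y) • g y‖ₑ ^ p + ‖F (w y)‖ₑ ^ p + ENNReal.ofReal (t * C₀) := by
    intro y
    have hY : 0 < F (w y) + ε := add_pos_of_nonneg_of_pos (hF0 _) hε
    have hηy := hη0 y
    have hs : t * ((p - 1) * η y * (F (w y) + ε) ^ (-p)) ≤ 1 := by
      calc t * ((p - 1) * η y * (F (w y) + ε) ^ (-p)) ≤ t * (p * 1 * ε ^ (-p)) := by
            gcongr t * (?_ * ?_ * ?_)
            · linarith
            · exact hη1 y
            · exact hneg _ (hF0 _)
        _ = t * p * ε ^ (-p) := by ring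
        _ ≤ ε ^ p * ε ^ (-p) := by gcongr
        _ = 1 := by rw [← Real.rpow_add hε]; simp
    have h1 := norm_rpow_perturb_le hp ht hY hηy hA hs (deriv F (w y) • g y) (gradient η y)
      (by rw [norm_gradient]; exact hηA y)
    have h2 := rpow_perturb_le hp ht (hF0 (w y)) hε hηy (hη1 y) ht1
    have hgz : deriv F (w y) • g y + (η y • deriv G (F (w y)) • deriv F (w y) • g y +
        G (F (w y)) • gradient η y) = (1 - t * ((p - 1) * η y * (F (w y) + ε) ^ (-p))) •
          deriv F (w y) • g y + (t * (F (w y) + ε) ^ (1 - p)) • gradient η y := by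
      rw [(hGd _ (hF0 _)).deriv]
      simp only [hGdef]
      module
    rw [hgz, enorm_rpow_eq_ofReal hp0.le, enorm_rpow_eq_ofReal hp0.le, enorm_rpow_eq_ofReal hp0.le,
      enorm_rpow_eq_ofReal hp0.le, Real.norm_of_nonneg (hF0 (w y)),
      Real.norm_of_nonneg (add_nonneg (hF0 _) (mul_nonneg hηy (hGn _ (hF0 _)))),
      ← ENNReal.ofReal_mul (by positivity), ← ENNReal.ofReal_mul ht.le]
    have := hF0 (w y)
    have hz0 := add_nonneg (hF0 (w y)) (mul_nonneg hηy (hGn _ (hF0 (w y))))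
    rw [← ENNReal.ofReal_add (by positivity) (by positivity),
      ← ENNReal.ofReal_add (by positivity) (by positivity),
      ← ENNReal.ofReal_add (by positivity) (by positivity),
      ← ENNReal.ofReal_add (by positivity) (by positivity)]
    refine ENNReal.ofReal_le_ofReal ?_
    simp only [hGdef, hC₀] at *
    linarith
  have hint : Ez + ENNReal.ofReal t * I ≤ Eu + ENNReal.ofReal (t * C₀) * volume Ω := by
    have h1 := lintegral_mono (μ := volume.restrict Ω) hpt
    rw [lintegral_add_left' ((hz.memLp_grad.1.enorm.pow_const _).fun_add
      (hz.memLp.1.enorm.pow_const _)), lintegral_add_right _ measurable_const,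
      lintegral_const_mul' _ _ ENNReal.ofReal_ne_top, lintegral_const,
      Measure.restrict_apply_univ] at h1
    exact h1
  have hfin : Eu ≠ ⊤ := hu.energy_ne_top hp0
  have h1 : Eu + ENNReal.ofReal t * I ≤
      Eu + ENNReal.ofReal t * (1 + ENNReal.ofReal C₀ * volume Ω) := by
    calc Eu + ENNReal.ofReal t * I ≤ Ez + ENNReal.ofReal t + ENNReal.ofReal t * I := by gcongr
      _ = Ez + ENNReal.ofReal t * I + ENNReal.ofReal t := by ring
      _ ≤ Eu + ENNReal.ofReal (t * C₀) * volume Ω + ENNReal.ofReal t := by gcongr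
      _ = _ := by rw [ENNReal.ofReal_mul ht.le]; ring
  exact (ENNReal.mul_le_mul_iff_right (by simpa using ht) ENNReal.ofReal_ne_top).1
    ((ENNReal.add_le_add_iff_left hfin).1 h1)

end Perturbation

section Main

open scoped NNReal

variable {n : ℕ} {Ω : Set (EuclideanSpace ℝ (Fin (n + 1)))} {p q α β : ℝ}

/-- The gradient of `log (u + ε)` is bounded in `L^p` for almost minimizers `u = F ∘ w`. -/
lemma exists_lintegral_gradient_log_le (hn : 1 ≤ n) (hΩo : IsOpen Ω)
    (hΩb : IsBounded Ω) (hΩc : IsConnected Ω) (hΩs : HasSmoothBoundary Ω) (hp : 1 < p)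
    (hq : 1 ≤ q) (hα : 0 < α) (hαβ : α < β) :
    ∃ C : ℝ≥0∞, C ≠ ⊤ ∧ ∀ ε > 0, ∀ Γ F w g τ,
      IsAlmostMinimizer Ω p q α β (ENNReal.ofReal (ε ^ p / p)) Γ F w g τ →
      ∫⁻ y in Ω, ‖(F (w y) + ε)⁻¹ • deriv F (w y) • g y‖ₑ ^ p ≤ C := by
  have := isFiniteMeasure_bdryMeasure hΩo hΩb hΩs
  have := nullSingletonClass_bdryMeasure (Ω := Ω) hn
  have hp0 : 0 < p := by linarith
  have hp1 : 0 < p - 1 := by linarith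
  have hc : 0 < ENNReal.ofReal (β - α) * bdryMeasure Ω (frontier Ω) :=
    ENNReal.mul_pos (by simpa using hαβ) (bdryMeasure_frontier_pos hΩo hΩb hΩc.nonempty).ne'
  choose r hr0 hr using fun x => exists_measure_closedBall_le (bdryMeasure Ω) x hc
  choose η A hη hη0 hη1 hηone hηr hA hηA using fun x => exists_cutoff_rpow x (hr0 x) hp
  obtain ⟨T, -, hT⟩ := hΩb.isCompact_closure.elim_nhds_subcover (fun x => ball x (r x / 2))
    fun x _ => ball_mem_nhds x (half_pos (hr0 x))
  refine ⟨(∑ x ∈ T, (1 + ENNReal.ofReal ((p - 1) ^ (1 - p) * A x ^ p + p) * volume Ω)) /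
    ENNReal.ofReal (p - 1), ENNReal.div_ne_top (ENNReal.sum_ne_top.2 fun x _ =>
      ENNReal.add_ne_top.2 ⟨ENNReal.one_ne_top, ENNReal.mul_ne_top ENNReal.ofReal_ne_top
        hΩb.measure_lt_top.ne⟩) (by simpa using hp), ?_⟩
  intro ε hε Γ F w g τ h
  have hpε : 0 < ε ^ p := by positivity
  have key := fun x => h.lintegral_le hn hΩo hΩb hΩc hΩs hp hq hα hαβ hε (t := ε ^ p / p)
    (by positivity) (by rw [div_mul_cancel₀ _ hp0.ne']) (hr x) (hη x) (hη0 x) (hη1 x) (hηr x) (hA x)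
    (hηA x)
  have hwm := h.hasTrace.memLp.1
  have hgm : AEStronglyMeasurable (fun y => deriv F (w y) • g y) (volume.restrict Ω) :=
    ((h.contDiff.continuous_deriv (by simp)).comp_aestronglyMeasurable hwm).smul
      h.hasTrace.memLp_grad.1
  have hFm : AEMeasurable (fun y => F (w y)) (volume.restrict Ω) :=
    (h.contDiff.continuous.comp_aestronglyMeasurable hwm).aemeasurable
  rw [ENNReal.le_div_iff_mul_le (.inl (by simpa using hp)) (.inl ENNReal.ofReal_ne_top), mul_comm,
    ← lintegral_const_mul' _ _ ENNReal.ofReal_ne_top]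
  refine le_trans ?_ (Finset.sum_le_sum fun x _ => key x)
  rw [← lintegral_finsetSum']
  · refine setLIntegral_mono' hΩo.measurableSet fun y hy => ?_
    obtain ⟨x, hxT, hx⟩ := mem_iUnion₂.1 (hT (subset_closure hy))
    refine le_trans (le_of_eq ?_) (Finset.single_le_sum (f := fun x =>
      ENNReal.ofReal ((p - 1) * η x y * (F (w y) + ε) ^ (-p)) * ‖deriv F (w y) • g y‖ₑ ^ p)
      (fun _ _ => zero_le) hxT)
    have hY : 0 < F (w y) + ε := add_pos_of_nonneg_of_pos (h.nonneg _) hε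
    simp only [hηone x y hx, mul_one]
    rw [enorm_smul, ENNReal.mul_rpow_of_nonneg _ _ hp0.le, ← mul_assoc, ENNReal.ofReal_mul hp1.le,
      Real.enorm_of_nonneg (by positivity), ENNReal.ofReal_rpow_of_pos (by positivity),
      Real.inv_rpow hY.le, Real.rpow_neg hY.le]
  · intro x _
    refine AEMeasurable.mul ?_ (hgm.enorm.pow_const _)
    refine AEMeasurable.ennreal_ofReal (AEMeasurable.mul ?_ ((hFm.add_const ε).pow_const _))
    exact ((hη x).continuous.measurable.const_mul _).aemeasurable

/-- The traces of almost minimizers are logarithmically small. -/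
lemma exists_lintegral_log_trace_le (hn : 1 ≤ n) (hΩo : IsOpen Ω)
    (hΩb : IsBounded Ω) (hΩc : IsConnected Ω) (hΩs : HasSmoothBoundary Ω) (hp : 1 < p)
    (hq : 1 ≤ q) (hα : 0 < α) (hαβ : α < β) :
    ∃ C : ℝ≥0, ∀ ε > 0, ∀ Γ F w g τ,
      IsAlmostMinimizer Ω p q α β (ENNReal.ofReal (ε ^ p / p)) Γ F w g τ →
      ∫⁻ y, ‖Real.log (1 + F (τ y) / ε)‖ₑ ∂(bdryMeasure Ω) ≤ C := by
  have := isFiniteMeasure_bdryMeasure hΩo hΩb hΩs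
  have : IsFiniteMeasure (volume.restrict Ω) := ⟨by simpa using hΩb.measure_lt_top⟩
  have hp0 : 0 < p := by linarith
  obtain ⟨C₁, hC₁, h₁⟩ := exists_lintegral_gradient_log_le (q := q) hn hΩo hΩb hΩc hΩs hp hq hα hαβ
  obtain ⟨C₂, h₂⟩ := HasTrace.exists_measure_mul_lintegral_le hΩo hΩb hΩc hΩs hp
  set m := ENNReal.ofReal β * bdryMeasure Ω (frontier Ω)
  have hm0 : m ≠ 0 := (ENNReal.mul_pos (by simpa using hα.trans hαβ)
    (bdryMeasure_frontier_pos hΩo hΩb hΩc.nonempty).ne').ne'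
  have hm : m ≠ ⊤ := ENNReal.mul_ne_top ENNReal.ofReal_ne_top (measure_ne_top _ _)
  have hfin : C₂ * (volume Ω + C₁) / m ≠ ⊤ := ENNReal.div_ne_top (ENNReal.mul_ne_top
    ENNReal.coe_ne_top (ENNReal.add_ne_top.2 ⟨hΩb.measure_lt_top.ne, hC₁⟩)) hm0
  refine ⟨(C₂ * (volume Ω + C₁) / m).toNNReal, fun ε hε Γ F w g τ h => ?_⟩
  rw [ENNReal.coe_toNNReal hfin, ENNReal.le_div_iff_mul_le (.inl hm0) (.inl hm), mul_comm]
  have hF0 := h.nonneg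
  have hpos : ∀ s : ℝ, 0 ≤ s → 0 < 1 + s / ε := fun s hs => by positivity
  have hLd : ∀ s : ℝ, 0 ≤ s → deriv (fun s => Real.log (1 + s / ε)) s = (s + ε)⁻¹ := by
    intro s hs
    have h1 := (((hasDerivAt_id s).div_const ε).const_add 1).log (hpos s hs).ne'
    refine h1.deriv.trans ?_
    have : s + ε ≠ 0 := by positivity
    simp only [id]
    field_simp
    rw [add_comm]
  have hv := h.hasTrace.comp_comp hp h.contDiff h.abs_deriv_le hF0
    (G := fun s => Real.log (1 + s / ε)) (K := ε⁻¹)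
    (fun s hs => (contDiffAt_const.add (contDiffAt_id.div_const ε)).log (hpos s hs).ne')
    (fun s hs => by
      rw [hLd s hs, abs_of_nonneg (by positivity)]
      gcongr
      linarith)
  have h3 := h₂ _ _ _ Γ hv h.nullMeasurableSet (by
    filter_upwards [h.trace_eq_zero] with y hy hyΓ
    simp [hy hyΓ])
  rw [h.measure_eq] at h3
  refine h3.trans (mul_le_mul_right ?_ _)
  have h4 := h₁ ε hε Γ F w g τ h
  calc ∫⁻ y in Ω, ‖deriv (fun s => Real.log (1 + s / ε)) (F (w y)) • deriv F (w y) • g y‖ₑ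
      ≤ ∫⁻ y in Ω, (1 + ‖(F (w y) + ε)⁻¹ • deriv F (w y) • g y‖ₑ ^ p) := by
        refine lintegral_mono fun y => ?_
        rw [hLd _ (hF0 _)]
        generalize ‖(F (w y) + ε)⁻¹ • deriv F (w y) • g y‖ₑ = a
        rcases le_total a 1 with ha | ha
        · exact ha.trans le_self_add
        · calc a = a ^ (1 : ℝ) := (ENNReal.rpow_one a).symm
            _ ≤ a ^ p := ENNReal.rpow_le_rpow_of_exponent_le ha hp.le
            _ ≤ _ := le_add_self
    _ = volume Ω + ∫⁻ y in Ω, ‖(F (w y) + ε)⁻¹ • deriv F (w y) • g y‖ₑ ^ p := by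
        rw [lintegral_add_left measurable_const, lintegral_one, Measure.restrict_apply_univ]
    _ ≤ _ := by gcongr

lemma rpow_le_add_log_add_rpow {s a δ ε R : ℝ} (hq : 0 < q) (hqs : q < s) (ha : 0 ≤ a)
    (hδ : 0 < δ) (hε : 0 < ε) (hR : 0 < R) :
    a ^ q ≤ δ ^ q + R ^ q / Real.log (1 + δ / ε) * Real.log (1 + a / ε) + R ^ (q - s) * a ^ s := by
  have hlog : 0 < Real.log (1 + δ / ε) := Real.log_pos (by
    have : 0 < δ / ε := by positivity
    linarith)
  have hloga : 0 ≤ Real.log (1 + a / ε) := Real.log_nonneg (by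
    have : 0 ≤ a / ε := by positivity
    linarith)
  have h1 : 0 ≤ δ ^ q := by positivity
  have h2 : 0 ≤ R ^ q / Real.log (1 + δ / ε) * Real.log (1 + a / ε) := by positivity
  have h3 : 0 ≤ R ^ (q - s) * a ^ s := by positivity
  rcases le_total a δ with h | h
  · have := Real.rpow_le_rpow ha h hq.le
    linarith
  rcases le_total a R with h' | h'
  · have h4 : a ^ q ≤ R ^ q := Real.rpow_le_rpow ha h' hq.le
    have h5 : R ^ q ≤ R ^ q / Real.log (1 + δ / ε) * Real.log (1 + a / ε) := by
      rw [div_mul_eq_mul_div, le_div_iff₀ hlog]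
      gcongr
    linarith
  · have ha0 : 0 < a := hδ.trans_le h
    have h4 : a ^ q = a ^ (q - s) * a ^ s := by rw [← Real.rpow_add ha0]; simp
    have h5 : a ^ (q - s) ≤ R ^ (q - s) := Real.rpow_le_rpow_of_nonpos hR h' (by linarith)
    have h6 := mul_le_mul_of_nonneg_right h5 (show 0 ≤ a ^ s by positivity)
    linarith

lemma optTraceConst_lt_of_lt (hn : 1 ≤ n) (hΩo : IsOpen Ω)
    (hΩb : IsBounded Ω) (hΩc : IsConnected Ω) (hΩs : HasSmoothBoundary Ω) (hp : 1 < p)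
    (hq : 1 ≤ q) (hsub : SubcriticalTrace (n + 1) p q) (hα : 0 < α) (hαβ : α < β) (hβ : β < 1) :
    optTraceConst Ω p q α < optTraceConst Ω p q β := by
  by_contra! hle
  have := isFiniteMeasure_bdryMeasure hΩo hΩb hΩs
  have : IsFiniteMeasure (volume.restrict Ω) := ⟨by simpa using hΩb.measure_lt_top⟩
  have hp0 : 0 < p := by linarith
  have hq0 : 0 < q := by linarith
  have hS : optTraceConst Ω p q α < ⊤ :=
    optTraceConst_lt_top hn hΩo hΩb hΩc hΩs hp hq hα (hαβ.trans hβ)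
  obtain ⟨s, hs, hqs, hsN⟩ := hsub.exists_exponent hp hq
  push_cast at hsN
  obtain ⟨C₁, h₁⟩ := HasTrace.exists_lintegral_trace_le hn hΩo hΩb hΩc hΩs hs hp (by linarith)
  obtain ⟨C₂, h₂⟩ := exists_lintegral_log_trace_le (q := q) hn hΩo hΩb hΩc hΩs hp hq hα hαβ
  set μ := bdryMeasure Ω
  set m : ℝ≥0 := (μ univ).toNNReal with hm
  have hmμ : μ univ = m := (ENNReal.coe_toNNReal (measure_ne_top _ _)).symm
  have hKfin : C₁ * (optTraceConst Ω p q α + 1) ^ (s / p) ≠ ⊤ := ENNReal.mul_ne_top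
    ENNReal.coe_ne_top (ENNReal.rpow_ne_top_of_nonneg (by positivity)
      (ENNReal.add_ne_top.2 ⟨hS.ne, ENNReal.one_ne_top⟩))
  set K : ℝ≥0 := (C₁ * (optTraceConst Ω p q α + 1) ^ (s / p)).toNNReal with hK
  have hsq : 0 < s - q := by linarith
  set R : ℝ := (8 * K + 1) ^ (1 / (s - q)) with hR
  have hR0 : 0 < R := by positivity
  have hRK : R ^ (q - s) * K ≤ 1 / 8 := by
    rw [hR, ← Real.rpow_mul (by positivity), show 1 / (s - q) * (q - s) = -1 by
      field_simp; ring, Real.rpow_neg_one, inv_mul_le_iff₀ (by positivity)]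
    linarith
  set δ : ℝ := (8 * m + 8) ^ (-(1 / q)) with hδ
  have hδ0 : 0 < δ := by positivity
  have hδm : δ ^ q * m ≤ 1 / 8 := by
    rw [hδ, ← Real.rpow_mul (by positivity), show -(1 / q) * q = -1 by field_simp,
      Real.rpow_neg_one, inv_mul_le_iff₀ (by positivity)]
    linarith
  set X : ℝ := 8 * R ^ q * C₂ + 1 with hX
  have hX0 : 0 < X := by positivity
  set ε : ℝ := δ * Real.exp (-X) with hε
  have hε0 : 0 < ε := by positivity
  have hXlog : X ≤ Real.log (1 + δ / ε) := by
    rw [Real.le_log_iff_exp_le (by positivity), hε, Real.exp_neg]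
    field_simp
    linarith
  have hlog : R ^ q / Real.log (1 + δ / ε) * C₂ ≤ 1 / 8 := by
    rw [div_mul_eq_mul_div, div_le_iff₀ (hX0.trans_le hXlog)]
    linarith
  obtain ⟨Γ, F, w, g, τ, h⟩ := exists_isAlmostMinimizer hn hΩo hΩb hΩc hΩs hp hq hsub hS hle
    (κ := ENNReal.ofReal (ε ^ p / p)) (ENNReal.ofReal_pos.2 (by positivity))
  have hF0 := h.nonneg
  have hu := h.hasTrace.comp hp h.contDiff h.abs_deriv_le
  have hτm : AEStronglyMeasurable (fun y => F (τ y)) μ := hu.isTrace.1.1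
  have hτs : ∫⁻ y, ‖F (τ y)‖ₑ ^ s ∂μ ≤ K := by
    rw [hK, ENNReal.coe_toNNReal hKfin]
    refine (h₁ _ _ _ hu).trans (mul_le_mul_right ?_ _)
    exact ENNReal.rpow_le_rpow h.energy_le_add_one (by positivity)
  have hlogτ := h₂ ε hε0 Γ F w g τ h
  have hbound : ∫⁻ y, ‖F (τ y)‖ₑ ^ q ∂μ ≤ ∫⁻ y, (ENNReal.ofReal (δ ^ q) +
      ENNReal.ofReal (R ^ q / Real.log (1 + δ / ε)) * ‖Real.log (1 + F (τ y) / ε)‖ₑ +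
      ENNReal.ofReal (R ^ (q - s)) * ‖F (τ y)‖ₑ ^ s) ∂μ := by
    refine lintegral_mono fun y => ?_
    have hy := hF0 (τ y)
    have hl : 0 ≤ Real.log (1 + F (τ y) / ε) := Real.log_nonneg (by
      have : 0 ≤ F (τ y) / ε := by positivity
      linarith)
    have hl' : 0 < Real.log (1 + δ / ε) := hX0.trans_le hXlog
    rw [enorm_rpow_eq_ofReal hq0.le, enorm_rpow_eq_ofReal (by linarith), Real.norm_of_nonneg hy,
      Real.enorm_of_nonneg hl, ← ENNReal.ofReal_mul (by positivity),
      ← ENNReal.ofReal_mul (by positivity), ← ENNReal.ofReal_add (by positivity) (by positivity),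
      ← ENNReal.ofReal_add (by positivity) (by positivity)]
    exact ENNReal.ofReal_le_ofReal (rpow_le_add_log_add_rpow hq0 hqs hy hδ0 hε0 hR0)
  rw [lintegral_add_right' _ ((hτm.enorm.pow_const s).const_mul _),
    lintegral_add_left measurable_const, lintegral_const_mul' _ _ ENNReal.ofReal_ne_top,
    lintegral_const_mul' _ _ ENNReal.ofReal_ne_top, lintegral_const, hmμ] at hbound
  have hmulNN : ∀ (a : ℝ) (b : ℝ≥0), 0 ≤ a → a * b ≤ 1 / 8 →
      ENNReal.ofReal a * b ≤ ENNReal.ofReal (1 / 8) := by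
    intro a b ha hab
    rw [← ENNReal.ofReal_coe_nnreal (p := b), ← ENNReal.ofReal_mul ha]
    exact ENNReal.ofReal_le_ofReal hab
  have hfinal : (2 : ℝ≥0∞)⁻¹ ≤ ENNReal.ofReal (1 / 8) + ENNReal.ofReal (1 / 8) +
      ENNReal.ofReal (1 / 8) := by
    refine h.half_le.trans (hbound.trans ?_)
    gcongr
    · exact hmulNN _ _ (by positivity) hδm
    · exact (mul_le_mul_right hlogτ _).trans
        (hmulNN _ _ (div_nonneg (by positivity) (hX0.le.trans hXlog)) hlog)
    · exact (mul_le_mul_right hτs _).trans (hmulNN _ _ (by positivity) hRK)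
  rw [← ENNReal.ofReal_add (by norm_num) (by norm_num), ← ENNReal.ofReal_add (by norm_num)
    (by norm_num), show (2 : ℝ≥0∞)⁻¹ = ENNReal.ofReal (1 / 2) by
      rw [one_div, ENNReal.ofReal_inv_of_pos (by norm_num), ENNReal.ofReal_ofNat],
    ENNReal.ofReal_le_ofReal_iff (by norm_num)] at hfinal
  norm_num at hfinal

end Main

/-- The optimal value `𝒮` is strictly increasing on `(0, 1)`. -/
theorem optTraceConst_strictMonoOn {N : ℕ} (hN : 2 ≤ N) (Ω : Set (EuclideanSpace ℝ (Fin N)))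
    (hΩo : IsOpen Ω) (hΩb : IsBounded Ω) (hΩc : IsConnected Ω) (hΩs : HasSmoothBoundary Ω)
    (hΩball : InteriorBallCond Ω)
    (p q : ℝ) (hp : 1 < p) (hq : 1 ≤ q) (hsub : SubcriticalTrace N p q) :
    StrictMonoOn (fun α : ℝ => optTraceConst Ω p q α) (Ioo 0 1) := by
  obtain ⟨n, rfl⟩ : ∃ n, N = n + 1 := ⟨N - 1, by omega⟩
  intro α hα β hβ hαβ
  exact optTraceConst_lt_of_lt (by omega) hΩo hΩb hΩc hΩs hp hq hsub hα.1 hαβ hβ.2
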